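/- arXiv:1801.02357 — 3 statements merged into one kernel-verified Lean document; each statement's English description precedes it below -/
import Mathlib

section
/- The index of the complete dihedral Enneper surface of order 5 for compactly supported perturbations equals 9: ind_c(Σ₁⁵) = 9. -/
noncomputable section
open MeasureTheory Real

/-- The plane `ℝ²` as a Euclidean space. -/
abbrev E2 : Type := EuclideanSpace ℝ (Fin 2)

/-- The point of `ℝ²` with Cartesian coordinates `(x, y)`. -/
def toE2 (x y : ℝ) : E2 := (WithLp.equiv 2 (Fin 2 → ℝ)).symm ![x, y]

/-- The second-variation quadratic form of the dihedral Enneper surface `Σ₁ⁿ(R)` of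
order `n` and radius `R`, in the conformal planar coordinate `w`. -/
def QE (n : ℕ) (R : ℝ) (φ : E2 → ℝ) : ℝ :=
  ∫ w in Metric.ball (0 : E2) R,
    (‖gradient φ w‖ ^ 2 -
      (8 * (n : ℝ) ^ 2 * ‖w‖ ^ (2 * n - 2) / (1 + ‖w‖ ^ (2 * n)) ^ 2) * φ w ^ 2)

/-- The second-variation quadratic form of the complete dihedral Enneper surface `Σ₁ⁿ`
(`R = ∞`). -/
def QEinf (n : ℕ) (φ : E2 → ℝ) : ℝ :=
  ∫ w : E2,
    (‖gradient φ w‖ ^ 2 -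
      (8 * (n : ℝ) ^ 2 * ‖w‖ ^ (2 * n - 2) / (1 + ‖w‖ ^ (2 * n)) ^ 2) * φ w ^ 2)

/-- Membership in `F(B(0,R))`: smooth on the open ball `B(0,R)` with all partial
derivatives of order `≤ 2` bounded there. -/
def memFE (R : ℝ) (φ : E2 → ℝ) : Prop :=
  ContDiffOn ℝ (⊤ : ℕ∞) φ (Metric.ball (0 : E2) R) ∧
    ∀ i : ℕ, i ≤ 2 → ∃ C : ℝ,
      ∀ w ∈ Metric.ball (0 : E2) R, ‖iteratedFDerivWithin ℝ i φ (Metric.ball (0 : E2) R) w‖ ≤ C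

/-- The modified index `ind_b(Σ₁ⁿ(R))`: the supremum of the dimensions of
finite-dimensional subspaces of `F(B(0,R))` on which `Qⁿ_R` is negative definite. -/
def indbE (n : ℕ) (R : ℝ) : ℕ∞ :=
  sSup {d : ℕ∞ | ∃ V : Submodule ℝ (E2 → ℝ), FiniteDimensional ℝ V ∧
    (∀ φ ∈ V, memFE R φ) ∧ (∀ φ ∈ V, φ ≠ 0 → QE n R φ < 0) ∧
    d = (Module.finrank ℝ V : ℕ∞)}

/-- The index `ind_c(Σ₁ⁿ)` of the complete dihedral Enneper surface of order `n` for
compactly supported perturbations: the supremum of the dimensions of finite-dimensional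
subspaces of `C_c^∞(ℝ²)` on which `Qⁿ_∞` is negative definite. -/
def indcE (n : ℕ) : ℕ∞ :=
  sSup {d : ℕ∞ | ∃ V : Submodule ℝ (E2 → ℝ), FiniteDimensional ℝ V ∧
    (∀ φ ∈ V, ContDiff ℝ (⊤ : ℕ∞) φ ∧ HasCompactSupport φ) ∧
    (∀ φ ∈ V, φ ≠ 0 → QEinf n φ < 0) ∧
    d = (Module.finrank ℝ V : ℕ∞)}

/-!
In polar coordinates the form `Qⁿ` splits over the Hartley modes `cas m`, `m : ℤ`, of the circle
into radial forms `∫ r h'² + m² h² / r - r V h²`, where `r V = 2 n² sech² (n log r) / r`. The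
function `sech (n log r)` solves the radial equation at frequency `n` and `tanh (n log r)` the one
at frequency `0`, so their logarithmic derivatives solve the corresponding Riccati equations.

Upper bound: completing the square with the first Riccati equation shows that the form is
nonnegative on the frequencies `|m| ≥ n`. The solution of the second one has its only pole at
`r = 1`, where `tanh (n log r)` vanishes, so every mode whose coefficient vanishes on the unit
circle also contributes a nonnegative amount. Hence `Qⁿ` is nonnegative on a subspace cut out by
`2n - 1` linear conditions, one for each `|m| < n`.

Lower bound: on `sech (n log r) cas m` with `|m| < n` the form is negative because of the gap
`n² - m²`. Cutting off with a slowly varying function of `log r` keeps it negative, and distinct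
modes are orthogonal, so these `2n - 1` functions span a negative space.
-/

namespace Enneper

open Set Filter Topology
open scoped ContDiff

/-! ### Hartley series on the circle -/

/-- The Hartley kernel `(cos mθ + sin mθ) / √(2π)`. Over `m : ℤ` these form an orthonormal basis of
the real `L²` space of the circle, indexed so that `cas m` and `cas (-m)` span the eigenspace of
frequency `|m|`. -/
def cas (m : ℤ) (θ : ℝ) : ℝ := (cos (m * θ) + sin (m * θ)) / √(2 * π)

/-- The Hartley coefficient of `f`, its `L²(-π, π)` inner product with `cas m`. -/
def hartley (f : ℝ → ℝ) (m : ℤ) : ℝ := ∫ θ in -π..π, f θ * cas m θ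

@[fun_prop]
lemma continuous_cas (m : ℤ) : Continuous (cas m) := by
  unfold cas
  fun_prop

lemma hasDerivAt_cas (m : ℤ) (θ : ℝ) : HasDerivAt (cas m) (m * cas (-m) θ) θ := by
  have h : HasDerivAt (fun θ : ℝ ↦ m * θ) m θ := by
    simpa using (hasDerivAt_id θ).const_mul (m : ℝ)
  convert! (h.cos.add h.sin).div_const √(2 * π) using 1
  simp only [cas, Int.cast_neg, neg_mul, cos_neg, sin_neg]
  ring

lemma cas_pi_eq_cas_neg_pi (m : ℤ) : cas m π = cas m (-π) := by
  simp [cas, sin_int_mul_pi]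

lemma integral_cos_int_mul (m : ℤ) :
    ∫ θ in -π..π, cos (m * θ) = if m = 0 then 2 * π else 0 := by
  split_ifs with h
  · simp [h, two_mul]
  · rw [intervalIntegral.integral_comp_mul_left _ (Int.cast_ne_zero.2 h)]
    simp [sin_int_mul_pi]

lemma integral_sin_int_mul (m : ℤ) : ∫ θ in -π..π, sin (m * θ) = 0 := by
  rcases eq_or_ne m 0 with rfl | h
  · simp
  · rw [intervalIntegral.integral_comp_mul_left _ (Int.cast_ne_zero.2 h)]
    simp

lemma integral_cas_mul_cas (m k : ℤ) :
    ∫ θ in -π..π, cas m θ * cas k θ = if m = k then 1 else 0 := by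
  have hprod (θ : ℝ) : cas m θ * cas k θ =
      (cos ((m - k : ℤ) * θ) + sin ((m + k : ℤ) * θ)) / (2 * π) := by
    rw [cas, cas, div_mul_div_comm, mul_self_sqrt two_pi_pos.le]
    push_cast
    rw [sub_mul, add_mul _ _ θ, cos_sub, sin_add]
    ring
  simp_rw [hprod]
  rw [intervalIntegral.integral_div, intervalIntegral.integral_add
    (Continuous.intervalIntegrable (by fun_prop) _ _)
    (Continuous.intervalIntegrable (by fun_prop) _ _), integral_cos_int_mul, integral_sin_int_mul,
    add_zero, ite_div, div_self two_pi_pos.ne', zero_div]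
  simp only [sub_eq_zero]

lemma integral_sq_sum_mul_cas {ι : Type*} (s : Finset ι) (c : ι → ℝ) {k : ι → ℤ}
    (hk : InjOn k s) :
    ∫ θ in -π..π, (∑ i ∈ s, c i * cas (k i) θ) ^ 2 = ∑ i ∈ s, c i ^ 2 := by
  have hprod (θ : ℝ) : (∑ i ∈ s, c i * cas (k i) θ) ^ 2 =
      ∑ i ∈ s, ∑ j ∈ s, c i * c j * (cas (k i) θ * cas (k j) θ) := by
    rw [pow_two, Finset.sum_mul_sum]
    exact Finset.sum_congr rfl fun i _ ↦ Finset.sum_congr rfl fun j _ ↦ by ring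
  simp_rw [hprod]
  rw [intervalIntegral.integral_finsetSum
    fun i _ ↦ Continuous.intervalIntegrable (by fun_prop) _ _]
  refine Finset.sum_congr rfl fun i hi ↦ ?_
  rw [intervalIntegral.integral_finsetSum
    fun j _ ↦ Continuous.intervalIntegrable (by fun_prop) _ _]
  simp_rw [intervalIntegral.integral_const_mul, integral_cas_mul_cas]
  rw [Finset.sum_eq_single_of_mem i hi fun j hj hji ↦ by
    rw [if_neg fun h ↦ hji (hk hi hj h).symm, mul_zero]]
  rw [if_pos rfl, mul_one, pow_two]

lemma hartley_add_smul {f g : ℝ → ℝ} (hf : Continuous f) (hg : Continuous g) (l : ℝ) (m : ℤ) :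
    hartley (f + l • g) m = hartley f m + l * hartley g m := by
  simp only [hartley, Pi.add_apply, Pi.smul_apply, smul_eq_mul, add_mul, mul_assoc]
  rw [intervalIntegral.integral_add (Continuous.intervalIntegrable (by fun_prop) _ _)
    (Continuous.intervalIntegrable (by fun_prop) _ _), intervalIntegral.integral_const_mul]

lemma hartley_deriv {f f' : ℝ → ℝ} (hf : ∀ θ, HasDerivAt f (f' θ) θ) (hf' : Continuous f')
    (hper : f π = f (-π)) (m : ℤ) : hartley f' m = -m * hartley f (-m) := by
  have hparts := intervalIntegral.integral_mul_deriv_eq_deriv_mul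
    (fun θ _ ↦ hasDerivAt_cas m θ) (fun θ _ ↦ hf θ)
    (Continuous.intervalIntegrable (by fun_prop) (-π) π) (hf'.intervalIntegrable _ _)
  rw [hper, cas_pi_eq_cas_neg_pi, sub_self, zero_sub] at hparts
  simp only [hartley, mul_comm (f' _), hparts, neg_mul, mul_assoc,
    intervalIntegral.integral_const_mul, mul_comm (f _)]

lemma neg_pi_lt_pi : -π < π := neg_lt_self pi_pos

lemma fourier_neg_eq_cas (m : ℤ) (θ : ℝ) :
    (fourier (-m) (θ : AddCircle (π - -π)) : ℂ) =
      √(2 * π) / 2 * ((1 - Complex.I) * cas m θ + (1 + Complex.I) * cas (-m) θ) := by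
  have hexp : 2 * π * Complex.I * ((-m : ℤ) : ℂ) * θ / ((π - -π : ℝ) : ℂ) =
      ((-(m * θ) : ℝ) : ℂ) * Complex.I := by
    have hpi : (π : ℂ) ≠ 0 := Complex.ofReal_ne_zero.2 pi_ne_zero
    push_cast
    field_simp
    ring
  have hsqrt : ((√(2 * π) : ℝ) : ℂ) ≠ 0 := Complex.ofReal_ne_zero.2 (sqrt_ne_zero'.2 two_pi_pos)
  rw [fourier_coe_apply, hexp, Complex.exp_mul_I, ← Complex.ofReal_cos, ← Complex.ofReal_sin,
    cas, cas]
  simp only [Int.cast_neg, neg_mul, cos_neg, sin_neg]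
  push_cast
  field_simp
  ring

lemma fourierCoeffOn_ofReal {f : ℝ → ℝ} (hf : Continuous f) (m : ℤ) :
    fourierCoeffOn neg_pi_lt_pi (fun θ ↦ (f θ : ℂ)) m = √(2 * π) / (4 * π) *
      ((1 - Complex.I) * hartley f m + (1 + Complex.I) * hartley f (-m)) := by
  have hmul (θ : ℝ) : (fourier (-m) (θ : AddCircle (π - -π)) : ℂ) • (f θ : ℂ) =
      √(2 * π) / 2 * (1 - Complex.I) * ((f θ * cas m θ : ℝ) : ℂ) +
        √(2 * π) / 2 * (1 + Complex.I) * ((f θ * cas (-m) θ : ℝ) : ℂ) := by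
    rw [fourier_neg_eq_cas, smul_eq_mul]
    push_cast
    ring
  rw [fourierCoeffOn_eq_integral]
  simp_rw [hmul]
  rw [intervalIntegral.integral_add (Continuous.intervalIntegrable (by fun_prop) _ _)
    (Continuous.intervalIntegrable (by fun_prop) _ _), intervalIntegral.integral_const_mul,
    intervalIntegral.integral_const_mul, intervalIntegral.integral_ofReal,
    intervalIntegral.integral_ofReal, Complex.real_smul, hartley, hartley]
  have hpi : (π : ℂ) ≠ 0 := Complex.ofReal_ne_zero.2 pi_ne_zero
  push_cast
  field_simp
  ring

lemma norm_sq_fourierCoeffOn_ofReal {f : ℝ → ℝ} (hf : Continuous f) (m : ℤ) :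
    ‖fourierCoeffOn neg_pi_lt_pi (fun θ ↦ (f θ : ℂ)) m‖ ^ 2 =
      (hartley f m ^ 2 + hartley f (-m) ^ 2) / (4 * π) := by
  have hscalar : (√(2 * π) / (4 * π) : ℂ) = ((√(2 * π) / (4 * π) : ℝ) : ℂ) := by push_cast; rfl
  have hnorm (p q : ℝ) :
      ‖(1 - Complex.I) * p + (1 + Complex.I) * q‖ ^ 2 = 2 * (p ^ 2 + q ^ 2) := by
    rw [← Complex.normSq_eq_norm_sq, Complex.normSq_apply]
    simp only [Complex.add_re, Complex.add_im, Complex.mul_re, Complex.mul_im, Complex.sub_re,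
      Complex.sub_im, Complex.one_re, Complex.one_im, Complex.I_re, Complex.I_im,
      Complex.ofReal_re, Complex.ofReal_im]
    ring
  rw [fourierCoeffOn_ofReal hf, norm_mul, mul_pow, hnorm, hscalar, Complex.norm_real,
    norm_eq_abs, sq_abs, div_pow, sq_sqrt two_pi_pos.le]
  have := pi_ne_zero
  field_simp
  ring

lemma memLp_two_ofReal {f : ℝ → ℝ} (hf : Continuous f) (a b : ℝ) :
    MemLp (fun θ ↦ (f θ : ℂ)) 2 (volume.restrict (Ioc a b)) :=
  (memLp_two_iff_integrable_sq_norm (by fun_prop)).2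
    (Continuous.integrableOn_Ioc (by fun_prop))

lemma hasSum_of_hasSum_add_comp_neg {b : ℤ → ℝ} (hb : ∀ m, 0 ≤ b m) {S : ℝ}
    (h : HasSum (fun m ↦ b m + b (-m)) (2 * S)) : HasSum b S := by
  have hsum : Summable b :=
    h.summable.of_nonneg_of_le hb fun m ↦ le_add_of_nonneg_right (hb (-m))
  have hadd := hsum.hasSum.add ((Equiv.neg ℤ).hasSum_iff.2 hsum.hasSum)
  have : ∑' m, b m = S := by linarith [hadd.unique h]
  exact this ▸ hsum.hasSum

lemma hasSum_hartley_sq {f : ℝ → ℝ} (hf : Continuous f) :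
    HasSum (fun m ↦ hartley f m ^ 2) (∫ θ in -π..π, f θ ^ 2) := by
  have hfourier :=
    (hasSum_sq_fourierCoeffOn neg_pi_lt_pi (memLp_two_ofReal hf _ _)).mul_left (4 * π)
  have := pi_ne_zero
  refine hasSum_of_hasSum_add_comp_neg (fun m ↦ sq_nonneg _) ?_
  convert! hfourier using 1
  · ext m
    rw [norm_sq_fourierCoeffOn_ofReal hf]
    field_simp
  · simp only [Complex.norm_real, norm_eq_abs, sq_abs, smul_eq_mul]
    field_simp
    ring

/-- The `L²(-π, π)` inner product of the components of `f` and `g` orthogonal to all `cas m` with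
`m ∈ s`. -/
def tailInner (s : Finset ℤ) (f g : ℝ → ℝ) : ℝ :=
  (∫ θ in -π..π, f θ * g θ) - ∑ m ∈ s, hartley f m * hartley g m

lemma tailInner_self (s : Finset ℤ) (f : ℝ → ℝ) :
    tailInner s f f = (∫ θ in -π..π, f θ ^ 2) - ∑ m ∈ s, hartley f m ^ 2 := by
  simp only [tailInner, pow_two]

lemma tailInner_self_nonneg (s : Finset ℤ) {f : ℝ → ℝ} (hf : Continuous f) :
    0 ≤ tailInner s f f := by
  rw [tailInner_self, sub_nonneg]
  exact sum_le_hasSum s (fun m _ ↦ sq_nonneg _) (hasSum_hartley_sq hf)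

lemma tailInner_add_smul_self (s : Finset ℤ) {f g : ℝ → ℝ} (hf : Continuous f) (hg : Continuous g)
    (l : ℝ) : tailInner s (f + l • g) (f + l • g) =
      tailInner s f f + 2 * l * tailInner s f g + l ^ 2 * tailInner s g g := by
  have h_int : ∫ θ in -π..π, (f + l • g) θ * (f + l • g) θ = (∫ θ in -π..π, f θ * f θ) +
      2 * l * (∫ θ in -π..π, f θ * g θ) + l ^ 2 * ∫ θ in -π..π, g θ * g θ := by
    simp_rw [← intervalIntegral.integral_const_mul]
    rw [← intervalIntegral.integral_add (Continuous.intervalIntegrable (by fun_prop) _ _)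
        (Continuous.intervalIntegrable (by fun_prop) _ _),
      ← intervalIntegral.integral_add (Continuous.intervalIntegrable (by fun_prop) _ _)
        (Continuous.intervalIntegrable (by fun_prop) _ _)]
    refine intervalIntegral.integral_congr fun θ _ ↦ ?_
    simp only [Pi.add_apply, Pi.smul_apply, smul_eq_mul]
    ring
  have hsum : ∑ m ∈ s, hartley (f + l • g) m * hartley (f + l • g) m =
      ∑ m ∈ s, hartley f m * hartley f m + 2 * l * ∑ m ∈ s, hartley f m * hartley g m +
        l ^ 2 * ∑ m ∈ s, hartley g m * hartley g m := by
    simp only [hartley_add_smul hf hg, Finset.mul_sum, ← Finset.sum_add_distrib]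
    exact Finset.sum_congr rfl fun m _ ↦ by ring
  rw [tailInner, h_int, hsum, tailInner, tailInner, tailInner]
  ring

/-- The frequencies `|m| < n`, which carry the index of the surface of order `n`. -/
abbrev lowFreq (n : ℕ) : Finset ℤ := Finset.Ioo (-n) n

lemma card_lowFreq (n : ℕ) : (lowFreq n).card = 2 * n - 1 := by
  rw [Int.card_Ioo]
  omega

lemma mem_lowFreq {n : ℕ} {m : ℤ} : m ∈ lowFreq n ↔ (m : ℝ) ^ 2 < n ^ 2 := by
  rw [Finset.mem_Ioo, ← abs_lt, sq_lt_sq, Nat.abs_cast]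
  exact_mod_cast Iff.rfl

lemma one_le_sq_sub_sq_of_mem_lowFreq {n : ℕ} {m : ℤ} (hm : m ∈ lowFreq n) :
    (1 : ℝ) ≤ n ^ 2 - m ^ 2 := by
  have hlt : m ^ 2 < (n : ℤ) ^ 2 := by exact_mod_cast mem_lowFreq.1 hm
  rw [le_sub_iff_add_le']
  exact_mod_cast Int.add_one_le_iff.2 hlt

lemma sq_mul_tailInner_le_integral_deriv_sq {f f' : ℝ → ℝ} (hf : ∀ θ, HasDerivAt f (f' θ) θ)
    (hf' : Continuous f') (hper : f π = f (-π)) (n : ℕ) :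
    n ^ 2 * tailInner (lowFreq n) f f ≤ ∫ θ in -π..π, f' θ ^ 2 := by
  have hfc : Continuous f := continuous_iff_continuousAt.2 fun θ ↦ (hf θ).continuousAt
  have hlow : HasSum (fun m ↦ if m ∈ lowFreq n then hartley f m ^ 2 else 0)
      (∑ m ∈ lowFreq n, hartley f m ^ 2) := by
    rw [Finset.sum_congr rfl fun m hm ↦ (if_pos hm).symm]
    exact hasSum_sum_of_ne_finset_zero fun m hm ↦ if_neg hm
  rw [tailInner_self]
  refine hasSum_le (fun m ↦ ?_) (((hasSum_hartley_sq hfc).sub hlow).mul_left _)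
    ((Equiv.neg ℤ).hasSum_iff.2 (hasSum_hartley_sq hf'))
  have hderiv : hartley f' (-m) ^ 2 = m ^ 2 * hartley f m ^ 2 := by
    rw [hartley_deriv hf hf' hper, neg_neg, Int.cast_neg, neg_neg, mul_pow]
  simp only [Function.comp_apply, Equiv.neg_apply, hderiv]
  split_ifs with hm
  · rw [sub_self, mul_zero]
    positivity
  · rw [sub_zero]
    exact mul_le_mul_of_nonneg_right (not_lt.1 fun h ↦ hm (mem_lowFreq.2 h)) (sq_nonneg _)

/-! ### The radial ground states -/

/-- The function `sech (n log r)`, written as a rational function so as to extend to `r = 0`. -/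
def sechLog (n : ℕ) (r : ℝ) : ℝ := 2 * r ^ n / (r ^ (2 * n) + 1)

/-- The function `tanh (n log r)`, written as a rational function so as to extend to `r = 0`. -/
def tanhLog (n : ℕ) (r : ℝ) : ℝ := (r ^ (2 * n) - 1) / (r ^ (2 * n) + 1)

/-- The potential of the form `Qⁿ` as a function of the radius. -/
def potential (n : ℕ) (r : ℝ) : ℝ := 8 * (n : ℝ) ^ 2 * r ^ (2 * n - 2) / (1 + r ^ (2 * n)) ^ 2

lemma pow_two_mul_add_one_pos (n : ℕ) (r : ℝ) : 0 < r ^ (2 * n) + 1 := by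
  rw [pow_mul]
  positivity

lemma continuous_sechLog (n : ℕ) : Continuous (sechLog n) := by
  unfold sechLog
  exact Continuous.div (by fun_prop) (by fun_prop) fun r ↦ (pow_two_mul_add_one_pos n r).ne'

lemma continuous_tanhLog (n : ℕ) : Continuous (tanhLog n) := by
  unfold tanhLog
  exact Continuous.div (by fun_prop) (by fun_prop) fun r ↦ (pow_two_mul_add_one_pos n r).ne'

lemma continuous_potential (n : ℕ) : Continuous (potential n) := by
  unfold potential
  refine Continuous.div (by fun_prop) (by fun_prop) fun r ↦ pow_ne_zero 2 ?_
  exact add_comm 1 (r ^ (2 * n)) ▸ (pow_two_mul_add_one_pos n r).ne'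

lemma contDiff_sechLog (n : ℕ) {k : WithTop ℕ∞} : ContDiff ℝ k (sechLog n) := by
  unfold sechLog
  exact ContDiff.div (by fun_prop) (by fun_prop) fun r ↦ (pow_two_mul_add_one_pos n r).ne'

lemma sechLog_sq_add_tanhLog_sq (n : ℕ) (r : ℝ) : sechLog n r ^ 2 + tanhLog n r ^ 2 = 1 := by
  have := (pow_two_mul_add_one_pos n r).ne'
  rw [sechLog, tanhLog]
  field_simp
  ring

lemma mul_potential (n : ℕ) {r : ℝ} (hr : r ≠ 0) :
    r * potential n r = 2 * n ^ 2 * sechLog n r ^ 2 / r := by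
  rcases n with - | n
  · simp [potential]
  · have := (pow_two_mul_add_one_pos (n + 1) r).ne'
    rw [potential, sechLog, add_comm 1 (r ^ _), show 2 * (n + 1) - 2 = 2 * n by lia]
    field_simp
    ring

lemma hasDerivAt_pow_div (k : ℕ) {r : ℝ} (hr : r ≠ 0) :
    HasDerivAt (fun x : ℝ ↦ x ^ k) (k * r ^ k / r) r := by
  convert! hasDerivAt_pow k r using 1
  rcases k with - | k
  · simp
  · rw [add_tsub_cancel_right, pow_succ, ← mul_assoc, mul_div_cancel_right₀ _ hr]

lemma hasDerivAt_tanhLog (n : ℕ) {r : ℝ} (hr : r ≠ 0) :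
    HasDerivAt (tanhLog n) (n * sechLog n r ^ 2 / r) r := by
  have hpow := hasDerivAt_pow_div (2 * n) hr
  have hne := (pow_two_mul_add_one_pos n r).ne'
  convert! (hpow.sub_const 1).div (hpow.add_const 1) hne using 1
  rw [sechLog]
  push_cast
  field_simp
  ring

lemma hasDerivAt_sechLog (n : ℕ) {r : ℝ} (hr : r ≠ 0) :
    HasDerivAt (sechLog n) (-(n * tanhLog n r * sechLog n r / r)) r := by
  have hne := (pow_two_mul_add_one_pos n r).ne'
  convert! ((hasDerivAt_pow_div n hr).const_mul 2).div
    ((hasDerivAt_pow_div (2 * n) hr).add_const 1) hne using 1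
  rw [sechLog, tanhLog]
  push_cast
  field_simp
  ring

lemma tanhLog_zero {n : ℕ} (hn : n ≠ 0) : tanhLog n 0 = -1 := by
  simp [tanhLog, hn]

lemma sechLog_zero {n : ℕ} (hn : n ≠ 0) : sechLog n 0 = 0 := by
  simp [sechLog, hn]

lemma tanhLog_one (n : ℕ) : tanhLog n 1 = 0 := by
  simp [tanhLog]

lemma tanhLog_le_one (n : ℕ) (r : ℝ) : tanhLog n r ≤ 1 := by
  rw [tanhLog, div_le_one (pow_two_mul_add_one_pos n r)]
  linarith

lemma three_fifths_le_tanhLog_two {n : ℕ} (hn : n ≠ 0) : 3 / 5 ≤ tanhLog n 2 := by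
  have hfour : (2 : ℝ) ^ 2 ≤ 2 ^ (2 * n) := pow_le_pow_right₀ one_le_two (by lia)
  rw [tanhLog, le_div_iff₀ (pow_two_mul_add_one_pos n 2)]
  linarith

lemma tanhLog_ne_zero {n : ℕ} (hn : n ≠ 0) {r : ℝ} (hr : 0 ≤ r) (hr1 : r ≠ 1) :
    tanhLog n r ≠ 0 := by
  refine div_ne_zero (fun h ↦ hr1 ?_) (pow_two_mul_add_one_pos n r).ne'
  exact (pow_eq_one_iff_of_nonneg hr (by lia)).1 (sub_eq_zero.1 h)

lemma continuousAt_sq_div_of_hasDerivAt {a T : ℝ → ℝ} {x t : ℝ} (ha : DifferentiableAt ℝ a x)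
    (hT : HasDerivAt T t x) (ht : t ≠ 0) (hax : a x = 0) (hTx : T x = 0) :
    ContinuousAt (fun r ↦ a r ^ 2 / T r) x := by
  have hda : ContinuousAt (dslope a x) x := continuousAt_dslope_same.2 ha
  have hdT : ContinuousAt (dslope T x) x := continuousAt_dslope_same.2 hT.differentiableAt
  have hdTx : dslope T x x ≠ 0 := by rwa [dslope_same, hT.deriv]
  refine ((ha.continuousAt.mul hda).div hdT hdTx).congr (.of_forall fun r ↦ ?_)
  rcases eq_or_ne r x with rfl | hr
  · simp [hax]
  · have hne : r - x ≠ 0 := sub_ne_zero.2 hr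
    simp only [Pi.mul_apply, Pi.div_apply, dslope_of_ne _ hr, slope_def_field, hax, hTx, sub_zero]
    rw [← mul_div_assoc, div_div_div_cancel_right₀ hne, pow_two]

/-- Picone's trick: if `p` is a subsolution of a Riccati equation, the integrand minus `(p Z)'`
is the nonnegative form `X + 2lY + l²Z` at `l = -p / r`, up to the factor `r`. -/
lemma sub_le_integral_of_riccati {p p' X Y Z F : ℝ → ℝ} {u v : ℝ} (hu : 0 ≤ u) (huv : u ≤ v)
    (hpZ : ContinuousOn (fun r ↦ p r * Z r) (Icc u v))
    (hp : ∀ r ∈ Ioo u v, HasDerivAt p (p' r) r) (hZ : ∀ r ∈ Ioo u v, HasDerivAt Z (2 * Y r) r)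
    (hform : ∀ r ∈ Ioo u v, ∀ l, 0 ≤ X r + 2 * l * Y r + l ^ 2 * Z r)
    (hF : ∀ r ∈ Ioo u v, r * X r + (p' r + p r ^ 2 / r) * Z r ≤ F r)
    (hFi : IntegrableOn F (Icc u v)) :
    p v * Z v - p u * Z u ≤ ∫ r in u..v, F r := by
  refine intervalIntegral.sub_le_integral_of_hasDeriv_right_of_le huv hpZ
    (fun r hr ↦ ((hp r hr).mul (hZ r hr)).hasDerivWithinAt) hFi fun r hr ↦ ?_
  have hr0 : 0 < r := hu.trans_lt hr.1
  refine le_trans ?_ (hF r hr)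
  have hsq := mul_nonneg hr0.le (hform r hr (-p r / r))
  have hcomplete : r * (X r + 2 * (-p r / r) * Y r + (-p r / r) ^ 2 * Z r) =
      r * X r + (p' r + p r ^ 2 / r) * Z r - (p' r * Z r + p r * (2 * Y r)) := by
    field_simp
    ring
  linarith

lemma radialForm_nonneg_of_sq_mul_le {X Y Z W : ℝ → ℝ} {M : ℝ} (n : ℕ) (hM : 0 ≤ M)
    (hX : Continuous X) (hW : Continuous W) (hZ : ∀ r, HasDerivAt Z (2 * Y r) r)
    (hform : ∀ r l, 0 ≤ X r + 2 * l * Y r + l ^ 2 * Z r)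
    (hZW : ∀ r, n ^ 2 * Z r ≤ r ^ 2 * W r) (hZ0 : Z 0 = 0) (hZM : Z M = 0) :
    0 ≤ ∫ r in 0..M, r * (X r + W r - potential n r * Z r) := by
  have hZc : Continuous Z := continuous_iff_continuousAt.2 fun r ↦ (hZ r).continuousAt
  have hVc := continuous_potential n
  have hTc := continuous_tanhLog n
  have h_int := sub_le_integral_of_riccati (p := fun r ↦ -(n * tanhLog n r))
    (p' := fun r ↦ -(n * (n * sechLog n r ^ 2 / r))) (Z := Z)
    (F := fun r ↦ r * (X r + W r - potential n r * Z r)) le_rfl hM (by fun_prop)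
    (fun r hr ↦ ((hasDerivAt_tanhLog n hr.1.ne').const_mul _).neg) (fun r _ ↦ hZ r)
    (fun r _ ↦ hform r) (fun r hr ↦ ?_) (Continuous.integrableOn_Icc (by fun_prop))
  · simpa only [hZ0, hZM, mul_zero, sub_zero] using h_int
  · have hr0 : 0 < r := hr.1
    have hW' : n ^ 2 * Z r / r ≤ r * W r := by
      rw [div_le_iff₀ hr0]
      linarith [hZW r]
    have hriccati : -(n * (n * sechLog n r ^ 2 / r)) + (-(n * tanhLog n r)) ^ 2 / r =
        n ^ 2 / r - r * potential n r := by
      rw [mul_potential n hr0.ne']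
      field_simp
      linear_combination (n : ℝ) ^ 2 * sechLog_sq_add_tanhLog_sq n r
    rw [hriccati]
    linear_combination hW'

lemma hasDerivAt_sechLog_sq_div_tanhLog (n : ℕ) {r : ℝ} (hr : r ≠ 0) (hT : tanhLog n r ≠ 0) :
    HasDerivAt (fun r ↦ n * sechLog n r ^ 2 / tanhLog n r)
      (-(r * potential n r) - (n * sechLog n r ^ 2 / tanhLog n r) ^ 2 / r) r := by
  convert! (((hasDerivAt_sechLog n hr).pow 2).const_mul (n : ℝ)).div (hasDerivAt_tanhLog n hr) hT
    using 1
  rw [mul_potential n hr]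
  simp only [Pi.pow_apply, Nat.cast_ofNat, Nat.add_one_sub_one, pow_one]
  field_simp

lemma continuousOn_sechLog_sq_div_tanhLog_mul_sq {n : ℕ} (hn : n ≠ 0) {a : ℝ → ℝ}
    (ha : Differentiable ℝ a) (ha1 : a 1 = 0) :
    ContinuousOn (fun r ↦ n * sechLog n r ^ 2 / tanhLog n r * a r ^ 2) (Ici 0) := by
  have hquot : ContinuousOn (fun r ↦ a r ^ 2 / tanhLog n r) (Ici 0) := by
    intro r hr
    refine ContinuousAt.continuousWithinAt ?_
    rcases eq_or_ne r 1 with rfl | hr1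
    · refine continuousAt_sq_div_of_hasDerivAt (ha 1) (hasDerivAt_tanhLog n one_ne_zero) ?_ ha1
        (tanhLog_one n)
      simp [sechLog, hn]
    · exact ((ha r).continuousAt.pow 2).div (continuous_tanhLog n).continuousAt
        (tanhLog_ne_zero hn hr hr1)
  have hS := continuous_sechLog n
  refine ((by fun_prop : Continuous fun r ↦ n * sechLog n r ^ 2).continuousOn.mul hquot).congr
    fun r _ ↦ ?_
  simp only [Pi.mul_apply]
  ring

lemma radialForm_nonneg_of_eq_zero_one {n : ℕ} (hn : n ≠ 0) {a a' : ℝ → ℝ} {M : ℝ} (hM : 1 ≤ M)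
    (ha : ∀ r, HasDerivAt a (a' r) r) (ha' : Continuous a') (ha1 : a 1 = 0) (haM : a M = 0) :
    0 ≤ ∫ r in 0..M, r * (a' r ^ 2 - potential n r * a r ^ 2) := by
  have had : Differentiable ℝ a := fun r ↦ (ha r).differentiableAt
  have hac := had.continuous
  have hVc := continuous_potential n
  have hFc : Continuous fun r ↦ r * (a' r ^ 2 - potential n r * a r ^ 2) := by fun_prop
  have hbound {u v : ℝ} (hu : 0 ≤ u) (huv : u ≤ v) (huv1 : 1 ∉ Ioo u v) :=
    sub_le_integral_of_riccati (p := fun r ↦ n * sechLog n r ^ 2 / tanhLog n r)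
      (X := fun r ↦ a' r ^ 2) (Y := fun r ↦ a r * a' r) (Z := fun r ↦ a r ^ 2) hu huv
      ((continuousOn_sechLog_sq_div_tanhLog_mul_sq hn had ha1).mono fun r hr ↦ hu.trans hr.1)
      (fun r hr ↦ hasDerivAt_sechLog_sq_div_tanhLog n (hu.trans_lt hr.1).ne'
        (tanhLog_ne_zero hn (hu.trans_lt hr.1).le fun h ↦ huv1 (h ▸ hr)))
      (fun r _ ↦ by
        convert! (ha r).pow 2 using 1
        simp only [Nat.cast_ofNat, Nat.add_one_sub_one, pow_one]
        ring)
      (fun r _ l ↦ by linear_combination sq_nonneg (a' r + l * a r))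
      (fun r _ ↦ le_of_eq (by ring)) (hFc.integrableOn_Icc (μ := volume))
  have hin := hbound le_rfl zero_le_one (fun h ↦ h.2.false)
  have hout := hbound zero_le_one hM (fun h ↦ h.1.false)
  simp only [sechLog_zero hn, ha1, haM, ne_eq, OfNat.ofNat_ne_zero, not_false_eq_true, zero_pow,
    mul_zero, zero_div, zero_mul, sub_zero] at hin hout
  rw [← intervalIntegral.integral_add_adjacent_intervals (hFc.intervalIntegrable 0 1)
    (hFc.intervalIntegrable 1 M)]
  exact add_nonneg hin hout

/-! ### Polar coordinates -/

/-- The standard isometry from `ℂ` to the Euclidean plane. -/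
def planeIso : ℂ ≃ₗᵢ[ℝ] E2 := Complex.orthonormalBasisOneI.repr

/-- The point of the plane with polar coordinates `(r, θ)`. -/
def polarPt (r θ : ℝ) : E2 := planeIso (circleMap 0 r θ)

@[fun_prop]
lemma continuous_polarPt_comp {X : Type*} [TopologicalSpace X] {f g : X → ℝ} (hf : Continuous f)
    (hg : Continuous g) : Continuous fun x ↦ polarPt (f x) (g x) := by
  unfold polarPt circleMap
  fun_prop

lemma norm_polarPt {r : ℝ} (hr : 0 ≤ r) (θ : ℝ) : ‖polarPt r θ‖ = r := by
  rw [polarPt, LinearIsometryEquiv.norm_map, norm_circleMap_zero, abs_of_nonneg hr]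

lemma polarPt_pi (r : ℝ) : polarPt r π = polarPt r (-π) := by
  have hper := periodic_circleMap 0 r (-π)
  rw [polarPt, polarPt, ← hper]
  ring_nf

lemma hasDerivAt_polarPt_radius (r θ : ℝ) :
    HasDerivAt (fun r ↦ polarPt r θ) (polarPt 1 θ) r := by
  have hsmul : (fun r ↦ polarPt r θ) = fun r ↦ r • polarPt 1 θ := by
    ext1 r
    rw [polarPt, polarPt, ← map_smul]
    simp [circleMap]
  rw [hsmul]
  simpa using (hasDerivAt_id r).smul_const (polarPt 1 θ)

lemma hasDerivAt_polarPt_angle (r θ : ℝ) :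
    HasDerivAt (polarPt r) (r • planeIso (circleMap 0 1 θ * Complex.I)) θ := by
  have hsmul : r • planeIso (circleMap 0 1 θ * Complex.I) =
      planeIso (circleMap 0 r θ * Complex.I) := by
    rw [← map_smul]
    simp [circleMap, mul_assoc]
  rw [hsmul]
  exact planeIso.toContinuousLinearEquiv.hasFDerivAt.comp_hasDerivAt θ (hasDerivAt_circleMap 0 r θ)

/-- The radial derivative of `φ` at the point with polar coordinates `(r, θ)`. -/
def radialDeriv (φ : E2 → ℝ) (r θ : ℝ) : ℝ := fderiv ℝ φ (polarPt r θ) (polarPt 1 θ)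

/-- The derivative of `φ` in the unit angular direction at the point with polar coordinates
`(r, θ)`; it equals `∂φ/∂θ` only up to the factor `r`. -/
def angularDeriv (φ : E2 → ℝ) (r θ : ℝ) : ℝ :=
  fderiv ℝ φ (polarPt r θ) (planeIso (circleMap 0 1 θ * Complex.I))

section PolarDerivatives

variable {φ : E2 → ℝ} (hφ : ContDiff ℝ 1 φ)

include hφ

lemma hasDerivAt_comp_polarPt_radius (r θ : ℝ) :
    HasDerivAt (fun r ↦ φ (polarPt r θ)) (radialDeriv φ r θ) r :=
  (hφ.differentiable one_ne_zero _).hasFDerivAt.comp_hasDerivAt r (hasDerivAt_polarPt_radius r θ)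

lemma hasDerivAt_comp_polarPt_angle (r θ : ℝ) :
    HasDerivAt (fun θ ↦ φ (polarPt r θ)) (r * angularDeriv φ r θ) θ := by
  rw [angularDeriv, ← smul_eq_mul, ← map_smul]
  exact (hφ.differentiable one_ne_zero _).hasFDerivAt.comp_hasDerivAt θ
    (hasDerivAt_polarPt_angle r θ)

variable {X : Type*} [TopologicalSpace X] {f g : X → ℝ} (hf : Continuous f) (hg : Continuous g)

include hf hg

@[fun_prop]
lemma continuous_radialDeriv_comp : Continuous fun x ↦ radialDeriv φ (f x) (g x) := by
  unfold radialDeriv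
  fun_prop

@[fun_prop]
lemma continuous_angularDeriv_comp : Continuous fun x ↦ angularDeriv φ (f x) (g x) := by
  unfold angularDeriv circleMap
  fun_prop

end PolarDerivatives

lemma inner_sq_add_inner_mul_I_sq (z c : ℂ) :
    inner ℝ z c ^ 2 + inner ℝ z (c * Complex.I) ^ 2 = ‖z‖ ^ 2 * ‖c‖ ^ 2 := by
  simp only [Complex.inner, ← Complex.normSq_eq_norm_sq, Complex.normSq_apply, Complex.mul_re,
    Complex.conj_re, Complex.conj_im, Complex.mul_im, Complex.I_re, Complex.I_im]
  ring

lemma norm_gradient_polarPt_sq (φ : E2 → ℝ) (r θ : ℝ) :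
    ‖gradient φ (polarPt r θ)‖ ^ 2 = radialDeriv φ r θ ^ 2 + angularDeriv φ r θ ^ 2 := by
  have hinner (c : ℂ) : fderiv ℝ φ (polarPt r θ) (planeIso c) =
      inner ℝ (planeIso.symm (gradient φ (polarPt r θ))) c := by
    rw [← inner_gradient_left, ← planeIso.inner_map_map, planeIso.apply_symm_apply]
  rw [radialDeriv, angularDeriv, polarPt.eq_def 1, hinner, hinner, inner_sq_add_inner_mul_I_sq,
    LinearIsometryEquiv.norm_map, norm_circleMap_zero, abs_one, one_pow, mul_one]

lemma integral_eq_polar {f : E2 → ℝ} (hf : Continuous f) {M : ℝ} (hM : 0 ≤ M)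
    (hfM : ∀ w, M ≤ ‖w‖ → f w = 0) :
    ∫ w, f w = ∫ r in 0..M, ∫ θ in -π..π, r * f (polarPt r θ) := by
  have hsub : Ioc 0 M ×ˢ Ioo (-π) π ⊆ polarCoord.target :=
    prod_mono Ioc_subset_Ioi_self subset_rfl
  have hcont : Continuous fun p : ℝ × ℝ ↦ p.1 * f (polarPt p.1 p.2) := by fun_prop
  have hpolar (p : ℝ × ℝ) : planeIso (Complex.polarCoord.symm p) = polarPt p.1 p.2 := by
    simp [polarPt, circleMap, Complex.polarCoord_symm_apply, Complex.exp_mul_I]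
  rw [← planeIso.measurePreserving.integral_comp planeIso.toHomeomorph.measurableEmbedding,
    ← Complex.integral_comp_polarCoord_symm]
  simp only [hpolar, smul_eq_mul]
  rw [setIntegral_eq_of_subset_of_forall_sdiff_eq_zero polarCoord.open_target.measurableSet hsub,
    Measure.volume_eq_prod, setIntegral_prod, intervalIntegral.integral_of_le hM]
  · simp_rw [intervalIntegral.integral_of_le neg_pi_lt_pi.le, integral_Ioc_eq_integral_Ioo]
  · exact (hcont.continuousOn.integrableOn_compact (isCompact_Icc.prod isCompact_Icc)).mono_set
      (prod_mono Ioc_subset_Icc_self Ioo_subset_Icc_self)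
  · rintro ⟨r, θ⟩ ⟨⟨hr : 0 < r, hθ⟩, hout⟩
    have hMr : M < r := not_le.1 fun h ↦ hout ⟨⟨hr, h⟩, hθ⟩
    rw [hfM _ (by rw [norm_polarPt hr.le]; exact hMr.le), mul_zero]

lemma hasDerivAt_integral_param {F F' : ℝ → ℝ → ℝ} (hF : ∀ r, Continuous (F r))
    (hF' : Continuous F'.uncurry) (hderiv : ∀ r θ, HasDerivAt (fun r ↦ F r θ) (F' r θ) r)
    (a b r : ℝ) : HasDerivAt (fun r ↦ ∫ θ in a..b, F r θ) (∫ θ in a..b, F' r θ) r := by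
  obtain ⟨K, hK⟩ := (isCompact_Icc.prod isCompact_uIcc).exists_bound_of_continuousOn
    (s := Icc (r - 1) (r + 1) ×ˢ uIcc a b) hF'.continuousOn
  refine (intervalIntegral.hasDerivAt_integral_of_dominated_loc_of_deriv_le (bound := fun _ ↦ K)
    (Icc_mem_nhds (sub_one_lt r) (lt_add_one r))
    (.of_forall fun x ↦ (hF x).aestronglyMeasurable) ((hF r).intervalIntegrable _ _)
    (hF'.uncurry_left r).aestronglyMeasurable (.of_forall fun θ hθ x hx ↦ ?_)
    intervalIntegrable_const (.of_forall fun θ _ x _ ↦ hderiv x θ)).2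
  exact hK (x, θ) ⟨hx, uIoc_subset_uIcc hθ⟩

lemma exists_radius_of_hasCompactSupport {φ : E2 → ℝ} (hφ : HasCompactSupport φ) (R : ℝ) :
    ∃ M, R ≤ M ∧ ∀ w, M ≤ ‖w‖ → w ∉ tsupport φ := by
  obtain ⟨K, hK⟩ := hφ.isCompact.isBounded.exists_norm_le
  refine ⟨max R (K + 1), le_max_left _ _, fun w hw hmem ↦ ?_⟩
  linarith [hK w hmem, (le_max_right R (K + 1)).trans hw]

lemma QEinf_eq_polar (n : ℕ) {φ : E2 → ℝ} (hφ : ContDiff ℝ 1 φ) {M : ℝ} (hM : 0 ≤ M)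
    (hφM : ∀ w, M ≤ ‖w‖ → w ∉ tsupport φ) :
    QEinf n φ = ∫ r in 0..M, r * ((∫ θ in -π..π, radialDeriv φ r θ ^ 2) +
      (∫ θ in -π..π, angularDeriv φ r θ ^ 2) -
        potential n r * ∫ θ in -π..π, φ (polarPt r θ) ^ 2) := by
  have hgrad : Continuous (gradient φ) :=
    (InnerProductSpace.toDual ℝ E2).symm.continuous.comp (hφ.continuous_fderiv one_ne_zero)
  have hφc := hφ.continuous
  have hVc := continuous_potential n
  change ∫ w, (‖gradient φ w‖ ^ 2 - potential n ‖w‖ * φ w ^ 2) = _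
  rw [integral_eq_polar (by fun_prop) hM fun w hw ↦ ?_]
  · refine intervalIntegral.integral_congr fun r hr ↦ ?_
    rw [uIcc_of_le hM] at hr
    simp only [norm_gradient_polarPt_sq, norm_polarPt hr.1]
    rw [intervalIntegral.integral_const_mul, intervalIntegral.integral_sub
        (Continuous.intervalIntegrable (by fun_prop) _ _)
        (Continuous.intervalIntegrable (by fun_prop) _ _),
      intervalIntegral.integral_add (Continuous.intervalIntegrable (by fun_prop) _ _)
        (Continuous.intervalIntegrable (by fun_prop) _ _), intervalIntegral.integral_const_mul]
  · have hfderiv : fderiv ℝ φ w = 0 :=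
      Function.notMem_support.1 fun h ↦ hφM w hw (support_fderiv_subset ℝ h)
    simp [gradient, hfderiv, image_eq_zero_of_notMem_tsupport (hφM w hw)]

/-! ### The upper bound -/

/-- The space `C_c^∞(ℝ²)` over which the index is computed. -/
def testFunctions : Submodule ℝ (E2 → ℝ) where
  carrier := {φ | ContDiff ℝ (⊤ : ℕ∞) φ ∧ HasCompactSupport φ}
  add_mem' hφ hψ := ⟨hφ.1.add hψ.1, hφ.2.add hψ.2⟩
  zero_mem' := ⟨contDiff_const, HasCompactSupport.zero⟩
  smul_mem' c _ hφ := ⟨contDiff_const.smul hφ.1, hφ.2.smul_left (f := fun _ ↦ c)⟩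

section IndexBounds

variable {F : Type*} [AddCommGroup F] [Module ℝ F] [FiniteDimensional ℝ F] {n : ℕ}

open Module

lemma indcE_le_finrank (T : testFunctions →ₗ[ℝ] F)
    (hT : ∀ φ, T φ = 0 → 0 ≤ QEinf n φ) : indcE n ≤ finrank ℝ F := by
  refine sSup_le ?_
  rintro _ ⟨V, -, hV, hneg, rfl⟩
  have hle : V ≤ testFunctions := hV
  have hinj : Function.Injective (T ∘ₗ Submodule.inclusion hle) := by
    refine (injective_iff_map_eq_zero _).2 fun φ hφ ↦ ?_
    by_contra hne
    have hnonneg : 0 ≤ QEinf n φ := hT (Submodule.inclusion hle φ) hφ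
    exact (hneg φ φ.2 (Submodule.coe_eq_zero.not.2 hne)).not_ge hnonneg
  have hrank : finrank ℝ V ≤ finrank ℝ F := LinearMap.finrank_le_finrank_of_injective hinj
  exact Nat.cast_le.2 hrank

lemma QEinf_zero (n : ℕ) : QEinf n 0 = 0 := by
  have hgrad (w : E2) : gradient (0 : E2 → ℝ) w = 0 := by simp [gradient]
  simp [QEinf, hgrad]

lemma finrank_le_indcE (L : F →ₗ[ℝ] testFunctions)
    (hL : ∀ x ≠ 0, QEinf n (L x) < 0) : (finrank ℝ F : ℕ∞) ≤ indcE n := by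
  have hinj : Function.Injective (testFunctions.subtype ∘ₗ L) := by
    refine (injective_iff_map_eq_zero _).2 fun x hx ↦ ?_
    by_contra hne
    have hneg := hL x hne
    rw [show (L x : E2 → ℝ) = 0 from hx, QEinf_zero] at hneg
    exact hneg.false
  refine le_sSup ⟨LinearMap.range (testFunctions.subtype ∘ₗ L), inferInstance, ?_, ?_, ?_⟩
  · rintro _ ⟨x, rfl⟩
    exact (L x).2
  · rintro _ ⟨x, rfl⟩ hx
    exact hL x fun h ↦ hx (by rw [h, map_zero])
  · rw [LinearMap.finrank_range_of_inj hinj]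

end IndexBounds

lemma continuous_hartley_param {F : ℝ → ℝ → ℝ} (hF : Continuous F.uncurry) (m : ℤ) :
    Continuous fun r ↦ hartley (F r) m :=
  intervalIntegral.continuous_parametric_intervalIntegral_of_continuous'
    (f := fun r θ ↦ F r θ * cas m θ) (hF.mul (by fun_prop)) _ _

lemma continuous_tailInner_param {F : ℝ → ℝ → ℝ} (hF : Continuous F.uncurry) (s : Finset ℤ) :
    Continuous fun r ↦ tailInner s (F r) (F r) := by
  have hcoeff (m : ℤ) := continuous_hartley_param hF m
  have h_int := intervalIntegral.continuous_parametric_intervalIntegral_of_continuous'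
    (μ := volume) (f := fun r θ ↦ F r θ * F r θ) (hF.mul hF) (-π) π
  exact h_int.sub (by fun_prop)

section RadialDependence

variable {φ : E2 → ℝ} (hφ : ContDiff ℝ 1 φ)

include hφ

lemma hasDerivAt_hartley_comp_polarPt (m : ℤ) (r : ℝ) :
    HasDerivAt (fun r ↦ hartley (φ ∘ polarPt r) m) (hartley (radialDeriv φ r) m) r := by
  have hφc := hφ.continuous
  exact hasDerivAt_integral_param (F := fun r θ ↦ φ (polarPt r θ) * cas m θ)
    (F' := fun r θ ↦ radialDeriv φ r θ * cas m θ) (by fun_prop)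
    (by unfold Function.uncurry; fun_prop)
    (fun r θ ↦ (hasDerivAt_comp_polarPt_radius hφ r θ).mul_const _) _ _ r

lemma hasDerivAt_tailInner_comp_polarPt (s : Finset ℤ) (r : ℝ) :
    HasDerivAt (fun r ↦ tailInner s (φ ∘ polarPt r) (φ ∘ polarPt r))
      (2 * tailInner s (radialDeriv φ r) (φ ∘ polarPt r)) r := by
  have hφc := hφ.continuous
  have h_int := hasDerivAt_integral_param (F := fun r θ ↦ φ (polarPt r θ) * φ (polarPt r θ))
    (F' := fun r θ ↦ 2 * (radialDeriv φ r θ * φ (polarPt r θ))) (by fun_prop)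
    (by unfold Function.uncurry; fun_prop)
    (fun r θ ↦ by
      have hrad := hasDerivAt_comp_polarPt_radius hφ r θ
      convert! hrad.mul hrad using 1
      ring) (-π) π r
  convert! h_int.sub (HasDerivAt.fun_sum fun m (_ : m ∈ s) ↦
    (hasDerivAt_hartley_comp_polarPt hφ m r).mul (hasDerivAt_hartley_comp_polarPt hφ m r)) using 1
  rw [tailInner, mul_sub, intervalIntegral.integral_const_mul, Finset.mul_sum]
  congr 1
  exact Finset.sum_congr rfl fun m _ ↦ by ring

lemma QEinf_eq_sum_add_tail (n : ℕ) (s : Finset ℤ) {M : ℝ} (hM : 0 ≤ M)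
    (hφM : ∀ w, M ≤ ‖w‖ → w ∉ tsupport φ) :
    QEinf n φ = (∑ m ∈ s, ∫ r in 0..M, r * (hartley (radialDeriv φ r) m ^ 2 -
        potential n r * hartley (φ ∘ polarPt r) m ^ 2)) +
      ∫ r in 0..M, r * (tailInner s (radialDeriv φ r) (radialDeriv φ r) +
        (∫ θ in -π..π, angularDeriv φ r θ ^ 2) -
          potential n r * tailInner s (φ ∘ polarPt r) (φ ∘ polarPt r)) := by
  have hφc := hφ.continuous
  have hVc := continuous_potential n
  have huc : Continuous (radialDeriv φ).uncurry := by unfold Function.uncurry; fun_prop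
  have hfc : Continuous (fun r ↦ φ ∘ polarPt r).uncurry := by unfold Function.uncurry; fun_prop
  have hucoeff (m : ℤ) := continuous_hartley_param huc m
  have hfcoeff (m : ℤ) := continuous_hartley_param hfc m
  have hutail := continuous_tailInner_param huc s
  have hftail := continuous_tailInner_param hfc s
  rw [QEinf_eq_polar n hφ hM hφM, ← intervalIntegral.integral_finsetSum
      fun m _ ↦ Continuous.intervalIntegrable (by fun_prop) _ _,
    ← intervalIntegral.integral_add (Continuous.intervalIntegrable (by fun_prop) _ _)
      (Continuous.intervalIntegrable (by fun_prop) _ _)]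
  refine intervalIntegral.integral_congr fun r _ ↦ ?_
  simp only [tailInner_self, ← Finset.mul_sum, Finset.sum_sub_distrib, Function.comp_apply]
  ring

lemma integral_tail_nonneg {n : ℕ} (hn : n ≠ 0) {M : ℝ} (hM : 0 ≤ M)
    (hφM : ∀ θ, φ (polarPt M θ) = 0) :
    0 ≤ ∫ r in 0..M, r *
      (tailInner (lowFreq n) (radialDeriv φ r) (radialDeriv φ r) +
        (∫ θ in -π..π, angularDeriv φ r θ ^ 2) -
          potential n r * tailInner (lowFreq n) (φ ∘ polarPt r) (φ ∘ polarPt r)) := by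
  have hφc := hφ.continuous
  have hfr (r : ℝ) : Continuous (φ ∘ polarPt r) := by fun_prop
  have hur (r : ℝ) : Continuous (radialDeriv φ r) := by fun_prop
  have hwirtinger (r : ℝ) : n ^ 2 * tailInner (lowFreq n) (φ ∘ polarPt r) (φ ∘ polarPt r) ≤
      r ^ 2 * ∫ θ in -π..π, angularDeriv φ r θ ^ 2 := by
    have hle := sq_mul_tailInner_le_integral_deriv_sq (hasDerivAt_comp_polarPt_angle hφ r)
      (by fun_prop) (by rw [polarPt_pi]) n
    simp_rw [mul_pow, intervalIntegral.integral_const_mul] at hle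
    exact hle
  refine radialForm_nonneg_of_sq_mul_le n hM
    (continuous_tailInner_param (by unfold Function.uncurry; fun_prop) _)
    (intervalIntegral.continuous_parametric_intervalIntegral_of_continuous'
      (f := fun r θ ↦ angularDeriv φ r θ ^ 2) (by unfold Function.uncurry; fun_prop) _ _)
    (hasDerivAt_tailInner_comp_polarPt hφ _) (fun r l ↦ ?_) hwirtinger ?_ ?_
  · rw [← tailInner_add_smul_self _ (hur r) (hfr r)]
    exact tailInner_self_nonneg _ (by fun_prop)
  · have hn2 : (0 : ℝ) < n ^ 2 := by positivity
    have hle := hwirtinger 0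
    rw [zero_pow two_ne_zero, zero_mul] at hle
    exact le_antisymm (nonpos_of_mul_nonpos_right hle hn2) (tailInner_self_nonneg _ (hfr 0))
  · have hzero : φ ∘ polarPt M = 0 := funext hφM
    rw [hzero]
    simp [tailInner, hartley]

lemma QEinf_nonneg_of_hartley_eq_zero {n : ℕ} (hn : n ≠ 0) (hc : HasCompactSupport φ)
    (h1 : ∀ m ∈ lowFreq n, hartley (φ ∘ polarPt 1) m = 0) : 0 ≤ QEinf n φ := by
  obtain ⟨M, hM1, hM⟩ := exists_radius_of_hasCompactSupport hc 1
  have hM0 : 0 ≤ M := zero_le_one.trans hM1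
  have hφM (θ : ℝ) : φ (polarPt M θ) = 0 :=
    image_eq_zero_of_notMem_tsupport (hM _ (norm_polarPt hM0 θ).ge)
  rw [QEinf_eq_sum_add_tail hφ n (lowFreq n) hM0 hM]
  refine add_nonneg (Finset.sum_nonneg fun m hm ↦ ?_) (integral_tail_nonneg hφ hn hM0 hφM)
  refine radialForm_nonneg_of_eq_zero_one hn hM1 (hasDerivAt_hartley_comp_polarPt hφ m)
    (continuous_hartley_param (by unfold Function.uncurry; fun_prop) m) (h1 m hm) ?_
  simp [hartley, hφM]

end RadialDependence

/-- The Hartley coefficients, at the frequencies in `s`, of the restriction of a test function to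
the unit circle. -/
def circleHartley (s : Finset ℤ) : testFunctions →ₗ[ℝ] (s → ℝ) where
  toFun φ m := hartley (φ ∘ polarPt 1) m
  map_add' φ ψ := by
    have hφ := φ.2.1.continuous
    have hψ := ψ.2.1.continuous
    ext m
    have hadd := hartley_add_smul (by fun_prop : Continuous (φ.1 ∘ polarPt 1))
      (by fun_prop : Continuous (ψ.1 ∘ polarPt 1)) 1 m
    rwa [one_smul, one_mul] at hadd
  map_smul' l φ := by
    ext m
    simp [hartley, mul_assoc]

lemma indcE_le {n : ℕ} (hn : n ≠ 0) : indcE n ≤ (2 * n - 1 : ℕ) := by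
  have hle := indcE_le_finrank (n := n) (circleHartley (lowFreq n)) fun φ hφ ↦
    QEinf_nonneg_of_hartley_eq_zero (φ.2.1.of_le (by norm_cast)) hn φ.2.2
      fun m hm ↦ congrFun hφ ⟨m, hm⟩
  rwa [Module.finrank_fintype_fun_eq_card, Fintype.card_coe, card_lowFreq] at hle

/-! ### The lower bound -/

/-- A bump function equal to `1` on `[-1, 1]` and to `0` outside `(-2, 2)`. -/
def logBump : ContDiffBump (0 : ℝ) := ⟨1, 2, one_pos, one_lt_two⟩

/-- The cutoff `logBump (log |r| / C)`, set to `0` at `r = 0`, where the convention `log 0 = 0`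
would give `1`. -/
def logCutoff (C : ℝ) : ℝ → ℝ := ({0}ᶜ : Set ℝ).indicator fun r ↦ logBump (log r / C)

lemma logCutoff_eventuallyEq (C : ℝ) {r : ℝ} (hr : r ≠ 0) :
    logCutoff C =ᶠ[𝓝 r] fun r ↦ logBump (log r / C) := by
  filter_upwards [isOpen_ne.mem_nhds hr] with x hx using indicator_of_mem hx _

lemma mul_deriv_logCutoff (C : ℝ) {r : ℝ} (hr : r ≠ 0) :
    r * deriv (logCutoff C) r = deriv logBump (log r / C) / C := by
  have hbump : HasDerivAt logBump (deriv logBump (log r / C)) (log r / C) :=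
    (logBump.contDiff.differentiable one_ne_zero _).hasDerivAt
  have hcomp : HasDerivAt (fun r ↦ logBump (log r / C))
      (deriv logBump (log r / C) * (r⁻¹ / C)) r :=
    HasDerivAt.comp (h₂ := logBump) r hbump ((hasDerivAt_log hr).div_const C)
  rw [(logCutoff_eventuallyEq C hr).deriv_eq, hcomp.deriv]
  field_simp

section LogCutoff

variable {C : ℝ} (hC : 0 < C)

include hC

lemma logCutoff_eq_zero {r : ℝ} (hr : r ≠ 0) (hlog : 2 * C ≤ |log r|) : logCutoff C r = 0 := by
  refine (logCutoff_eventuallyEq C hr).self_of_nhds.trans (logBump.zero_of_le_dist ?_)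
  rwa [dist_zero_right, norm_eq_abs, abs_div, abs_of_pos hC, le_div_iff₀ hC]

lemma logCutoff_eq_one {r : ℝ} (hr : r ≠ 0) (hlog : |log r| ≤ C) : logCutoff C r = 1 := by
  refine (logCutoff_eventuallyEq C hr).self_of_nhds.trans (logBump.one_of_mem_closedBall ?_)
  rw [mem_closedBall_zero_iff, norm_eq_abs, abs_div, abs_of_pos hC]
  exact div_le_one_of_le₀ hlog hC.le

lemma logCutoff_eventuallyEq_zero : logCutoff C =ᶠ[𝓝 0] 0 := by
  filter_upwards [Metric.ball_mem_nhds (0 : ℝ) (exp_pos (-(2 * C)))] with r hr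
  rcases eq_or_ne r 0 with rfl | hr0
  · simp [logCutoff]
  · rw [mem_ball_zero_iff, norm_eq_abs, ← log_lt_iff_lt_exp (abs_pos.2 hr0), log_abs] at hr
    exact logCutoff_eq_zero hC hr0 (le_abs.2 (.inr (by linarith)))

lemma contDiff_logCutoff : ContDiff ℝ ∞ (logCutoff C) := by
  refine contDiff_iff_contDiffAt.2 fun r ↦ ?_
  rcases eq_or_ne r 0 with rfl | hr
  · exact contDiffAt_const.congr_of_eventuallyEq (logCutoff_eventuallyEq_zero hC)
  · exact (logBump.contDiffAt.comp r ((contDiffAt_log.2 hr).div_const C)).congr_of_eventuallyEq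
      (logCutoff_eventuallyEq C hr)

lemma hasCompactSupport_logCutoff : HasCompactSupport (logCutoff C) := by
  refine HasCompactSupport.intro (isCompact_closedBall 0 (exp (2 * C))) fun r hr ↦ ?_
  rw [mem_closedBall_zero_iff, not_le, norm_eq_abs] at hr
  have hr0 : 0 < |r| := (exp_pos _).trans hr
  rw [← lt_log_iff_exp_lt hr0, log_abs] at hr
  exact logCutoff_eq_zero hC (abs_pos.1 hr0) (hr.le.trans (le_abs_self _))

end LogCutoff

/-- A cutoff that is a bump function of `log r` has `r χ'(r)` as small as desired. -/
lemma exists_log_cutoff {ε : ℝ} (hε : 0 < ε) (R : ℝ) :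
    ∃ χ : ℝ → ℝ, ContDiff ℝ ∞ χ ∧ HasCompactSupport χ ∧ χ =ᶠ[𝓝 0] 0 ∧
      (∀ r, |r * deriv χ r| ≤ ε) ∧ ∀ r ∈ Icc 1 R, χ r = 1 := by
  obtain ⟨K, hK⟩ := logBump.hasCompactSupport.deriv.exists_bound_of_continuous
    ((logBump.contDiff (n := 1)).continuous_deriv le_rfl)
  obtain ⟨C, hC, hRC, hKC⟩ : ∃ C, 0 < C ∧ log R ≤ C ∧ K ≤ ε * C := by
    refine ⟨max 1 (max (log R) (K / ε)), by positivity, by simp, ?_⟩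
    rw [← div_le_iff₀' hε]
    simp
  refine ⟨logCutoff C, contDiff_logCutoff hC, hasCompactSupport_logCutoff hC,
    logCutoff_eventuallyEq_zero hC, fun r ↦ ?_, fun r hr ↦ ?_⟩
  · rcases eq_or_ne r 0 with rfl | hr
    · simpa using hε.le
    · rw [mul_deriv_logCutoff C hr, abs_div, abs_of_pos hC, div_le_iff₀ hC]
      exact (hK _).trans hKC
  · have hr0 : 0 < r := one_pos.trans_le hr.1
    refine logCutoff_eq_one hC hr0.ne' ?_
    rw [abs_of_nonneg (log_nonneg hr.1)]
    exact (log_le_log hr0 hr.2).trans hRC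

/-- The density in `r` of the form `Qⁿ` on a function `h(r) cas(mθ)`. -/
def radialDensity (n : ℕ) (m : ℤ) (h : ℝ → ℝ) (r : ℝ) : ℝ :=
  r * deriv h r ^ 2 + m ^ 2 * (h r ^ 2 / r) - r * potential n r * h r ^ 2

lemma continuous_sq_div_id {h : ℝ → ℝ} (hh : Differentiable ℝ h) (h0 : h 0 = 0) :
    Continuous fun r ↦ h r ^ 2 / r := by
  refine continuous_iff_continuousAt.2 fun r ↦ ?_
  rcases eq_or_ne r 0 with rfl | hr
  · exact continuousAt_sq_div_of_hasDerivAt (hh 0) (hasDerivAt_id 0) one_ne_zero h0 rfl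
  · exact ((hh r).continuousAt.pow 2).div continuousAt_id hr

lemma continuous_radialDensity (n : ℕ) (m : ℤ) {h : ℝ → ℝ} (hh : ContDiff ℝ 1 h) (h0 : h 0 = 0) :
    Continuous (radialDensity n m h) := by
  have hc := hh.continuous
  have hVc := continuous_potential n
  have hdiv := continuous_sq_div_id (hh.differentiable one_ne_zero) h0
  unfold radialDensity
  fun_prop

/-- The radial ground state `sechLog n` satisfies `h' = -n tanhLog n h / r`, so by completing the
square only the derivative of the cutoff `χ` and the gap `n² - m²` survive, up to a total
derivative. -/
lemma hasDerivAt_tanhLog_mul_sq (n : ℕ) (m : ℤ) {χ : ℝ → ℝ} {r : ℝ} (hχ : DifferentiableAt ℝ χ r)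
    (hr : r ≠ 0) :
    HasDerivAt (fun r ↦ n * (tanhLog n r * (χ r * sechLog n r) ^ 2))
      (((r * deriv χ r) ^ 2 - (n ^ 2 - m ^ 2) * χ r ^ 2) * (sechLog n r ^ 2 / r) -
        radialDensity n m (fun r ↦ χ r * sechLog n r) r) r := by
  have hh := hχ.hasDerivAt.mul (hasDerivAt_sechLog n hr)
  have hh_deriv : deriv (fun r ↦ χ r * sechLog n r) r = _ := hh.deriv
  convert! ((hasDerivAt_tanhLog n hr).mul (hh.pow 2)).const_mul (n : ℝ) using 1
  rw [radialDensity, hh_deriv, mul_potential n hr]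
  simp only [Pi.mul_apply, Pi.pow_apply, Nat.cast_ofNat, Nat.add_one_sub_one, pow_one]
  field_simp
  linear_combination (n : ℝ) ^ 2 * χ r ^ 2 * sechLog n r ^ 2 * sechLog_sq_add_tanhLog_sq n r

lemma integral_radialDensity_le {n : ℕ} (hn : n ≠ 0) (m : ℤ) {χ : ℝ → ℝ} {u v c : ℝ} (hu : 0 ≤ u)
    (huv : u ≤ v) (hχ : ContDiff ℝ 1 χ) (hχ0 : χ 0 = 0)
    (hc : ∀ r ∈ Ioo u v, (r * deriv χ r) ^ 2 - (n ^ 2 - m ^ 2) * χ r ^ 2 ≤ c) :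
    ∫ r in u..v, radialDensity n m (fun r ↦ χ r * sechLog n r) r ≤
      (c / n * tanhLog n v - n * (tanhLog n v * (χ v * sechLog n v) ^ 2)) -
        (c / n * tanhLog n u - n * (tanhLog n u * (χ u * sechLog n u) ^ 2)) := by
  have hχc := hχ.continuous
  have hTc := continuous_tanhLog n
  have hSc := continuous_sechLog n
  have hderiv {r : ℝ} (hr : r ∈ Ioo u v) :=
    ((hasDerivAt_tanhLog n (hu.trans_lt hr.1).ne').const_mul (c / n)).sub
      (hasDerivAt_tanhLog_mul_sq n m (hχ.differentiable one_ne_zero r) (hu.trans_lt hr.1).ne')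
  refine intervalIntegral.integral_le_sub_of_hasDeriv_right_of_le
    (g := fun r ↦ c / n * tanhLog n r - n * (tanhLog n r * (χ r * sechLog n r) ^ 2)) huv
    (by fun_prop) (fun r hr ↦ (hderiv hr).hasDerivWithinAt)
    (continuous_radialDensity n m (hχ.mul (contDiff_sechLog n)) (by simp [hχ0])).integrableOn_Icc
    fun r hr ↦ ?_
  have hS : 0 ≤ sechLog n r ^ 2 / r := div_nonneg (sq_nonneg _) (hu.trans_lt hr.1).le
  have hcancel : c / n * (n * sechLog n r ^ 2 / r) = c * (sechLog n r ^ 2 / r) := by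
    field_simp
  linarith [mul_le_mul_of_nonneg_right (hc r hr) hS]

lemma integral_radialDensity_neg {n : ℕ} {m : ℤ} (hm : m ∈ lowFreq n) {χ : ℝ → ℝ} {M : ℝ}
    (hM : 2 ≤ M) (hχ : ContDiff ℝ 1 χ) (hχ0 : χ 0 = 0) (hχM : χ M = 0)
    (hχ' : ∀ r, |r * deriv χ r| ≤ 1 / 2) (hχ1 : ∀ r ∈ Icc 1 2, χ r = 1) :
    ∫ r in 0..M, radialDensity n m (fun r ↦ χ r * sechLog n r) r < 0 := by
  have hn : n ≠ 0 := by
    rintro rfl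
    simp at hm
  have hsq (r : ℝ) : (r * deriv χ r) ^ 2 ≤ 1 / 4 := by
    rw [← sq_abs]
    exact (pow_le_pow_left₀ (abs_nonneg _) (hχ' r) 2).trans_eq (by norm_num)
  have hpos (r : ℝ) : χ r ^ 2 ≤ (n ^ 2 - m ^ 2) * χ r ^ 2 :=
    le_mul_of_one_le_left (sq_nonneg _) (one_le_sq_sub_sq_of_mem_lowFreq hm)
  have hquarter (r : ℝ) : (r * deriv χ r) ^ 2 - (n ^ 2 - m ^ 2) * χ r ^ 2 ≤ 1 / 4 := by
    linarith [hsq r, hpos r, sq_nonneg (χ r)]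
  have hin := integral_radialDensity_le hn m le_rfl zero_le_one hχ hχ0 fun r _ ↦ hquarter r
  have hmid := integral_radialDensity_le (c := -(3 / 4)) hn m zero_le_one one_le_two hχ hχ0
    fun r hr ↦ by
      have hone := hpos r
      rw [hχ1 r (Ioo_subset_Icc_self hr), one_pow] at hone ⊢
      linarith [hsq r]
  have hout := integral_radialDensity_le hn m zero_le_two hM hχ hχ0 fun r _ ↦ hquarter r
  have h_int := continuous_radialDensity n m (hχ.mul (contDiff_sechLog n)) (by simp [hχ0])
  rw [← intervalIntegral.integral_add_adjacent_intervals (h_int.intervalIntegrable 0 2)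
      (h_int.intervalIntegrable 2 M),
    ← intervalIntegral.integral_add_adjacent_intervals (h_int.intervalIntegrable 0 1)
      (h_int.intervalIntegrable 1 2)]
  rw [hχ0, tanhLog_zero hn, tanhLog_one] at hin
  rw [tanhLog_one] at hmid
  rw [hχM] at hout
  have hT : (1 / 4 - tanhLog n 2 + 1 / 4 * tanhLog n M) / n < 0 :=
    div_neg_of_neg_of_pos (by linarith [three_fifths_le_tanhLog_two hn, tanhLog_le_one n M])
      (by positivity)
  have hsum : (1 / 4 - tanhLog n 2 + 1 / 4 * tanhLog n M) / n =
      1 / 4 / n + -(3 / 4) / n * tanhLog n 2 + 1 / 4 / n * (tanhLog n M - tanhLog n 2) := by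
    ring
  linarith

/-- The function `h(r) cas(mθ)` in Cartesian coordinates: `cas(mθ)` is, up to normalization, the
real part of `(1 - i)(z / |z|)ᵐ`. -/
def angularMode (h : ℝ → ℝ) (m : ℤ) (w : E2) : ℝ :=
  h ‖w‖ * (((1 - Complex.I) * (‖w‖⁻¹ • planeIso.symm w) ^ m).re / √(2 * π))

lemma angularMode_polarPt {h : ℝ → ℝ} (h0 : h 0 = 0) (m : ℤ) {r : ℝ} (hr : 0 ≤ r) (θ : ℝ) :
    angularMode h m (polarPt r θ) = h r * cas m θ := by
  rcases hr.eq_or_lt with rfl | hr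
  · rw [angularMode, norm_polarPt le_rfl, h0, zero_mul, zero_mul]
  · have hexp : (r⁻¹ • planeIso.symm (polarPt r θ)) ^ m =
        Complex.exp ((m * θ : ℝ) * Complex.I) := by
      rw [polarPt, planeIso.symm_apply_apply, circleMap_zero, Complex.real_smul, Complex.ofReal_inv,
        inv_mul_cancel_left₀ (Complex.ofReal_ne_zero.2 hr.ne'), ← Complex.exp_int_mul]
      push_cast
      rw [mul_assoc]
    have hre : ((1 - Complex.I) * Complex.exp ((m * θ : ℝ) * Complex.I)).re =
        cos (m * θ) + sin (m * θ) := by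
      rw [Complex.mul_re, Complex.exp_ofReal_mul_I_re, Complex.exp_ofReal_mul_I_im]
      simp
    rw [angularMode, norm_polarPt hr.le, hexp, hre, cas]

lemma contDiff_angularMode {k : ℕ∞} {h : ℝ → ℝ} (hh : ContDiff ℝ k h) (h0 : h =ᶠ[𝓝 0] 0) (m : ℤ) :
    ContDiff ℝ k (angularMode h m) := by
  refine contDiff_iff_contDiffAt.2 fun w ↦ ?_
  rcases eq_or_ne w 0 with rfl | hw
  · refine (contDiffAt_const (c := (0 : ℝ))).congr_of_eventuallyEq ?_
    have hnorm : Tendsto norm (𝓝 (0 : E2)) (𝓝 0) := tendsto_norm_zero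
    filter_upwards [hnorm.eventually h0] with w hw
    rw [angularMode, hw, Pi.zero_apply, zero_mul]
  · have hnorm : ContDiffAt ℝ k (fun w : E2 ↦ ‖w‖) w := contDiffAt_norm ℝ hw
    have hnorm_ne : ‖w‖ ≠ 0 := norm_ne_zero_iff.2 hw
    have hunit : ContDiffAt ℝ k (fun w : E2 ↦ ‖w‖⁻¹ • planeIso.symm w) w :=
      (hnorm.inv hnorm_ne).smul planeIso.symm.contDiff.contDiffAt
    have hunit_ne : ‖w‖⁻¹ • planeIso.symm w ≠ 0 :=
      smul_ne_zero (inv_ne_zero hnorm_ne) ((map_ne_zero_iff _ planeIso.symm.injective).2 hw)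
    have hzpow : ContDiffAt ℝ k (fun z : ℂ ↦ z ^ m) (‖w‖⁻¹ • planeIso.symm w) :=
      (analyticAt_id.zpow hunit_ne).contDiffAt
    exact (hh.contDiffAt.comp w hnorm).mul ((Complex.reCLM.contDiff.contDiffAt.comp w
      (contDiffAt_const.mul (hzpow.comp w hunit))).div_const _)

lemma hasCompactSupport_angularMode {h : ℝ → ℝ} (hh : HasCompactSupport h) (m : ℤ) :
    HasCompactSupport (angularMode h m) := by
  rw [hasCompactSupport_iff_eventuallyEq, coclosedCompact_eq_cocompact] at hh ⊢
  filter_upwards [tendsto_norm_cocompact_atTop.eventually (atTop_le_cocompact hh)] with w hw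
  rw [angularMode, hw, Pi.zero_apply, zero_mul, Pi.zero_apply]

section Modes

variable {ι : Type*} {s : Finset ι} {c : ι → ℝ} {k : ι → ℤ} {h : ℝ → ℝ} {φ : E2 → ℝ}

lemma radialDeriv_of_eq_sum_cas (hφ : ContDiff ℝ 1 φ) (hh : Differentiable ℝ h)
    (hφh : ∀ r θ, 0 ≤ r → φ (polarPt r θ) = h r * ∑ i ∈ s, c i * cas (k i) θ) {r : ℝ} (hr : 0 < r)
    (θ : ℝ) : radialDeriv φ r θ = deriv h r * ∑ i ∈ s, c i * cas (k i) θ := by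
  refine (hasDerivAt_comp_polarPt_radius hφ r θ).unique
    (((hh r).hasDerivAt.mul_const _).congr_of_eventuallyEq ?_)
  filter_upwards [lt_mem_nhds hr] with x hx using hφh x θ hx.le

lemma mul_angularDeriv_of_eq_sum_cas (hφ : ContDiff ℝ 1 φ)
    (hφh : ∀ r θ, 0 ≤ r → φ (polarPt r θ) = h r * ∑ i ∈ s, c i * cas (k i) θ) {r : ℝ} (hr : 0 ≤ r)
    (θ : ℝ) : r * angularDeriv φ r θ = h r * ∑ i ∈ s, c i * k i * cas (-k i) θ := by
  refine (hasDerivAt_comp_polarPt_angle hφ r θ).unique ?_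
  simp_rw [hφh r _ hr]
  refine HasDerivAt.const_mul _ (HasDerivAt.fun_sum fun i _ ↦ ?_)
  simpa only [mul_assoc] using (hasDerivAt_cas (k i) θ).const_mul (c i)

lemma QEinf_of_eq_sum_cas (n : ℕ) (hk : InjOn k s) (hφ : ContDiff ℝ 1 φ) (hh : ContDiff ℝ 1 h)
    (hφh : ∀ r θ, 0 ≤ r → φ (polarPt r θ) = h r * ∑ i ∈ s, c i * cas (k i) θ) (h0 : h 0 = 0)
    {M : ℝ} (hM : 0 ≤ M) (hφM : ∀ w, M ≤ ‖w‖ → w ∉ tsupport φ) :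
    QEinf n φ = ∑ i ∈ s, c i ^ 2 * ∫ r in 0..M, radialDensity n (k i) h r := by
  simp_rw [← intervalIntegral.integral_const_mul]
  rw [QEinf_eq_polar n hφ hM hφM, ← intervalIntegral.integral_finsetSum fun i _ ↦
    ((continuous_radialDensity n (k i) hh h0).const_mul _).intervalIntegrable _ _]
  refine intervalIntegral.integral_congr_Ioo_of_le hM fun r hr ↦ ?_
  have hrad : ∫ θ in -π..π, radialDeriv φ r θ ^ 2 = deriv h r ^ 2 * ∑ i ∈ s, c i ^ 2 := by
    simp_rw [radialDeriv_of_eq_sum_cas hφ (hh.differentiable one_ne_zero) hφh hr.1, mul_pow]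
    rw [intervalIntegral.integral_const_mul, integral_sq_sum_mul_cas s c hk]
  have hval : ∫ θ in -π..π, φ (polarPt r θ) ^ 2 = h r ^ 2 * ∑ i ∈ s, c i ^ 2 := by
    simp_rw [hφh r _ hr.1.le, mul_pow]
    rw [intervalIntegral.integral_const_mul, integral_sq_sum_mul_cas s c hk]
  have hneg : InjOn (fun i ↦ -k i) s := fun i hi j hj h ↦ hk hi hj (neg_injective h)
  have hang : r ^ 2 * ∫ θ in -π..π, angularDeriv φ r θ ^ 2 =
      h r ^ 2 * ∑ i ∈ s, (c i * k i) ^ 2 := by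
    rw [← intervalIntegral.integral_const_mul]
    simp_rw [← mul_pow, mul_angularDeriv_of_eq_sum_cas hφ hφh hr.1.le, mul_pow (h r)]
    rw [intervalIntegral.integral_const_mul,
      integral_sq_sum_mul_cas s (fun i ↦ c i * k i) hneg]
  have hsum : ∑ i ∈ s, c i ^ 2 * radialDensity n (k i) h r =
      (r * deriv h r ^ 2 - r * potential n r * h r ^ 2) * ∑ i ∈ s, c i ^ 2 +
        h r ^ 2 / r * ∑ i ∈ s, (c i * k i) ^ 2 := by
    rw [Finset.mul_sum, Finset.mul_sum, ← Finset.sum_add_distrib]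
    exact Finset.sum_congr rfl fun i _ ↦ by rw [radialDensity]; ring
  have hr0 : r ≠ 0 := hr.1.ne'
  rw [hrad, hval, hsum, div_mul_eq_mul_div, ← hang]
  field_simp
  ring

lemma QEinf_neg_of_eq_sum_cas {n : ℕ} (hk : InjOn k s) (hφ : ContDiff ℝ 1 φ)
    (hφc : HasCompactSupport φ) (hh : ContDiff ℝ 1 h)
    (hφh : ∀ r θ, 0 ≤ r → φ (polarPt r θ) = h r * ∑ i ∈ s, c i * cas (k i) θ) (h0 : h 0 = 0)
    (hneg : ∀ i ∈ s, ∀ᶠ M in atTop, ∫ r in 0..M, radialDensity n (k i) h r < 0)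
    (hc : ∃ i ∈ s, c i ≠ 0) : QEinf n φ < 0 := by
  obtain ⟨R, hR⟩ := eventually_atTop.1
    ((s.eventually_all.2 hneg).and (eventually_ge_atTop 0))
  obtain ⟨M, hRM, hφM⟩ := exists_radius_of_hasCompactSupport hφc R
  obtain ⟨hnegM, hM⟩ := hR M hRM
  rw [QEinf_of_eq_sum_cas n hk hφ hh hφh h0 hM hφM]
  obtain ⟨i, hi, hci⟩ := hc
  exact Finset.sum_neg'
    (fun j hj ↦ mul_nonpos_of_nonneg_of_nonpos (sq_nonneg _) (hnegM j hj).le)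
    ⟨i, hi, mul_neg_of_pos_of_neg (sq_pos_of_ne_zero hci) (hnegM i hi)⟩

end Modes

lemma exists_integral_radialDensity_neg (n : ℕ) :
    ∃ h : ℝ → ℝ, ContDiff ℝ ∞ h ∧ HasCompactSupport h ∧ h =ᶠ[𝓝 0] 0 ∧
      ∀ m ∈ lowFreq n, ∀ᶠ M in atTop, ∫ r in 0..M, radialDensity n m h r < 0 := by
  obtain ⟨χ, hχ, hχc, hχ0, hχ', hχ1⟩ := exists_log_cutoff one_half_pos 2
  refine ⟨fun r ↦ χ r * sechLog n r, hχ.mul (contDiff_sechLog n), hχc.mul_right, ?_, fun m hm ↦ ?_⟩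
  · filter_upwards [hχ0] with r hr
    rw [hr, Pi.zero_apply, zero_mul]
  · rw [hasCompactSupport_iff_eventuallyEq, coclosedCompact_eq_cocompact] at hχc
    filter_upwards [atTop_le_cocompact hχc, eventually_ge_atTop 2] with M hχM hM
    exact integral_radialDensity_neg hm hM (hχ.of_le (by norm_cast)) hχ0.self_of_nhds hχM hχ' hχ1

lemma le_indcE (n : ℕ) : (2 * n - 1 : ℕ) ≤ indcE n := by
  obtain ⟨h, hh, hhc, h0, hneg⟩ := exists_integral_radialDensity_neg n
  let L : (lowFreq n → ℝ) →ₗ[ℝ] testFunctions := Fintype.linearCombination ℝ fun m ↦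
    ⟨angularMode h m, contDiff_angularMode hh h0 m, hasCompactSupport_angularMode hhc m⟩
  have hL (c : lowFreq n → ℝ) (r θ : ℝ) (hr : 0 ≤ r) :
      (L c : E2 → ℝ) (polarPt r θ) = h r * ∑ m, c m * cas m θ := by
    simp only [L, Fintype.linearCombination_apply, Submodule.coe_sum, Submodule.coe_smul,
      Finset.sum_apply, Pi.smul_apply, smul_eq_mul, Finset.mul_sum,
      angularMode_polarPt h0.self_of_nhds _ hr, mul_left_comm (h r)]
  have hle := finrank_le_indcE (n := n) L fun c hc ↦
    QEinf_neg_of_eq_sum_cas Subtype.val_injective.injOn ((L c).2.1.of_le (by norm_cast)) (L c).2.2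
      (hh.of_le (by norm_cast)) (hL c) h0.self_of_nhds (fun m _ ↦ hneg m m.2)
      (by simpa using Function.ne_iff.1 hc)
  rwa [Module.finrank_fintype_fun_eq_card, Fintype.card_coe, card_lowFreq] at hle

end Enneper

theorem enneper5_indc_eq_nine_general {n : ℕ} (hn : n ≠ 0) : indcE n = (2 * n - 1 : ℕ) :=
  le_antisymm (Enneper.indcE_le hn) (Enneper.le_indcE n)

/-- the index of the complete dihedral Enneper surface of order 5 for
compactly supported perturbations equals 9. -/
theorem enneper5_indc_eq_nine : indcE 5 = 9 :=
  enneper5_indc_eq_nine_general (n := 5) (by norm_num)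
end
end

section
/- The modified (bounded-perturbation) index of the complete dihedral Enneper surface of order 5 equals 11: there exists R₀ > 0 such that ind_b(Σ₁⁵(R)) = 11 for every R ≥ R₀; equivalently, ind_b(Σ₁⁵) := lim_{R→∞} ind_b(Σ₁⁵(R)) = 11. -/
noncomputable section
open MeasureTheory Real

/-!
In polar coordinates the angular Fourier modes decouple: `Q` is a sum over `k ∈ ℤ` of quadratic
forms in one radial variable. If `f` solves the radial Jacobi equation at frequency `μ`, then
`ρ = r f' / f` solves a Riccati equation, and the `k`-th form equals the boundary values of
`ρ |c| ^ 2` plus the integral of a square and of `(k ^ 2 - μ ^ 2) |c| ^ 2 / r`.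

The rotationally invariant Jacobi field vanishes only on the unit circle, so a form is nonnegative
on modes vanishing there; the Jacobi field of frequency `n + 1` does not vanish away from the
origin, so the forms with `|k| > n` are nonnegative on every large disc. Vanishing of the modes
`|k| ≤ n` on the unit circle is `2n + 1` real conditions, which bounds the index from above.
Conversely, for the Jacobi field of frequency `n` the boundary value of `ρ` is negative as soon as
`R > 1`, and smooth functions close to it in each mode `|k| ≤ n` span a negative definite space of
dimension `2n + 1`.
-/

lemma neg_pi_lt_pi : -π < π := neg_lt_self pi_pos

/-- The `k`-th complex Fourier coefficient of a real function on the interval `(-π, π]`. -/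
def circleCoeff (p : ℝ → ℝ) (k : ℤ) : ℂ := fourierCoeffOn neg_pi_lt_pi (fun θ => (p θ : ℂ)) k

lemma circleCoeff_eq_integral (p : ℝ → ℝ) (k : ℤ) :
    circleCoeff p k = (1 / (π - -π)) •
      ∫ θ in -π..π, fourier (-k) (θ : AddCircle (π - -π)) * (p θ : ℂ) :=
  fourierCoeffOn_eq_integral _ _ _

@[fun_prop]
lemma continuous_fourier_coe {T : ℝ} (k : ℤ) :
    Continuous fun θ : ℝ => fourier k (θ : AddCircle T) :=
  (fourier k).continuous.comp (AddCircle.continuous_mk' _)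

lemma hasSum_sq_circleCoeff {p : ℝ → ℝ} (hp : Continuous p) :
    HasSum (fun k => ‖circleCoeff p k‖ ^ 2) ((2 * π)⁻¹ * ∫ θ in -π..π, p θ ^ 2) := by
  have hL : MemLp (fun θ => (p θ : ℂ)) 2 (volume.restrict (Set.Ioc (-π) π)) := by
    obtain ⟨C, hC⟩ := (isCompact_Icc (a := -π) (b := π)).exists_bound_of_continuousOn
      hp.continuousOn
    refine MemLp.of_bound (by fun_prop : Continuous fun θ => (p θ : ℂ)).aestronglyMeasurable C ?_
    filter_upwards [ae_restrict_mem measurableSet_Ioc] with θ hθ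
    simpa using hC θ (Set.Ioc_subset_Icc_self hθ)
  simpa only [circleCoeff, Complex.norm_real, norm_eq_abs, sq_abs, smul_eq_mul, sub_neg_eq_add,
    ← two_mul] using hasSum_sq_fourierCoeffOn neg_pi_lt_pi hL

lemma circleCoeff_add {p q : ℝ → ℝ} (hp : Continuous p) (hq : Continuous q) (k : ℤ) :
    circleCoeff (fun θ => p θ + q θ) k = circleCoeff p k + circleCoeff q k := by
  simp only [circleCoeff_eq_integral, Complex.ofReal_add, mul_add]
  rw [intervalIntegral.integral_add, smul_add]
  all_goals exact Continuous.intervalIntegrable (by fun_prop) _ _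

lemma circleCoeff_const_mul (p : ℝ → ℝ) (a : ℝ) (k : ℤ) :
    circleCoeff (fun θ => a * p θ) k = a * circleCoeff p k := by
  simp only [circleCoeff, Complex.ofReal_mul]
  exact fourierCoeffOn.const_mul _ _ _ _

lemma circleCoeff_sum {ι : Type*} (s : Finset ι) {p : ι → ℝ → ℝ}
    (hp : ∀ i ∈ s, Continuous (p i)) (k : ℤ) :
    circleCoeff (fun θ => ∑ i ∈ s, p i θ) k = ∑ i ∈ s, circleCoeff (p i) k := by
  simp only [circleCoeff_eq_integral, Complex.ofReal_sum, Finset.mul_sum]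
  rw [intervalIntegral.integral_finsetSum, Finset.smul_sum]
  intro i hi
  have := hp i hi
  exact Continuous.intervalIntegrable (by fun_prop) _ _

lemma circleCoeff_neg (p : ℝ → ℝ) (k : ℤ) :
    circleCoeff p (-k) = starRingEnd ℂ (circleCoeff p k) := by
  rw [circleCoeff_eq_integral, circleCoeff_eq_integral, Complex.real_smul, Complex.real_smul,
    map_mul, Complex.conj_ofReal, intervalIntegral.integral_of_le neg_pi_lt_pi.le,
    intervalIntegral.integral_of_le neg_pi_lt_pi.le, ← integral_conj]
  simp

lemma circleCoeff_deriv {p p' : ℝ → ℝ} (hp' : Continuous p') (h : ∀ θ, HasDerivAt p (p' θ) θ)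
    (hper : p π = p (-π)) (k : ℤ) : circleCoeff p' k = Complex.I * k * circleCoeff p k := by
  rcases eq_or_ne k 0 with rfl | hk
  · have hmean : ∫ θ in -π..π, (p' θ : ℂ) = 0 := by
      rw [intervalIntegral.integral_ofReal, intervalIntegral.integral_eq_sub_of_hasDerivAt
        (fun x _ => h x) (hp'.intervalIntegrable _ _), hper, sub_self, Complex.ofReal_zero]
    simp [circleCoeff_eq_integral, hmean]
  · have hparts := fourierCoeffOn_of_hasDerivAt neg_pi_lt_pi hk (fun x _ => (h x).ofReal_comp)
      ((by fun_prop : Continuous fun θ => (p' θ : ℂ)).intervalIntegrable (-π) π)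
    rw [circleCoeff, circleCoeff, hparts, hper, sub_self, mul_zero]
    have : (k : ℂ) ≠ 0 := by exact_mod_cast hk
    have : (π : ℂ) ≠ 0 := by exact_mod_cast pi_ne_zero
    field_simp
    push_cast
    ring

lemma continuous_circleCoeff {F : ℝ → ℝ → ℝ} (hF : Continuous F.uncurry) (k : ℤ) :
    Continuous fun x => circleCoeff (F x) k := by
  simp only [circleCoeff_eq_integral]
  have hfourier := (continuous_fourier_coe (T := π - -π) (-k)).comp (continuous_snd (X := ℝ))
  exact (intervalIntegral.continuous_parametric_intervalIntegral_of_continuous' (μ := volume)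
    (f := fun x θ => fourier (-k) (θ : AddCircle (π - -π)) * (F x θ : ℂ))
    (hfourier.mul (Complex.continuous_ofReal.comp hF)) _ _).const_smul (1 / (π - -π))

lemma hasDerivAt_intervalIntegral_of_continuous {E : Type*} [NormedAddCommGroup E]
    [NormedSpace ℝ E] {F F' : ℝ → ℝ → E} {a b : ℝ}
    (hF : Continuous F.uncurry) (hF' : Continuous F'.uncurry)
    (h : ∀ x t, HasDerivAt (fun y => F y t) (F' x t) x) (x : ℝ) :
    HasDerivAt (fun y => ∫ t in a..b, F y t) (∫ t in a..b, F' x t) x := by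
  obtain ⟨C, hC⟩ := ((isCompact_Icc (a := x - 1) (b := x + 1)).prod
    (isCompact_uIcc (a := a) (b := b))).exists_bound_of_continuousOn hF'.continuousOn
  have hc (y : ℝ) : Continuous (F y) := hF.comp (by fun_prop : Continuous fun t => (y, t))
  have hc' : Continuous (F' x) := hF'.comp (by fun_prop : Continuous fun t => (x, t))
  refine (intervalIntegral.hasDerivAt_integral_of_dominated_loc_of_deriv_le
    (s := Set.Icc (x - 1) (x + 1)) (bound := fun _ => C) (Icc_mem_nhds (by simp) (by simp))
    (.of_forall fun y => (hc y).aestronglyMeasurable) ((hc x).intervalIntegrable _ _)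
    hc'.aestronglyMeasurable (.of_forall fun t ht y hy => ?_) (by simp)
    (.of_forall fun t _ y _ => h y t)).2
  exact hC (y, t) ⟨hy, Set.uIoc_subset_uIcc ht⟩

lemma hasDerivAt_circleCoeff {F F' : ℝ → ℝ → ℝ} (hF : Continuous F.uncurry)
    (hF' : Continuous F'.uncurry) (h : ∀ x θ, HasDerivAt (fun y => F y θ) (F' x θ) x) (x : ℝ)
    (k : ℤ) : HasDerivAt (fun y => circleCoeff (F y) k) (circleCoeff (F' x) k) x := by
  simp only [circleCoeff_eq_integral]
  refine HasDerivAt.const_smul (1 / (π - -π)) ?_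
  have hfourier := (continuous_fourier_coe (T := π - -π) (-k)).comp
    (continuous_snd (X := ℝ))
  exact hasDerivAt_intervalIntegral_of_continuous
    (F := fun y θ => fourier (-k) (θ : AddCircle (π - -π)) * (F y θ : ℂ))
    (F' := fun y θ => fourier (-k) (θ : AddCircle (π - -π)) * (F' y θ : ℂ))
    (hfourier.mul (Complex.continuous_ofReal.comp hF))
    (hfourier.mul (Complex.continuous_ofReal.comp hF'))
    (fun x θ => (h x θ).ofReal_comp.const_mul _) x

lemma circleMap_zero_pow_eq_fourier (r θ : ℝ) (m : ℕ) :
    circleMap 0 r θ ^ m = r ^ m * fourier (m : ℤ) (θ : AddCircle (π - -π)) := by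
  have : (π : ℂ) ≠ 0 := by exact_mod_cast pi_ne_zero
  rw [circleMap_zero, mul_pow, ← Complex.exp_nat_mul, fourier_coe_apply]
  congr 2
  push_cast
  field_simp
  ring

lemma circleCoeff_re_mul_circleMap_pow (z : ℂ) (r : ℝ) (m : ℕ) (k : ℤ) :
    circleCoeff (fun θ => (z * circleMap 0 r θ ^ m).re) k =
      r ^ m * (((if k = m then z else 0) + if k = -m then starRingEnd ℂ z else 0) / 2) := by
  have : Fact (0 < π - -π) := ⟨sub_pos.2 neg_pi_lt_pi⟩
  have hre (θ : ℝ) : ((z * circleMap 0 r θ ^ m).re : ℂ) =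
      r ^ m / 2 * (z * fourier (m : ℤ) (θ : AddCircle (π - -π)) +
        starRingEnd ℂ z * fourier (-m : ℤ) (θ : AddCircle (π - -π))) := by
    rw [Complex.re_eq_add_conj, circleMap_zero_pow_eq_fourier, fourier_neg]
    simp only [map_mul, map_pow, Complex.conj_ofReal]
    ring
  have horth (j : ℤ) : (1 / (π - -π)) • ∫ θ in -π..π, fourier (-k) (θ : AddCircle (π - -π)) *
      fourier j (θ : AddCircle (π - -π)) = if k = j then 1 else 0 := by
    have h := fourierCoeff_eq_intervalIntegral (T := π - -π) (fourier j) k (-π)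
    rw [fourierCoeff_fourier, Pi.single_apply, add_sub_cancel] at h
    exact h.symm
  have hi (w : ℂ) (j : ℤ) : IntervalIntegrable (fun θ : ℝ =>
      w * (fourier (-k) (θ : AddCircle (π - -π)) * fourier j (θ : AddCircle (π - -π))))
      volume (-π) π := Continuous.intervalIntegrable (by fun_prop) _ _
  simp only [circleCoeff_eq_integral, hre]
  calc _ = (1 / (π - -π)) • ∫ θ in -π..π, (r ^ m / 2 : ℂ) *
        (z * (fourier (-k) (θ : AddCircle (π - -π)) * fourier m (θ : AddCircle (π - -π))) +
          starRingEnd ℂ z * (fourier (-k) (θ : AddCircle (π - -π)) *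
            fourier (-m) (θ : AddCircle (π - -π)))) := by
        congr 2 with θ
        ring
    _ = _ := by
        rw [intervalIntegral.integral_const_mul, intervalIntegral.integral_add (hi _ _) (hi _ _),
          intervalIntegral.integral_const_mul, intervalIntegral.integral_const_mul,
          ← mul_smul_comm, smul_add, ← mul_smul_comm, ← mul_smul_comm, horth, horth]
        split_ifs <;> ring

@[fun_prop]
lemma continuous_circleMap_uncurry (c : ℂ) : Continuous fun p : ℝ × ℝ => circleMap c p.1 p.2 := by
  unfold circleMap
  fun_prop

lemma hasDerivAt_circleMap_radius (c : ℂ) (r θ : ℝ) :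
    HasDerivAt (fun s => circleMap c s θ) (circleMap 0 1 θ) r := by
  simpa [circleMap] using
    ((hasDerivAt_id r).ofReal_comp.mul_const (Complex.exp (θ * Complex.I))).const_add c

lemma integral_ball_eq_integral_circleMap {E : Type*} [NormedAddCommGroup E] [NormedSpace ℝ E]
    {g : ℂ → E} (hg : Continuous g) {R : ℝ} (hR : 0 ≤ R) :
    ∫ z in Metric.ball 0 R, g z = ∫ r in 0..R, r • ∫ θ in -π..π, g (circleMap 0 r θ) := by
  have hsub : Set.Ioo 0 R ×ˢ Set.Ioo (-π) π ⊆ polarCoord.target :=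
    Set.prod_mono Set.Ioo_subset_Ioi_self subset_rfl
  have hpolar (p : ℝ × ℝ) : Complex.polarCoord.symm p = circleMap 0 p.1 p.2 := by
    rw [Complex.polarCoord_symm_apply, circleMap_zero, Complex.exp_mul_I]
    simp
  have hmem {p : ℝ × ℝ} (hp : p ∈ polarCoord.target) :
      circleMap 0 p.1 p.2 ∈ Metric.ball 0 R ↔ p ∈ Set.Ioo 0 R ×ˢ Set.Ioo (-π) π := by
    obtain ⟨hr : 0 < p.1, hθ : p.2 ∈ Set.Ioo (-π) π⟩ := hp
    simp [abs_of_pos hr, hr, Set.mem_Ioo.1 hθ]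
  have hcont : Continuous fun p : ℝ × ℝ => p.1 • g (circleMap 0 p.1 p.2) := by fun_prop
  calc ∫ z in Metric.ball 0 R, g z
      = ∫ p in Set.Ioo 0 R ×ˢ Set.Ioo (-π) π, p.1 • g (circleMap 0 p.1 p.2) := by
        rw [← integral_indicator Metric.isOpen_ball.measurableSet,
          ← Complex.integral_comp_polarCoord_symm, setIntegral_eq_of_subset_of_forall_sdiff_eq_zero
          polarCoord.open_target.measurableSet hsub]
        · refine setIntegral_congr_fun (measurableSet_Ioo.prod measurableSet_Ioo) fun p hp => ?_
          simp only [hpolar, Set.indicator_of_mem ((hmem (hsub hp)).2 hp)]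
        · rintro p ⟨hp, hp'⟩
          rw [hpolar, Set.indicator_of_notMem (mt (hmem hp).1 hp'), smul_zero]
    _ = ∫ r in Set.Ioo 0 R, ∫ θ in Set.Ioo (-π) π, r • g (circleMap 0 r θ) := by
        rw [Measure.volume_eq_prod, setIntegral_prod]
        rw [← Measure.volume_eq_prod]
        exact (hcont.continuousOn.integrableOn_compact (isCompact_Icc.prod isCompact_Icc)).mono_set
          (Set.prod_mono Set.Ioo_subset_Icc_self Set.Ioo_subset_Icc_self)
    _ = ∫ r in 0..R, r • ∫ θ in -π..π, g (circleMap 0 r θ) := by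
        simp only [intervalIntegral.integral_of_le hR, intervalIntegral.integral_of_le
          neg_pi_lt_pi.le, integral_Ioc_eq_integral_Ioo, integral_smul]

lemma norm_sq_eq_apply_sq_add_apply_mul_I_sq (A : ℂ →L[ℝ] ℝ) {u : ℂ} (hu : ‖u‖ = 1) :
    ‖A‖ ^ 2 = A u ^ 2 + A (u * Complex.I) ^ 2 := by
  obtain ⟨v, rfl⟩ := (InnerProductSpace.toDual ℝ ℂ).surjective A
  have hsq : u.re * u.re + u.im * u.im = 1 := by
    rw [← Complex.normSq_apply, Complex.normSq_eq_norm_sq, hu, one_pow]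
  rw [LinearIsometryEquiv.norm_map, InnerProductSpace.toDual_apply_apply,
    InnerProductSpace.toDual_apply_apply, ← Complex.normSq_eq_norm_sq, Complex.normSq_apply]
  simp only [Complex.inner, Complex.mul_re, Complex.conj_re, Complex.conj_im, Complex.mul_im,
    Complex.I_re, Complex.I_im]
  linear_combination (-(v.re ^ 2 + v.im ^ 2)) * hsq

/-- The derivative of `ψ` in the direction of increasing radius, in polar coordinates. -/
def radialPartial (ψ : ℂ → ℝ) (r θ : ℝ) : ℝ :=
  fderiv ℝ ψ (circleMap 0 r θ) (circleMap 0 1 θ)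

/-- The derivative of `ψ` in the unit direction of increasing angle, in polar coordinates. -/
def angularPartial (ψ : ℂ → ℝ) (r θ : ℝ) : ℝ :=
  fderiv ℝ ψ (circleMap 0 r θ) (circleMap 0 1 θ * Complex.I)

/-- The `k`-th Fourier mode of `ψ`, as a function of the radius. -/
def mode (ψ : ℂ → ℝ) (k : ℤ) (r : ℝ) : ℂ := circleCoeff (fun θ => ψ (circleMap 0 r θ)) k

/-- The quadratic form of the Schrödinger operator `-Δ - V(‖z‖)` on the disc of radius `R`. -/
def schrodingerForm (V : ℝ → ℝ) (R : ℝ) (ψ : ℂ → ℝ) : ℝ :=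
  ∫ z in Metric.ball (0 : ℂ) R, (‖fderiv ℝ ψ z‖ ^ 2 - V ‖z‖ * ψ z ^ 2)

/-- The contribution of the circle of radius `r` to `schrodingerForm`. -/
def circleEnergy (V : ℝ → ℝ) (ψ : ℂ → ℝ) (r : ℝ) : ℝ :=
  r * ∫ θ in -π..π,
    (radialPartial ψ r θ ^ 2 + angularPartial ψ r θ ^ 2 - V r * ψ (circleMap 0 r θ) ^ 2)

/-- The density of the one-dimensional form to which `schrodingerForm` reduces on a function
`c(r) e^{ikθ}`. -/
def radialEnergy {E : Type*} [NormedAddCommGroup E] [NormedSpace ℝ E] (V : ℝ → ℝ) (k : ℝ)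
    (c : ℝ → E) (r : ℝ) : ℝ :=
  r * ‖deriv c r‖ ^ 2 + (k ^ 2 / r - r * V r) * ‖c r‖ ^ 2

section Modes

variable {V : ℝ → ℝ} {ψ : ℂ → ℝ}

lemma continuous_radialPartial (hψ : ContDiff ℝ 1 ψ) : Continuous (radialPartial ψ).uncurry := by
  have := hψ.continuous_fderiv one_ne_zero
  unfold radialPartial Function.uncurry
  fun_prop

lemma continuous_angularPartial (hψ : ContDiff ℝ 1 ψ) :
    Continuous (angularPartial ψ).uncurry := by
  have := hψ.continuous_fderiv one_ne_zero
  unfold angularPartial Function.uncurry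
  fun_prop

lemma hasDerivAt_comp_circleMap_radius (hψ : Differentiable ℝ ψ) (r θ : ℝ) :
    HasDerivAt (fun s => ψ (circleMap 0 s θ)) (radialPartial ψ r θ) r :=
  (hψ _).hasFDerivAt.comp_hasDerivAt r (hasDerivAt_circleMap_radius 0 r θ)

lemma hasDerivAt_comp_circleMap (hψ : Differentiable ℝ ψ) (r θ : ℝ) :
    HasDerivAt (fun θ => ψ (circleMap 0 r θ)) (r * angularPartial ψ r θ) θ := by
  have h := (hψ _).hasFDerivAt.comp_hasDerivAt θ (hasDerivAt_circleMap 0 r θ)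
  have hscale : circleMap 0 r θ * Complex.I = r • (circleMap 0 1 θ * Complex.I) := by
    simp [circleMap_zero, mul_assoc]
  rwa [hscale, map_smul] at h

lemma hasDerivAt_mode (hψ : ContDiff ℝ 1 ψ) (k : ℤ) (r : ℝ) :
    HasDerivAt (mode ψ k) (circleCoeff (radialPartial ψ r) k) r :=
  hasDerivAt_circleCoeff (F := fun s θ => ψ (circleMap 0 s θ))
    (hψ.continuous.comp (continuous_circleMap_uncurry 0)) (continuous_radialPartial hψ)
    (hasDerivAt_comp_circleMap_radius (hψ.differentiable one_ne_zero)) r k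

lemma mul_circleCoeff_angularPartial (hψ : ContDiff ℝ 1 ψ) (k : ℤ) (r : ℝ) :
    r * circleCoeff (angularPartial ψ r) k = Complex.I * k * mode ψ k r := by
  rw [← circleCoeff_const_mul]
  refine circleCoeff_deriv ?_ (hasDerivAt_comp_circleMap (hψ.differentiable one_ne_zero) r) ?_ k
  · exact continuous_const.mul ((continuous_angularPartial hψ).comp (by fun_prop :
      Continuous fun θ => (r, θ)))
  · rw [← periodic_circleMap 0 r (-π)]
    ring_nf

-- At `r = 0` both sides vanish because of the convention `k ^ 2 / 0 = 0`.
lemma radialEnergy_mode (V : ℝ → ℝ) (hψ : ContDiff ℝ 1 ψ) (k : ℤ) (r : ℝ) :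
    radialEnergy V k (mode ψ k) r = r * (‖circleCoeff (radialPartial ψ r) k‖ ^ 2 +
      ‖circleCoeff (angularPartial ψ r) k‖ ^ 2 - V r * ‖mode ψ k r‖ ^ 2) := by
  rcases eq_or_ne r 0 with rfl | hr
  · simp [radialEnergy]
  have h : r ^ 2 * ‖circleCoeff (angularPartial ψ r) k‖ ^ 2 = k ^ 2 * ‖mode ψ k r‖ ^ 2 := by
    have h := congrArg (‖·‖ ^ 2) (mul_circleCoeff_angularPartial hψ k r)
    simpa only [norm_mul, mul_pow, Complex.norm_I, one_mul, Complex.norm_real, Complex.norm_intCast,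
      norm_eq_abs, sq_abs, one_pow] using h
  rw [radialEnergy, (hasDerivAt_mode hψ k r).deriv]
  field_simp
  linear_combination -h

lemma continuous_radialEnergy_mode (hV : Continuous V) (hψ : ContDiff ℝ 1 ψ) (k : ℤ) :
    Continuous (radialEnergy V k (mode ψ k)) := by
  simp only [funext (radialEnergy_mode V hψ k)]
  have := continuous_circleCoeff (continuous_radialPartial hψ) k
  have := continuous_circleCoeff (continuous_angularPartial hψ) k
  have : Continuous (mode ψ k) :=
    continuous_iff_continuousAt.2 fun r => (hasDerivAt_mode hψ k r).continuousAt
  fun_prop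

lemma continuous_circleEnergy (hV : Continuous V) (hψ : ContDiff ℝ 1 ψ) :
    Continuous (circleEnergy V ψ) := by
  refine continuous_id.mul
    (intervalIntegral.continuous_parametric_intervalIntegral_of_continuous' ?_ _ _)
  have := hψ.continuous
  exact (((continuous_radialPartial hψ).pow 2).add ((continuous_angularPartial hψ).pow 2)).sub
    (by fun_prop)

lemma hasSum_radialEnergy_mode (V : ℝ → ℝ) (hψ : ContDiff ℝ 1 ψ) (r : ℝ) :
    HasSum (fun k : ℤ => radialEnergy V k (mode ψ k) r) ((2 * π)⁻¹ * circleEnergy V ψ r) := by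
  have hslice : Continuous fun θ : ℝ => (r, θ) := by fun_prop
  have hs : Continuous (radialPartial ψ r) := (continuous_radialPartial hψ).comp hslice
  have hv : Continuous (angularPartial ψ r) := (continuous_angularPartial hψ).comp hslice
  have hp : Continuous fun θ => ψ (circleMap 0 r θ) := hψ.continuous.comp (continuous_circleMap 0 r)
  have hi {f : ℝ → ℝ} (hf : Continuous f) : IntervalIntegrable f volume (-π) π :=
    hf.intervalIntegrable _ _
  have henergy : (2 * π)⁻¹ * circleEnergy V ψ r =
      r * ((2 * π)⁻¹ * (∫ θ in -π..π, radialPartial ψ r θ ^ 2) +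
        (2 * π)⁻¹ * (∫ θ in -π..π, angularPartial ψ r θ ^ 2) -
        V r * ((2 * π)⁻¹ * ∫ θ in -π..π, ψ (circleMap 0 r θ) ^ 2)) := by
    rw [circleEnergy, intervalIntegral.integral_sub (hi (by fun_prop)) (hi (by fun_prop)),
      intervalIntegral.integral_add (hi (by fun_prop)) (hi (by fun_prop)),
      intervalIntegral.integral_const_mul]
    ring
  simp only [henergy, radialEnergy_mode V hψ]
  exact (((hasSum_sq_circleCoeff hs).add (hasSum_sq_circleCoeff hv)).sub
    ((hasSum_sq_circleCoeff hp).mul_left (V r))).mul_left r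

lemma schrodingerForm_eq_integral_circleEnergy (hV : Continuous V) (hψ : ContDiff ℝ 1 ψ) {R : ℝ}
    (hR : 0 ≤ R) : schrodingerForm V R ψ = ∫ r in 0..R, circleEnergy V ψ r := by
  have := hψ.continuous_fderiv one_ne_zero
  have hψ0 := hψ.continuous
  rw [schrodingerForm, integral_ball_eq_integral_circleMap (by fun_prop) hR]
  refine intervalIntegral.integral_congr fun r hr => ?_
  rw [Set.uIcc_of_le hR] at hr
  simp only [norm_circleMap_zero, abs_of_nonneg hr.1, circleEnergy, smul_eq_mul, radialPartial,
    angularPartial]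
  congr 2 with θ
  rw [norm_sq_eq_apply_sq_add_apply_mul_I_sq _ (by simp : ‖circleMap 0 1 θ‖ = 1)]

lemma abs_radialEnergy_le {E : Type*} [NormedAddCommGroup E] [NormedSpace ℝ E] (V : ℝ → ℝ) (k : ℝ)
    (c : ℝ → E) {r : ℝ} (hr : 0 ≤ r) :
    |radialEnergy V k c r| ≤ radialEnergy (fun r => -|V r|) k c r := by
  have hV : |r * V r * ‖c r‖ ^ 2| = r * |V r| * ‖c r‖ ^ 2 := by
    rw [abs_mul, abs_mul, abs_of_nonneg hr, abs_of_nonneg (sq_nonneg ‖c r‖)]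
  calc |radialEnergy V k c r|
      = |r * ‖deriv c r‖ ^ 2 + k ^ 2 / r * ‖c r‖ ^ 2 - r * V r * ‖c r‖ ^ 2| := by
        rw [radialEnergy]; ring_nf
    _ ≤ (r * ‖deriv c r‖ ^ 2 + k ^ 2 / r * ‖c r‖ ^ 2) + |r * V r * ‖c r‖ ^ 2| :=
        (abs_sub _ _).trans_eq (by rw [abs_of_nonneg (by positivity)])
    _ = radialEnergy (fun r => -|V r|) k c r := by rw [hV, radialEnergy]; ring

theorem hasSum_integral_radialEnergy_mode (hV : Continuous V) (hψ : ContDiff ℝ 1 ψ) {R : ℝ}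
    (hR : 0 ≤ R) :
    HasSum (fun k : ℤ => ∫ r in 0..R, radialEnergy V k (mode ψ k) r)
      ((2 * π)⁻¹ * schrodingerForm V R ψ) := by
  have hbound (r : ℝ) := hasSum_radialEnergy_mode (fun r => -|V r|) hψ r
  rw [schrodingerForm_eq_integral_circleEnergy hV hψ hR, ← intervalIntegral.integral_const_mul]
  refine intervalIntegral.hasSum_integral_of_dominated_convergence
    (fun k => radialEnergy (fun r => -|V r|) k (mode ψ k))
    (fun k => (continuous_radialEnergy_mode hV hψ k).aestronglyMeasurable)
    (fun k => .of_forall fun r hr => ?_) (.of_forall fun r _ => (hbound r).summable) ?_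
    (.of_forall fun r _ => hasSum_radialEnergy_mode V hψ r)
  · rw [Set.uIoc_of_le hR] at hr
    exact abs_radialEnergy_le V k (mode ψ k) hr.1.le
  · simp only [fun r => (hbound r).tsum_eq]
    exact (continuous_const.mul (continuous_circleEnergy (by fun_prop) hψ)).intervalIntegrable _ _

end Modes

section Riccati

variable {E : Type*} [NormedAddCommGroup E]

section Picone

variable [InnerProductSpace ℝ E] {V ρ : ℝ → ℝ} {μ k : ℝ} {c : ℝ → E}

-- The Riccati equation `r ρ' = μ² - r² V - ρ²` is satisfied by `ρ = r f' / f`, where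
-- `r (r f')' = (μ² - r² V) f`; subtracting `(ρ ‖c‖²)'` from the energy completes a square.
lemma hasDerivAt_mul_norm_sq_of_riccati {r : ℝ} (hr : r ≠ 0)
    (hρ : HasDerivAt ρ ((μ ^ 2 - ρ r ^ 2) / r - r * V r) r) (hc : DifferentiableAt ℝ c r) :
    HasDerivAt (fun s => ρ s * ‖c s‖ ^ 2) (radialEnergy V k c r -
      (‖r • deriv c r - ρ r • c r‖ ^ 2 + (k ^ 2 - μ ^ 2) * ‖c r‖ ^ 2) / r) r := by
  refine (hρ.mul hc.hasDerivAt.norm_sq).congr_deriv ?_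
  rw [radialEnergy, norm_sub_sq_real, norm_smul, norm_smul, mul_pow, mul_pow, norm_eq_abs,
    norm_eq_abs, sq_abs, sq_abs, real_inner_smul_left, real_inner_smul_right,
    real_inner_comm (c r) (deriv c r)]
  field_simp
  ring

variable {x y : ℝ}

lemma sub_le_integral_radialEnergy (hx : 0 ≤ x) (hxy : x ≤ y) (hk : μ ^ 2 ≤ k ^ 2)
    (hρ : ∀ r ∈ Set.Ioo x y, HasDerivAt ρ ((μ ^ 2 - ρ r ^ 2) / r - r * V r) r)
    (hc : ∀ r ∈ Set.Ioo x y, DifferentiableAt ℝ c r)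
    (hcont : ContinuousOn (fun r => ρ r * ‖c r‖ ^ 2) (Set.Icc x y))
    (hint : IntegrableOn (radialEnergy V k c) (Set.Icc x y)) :
    ρ y * ‖c y‖ ^ 2 - ρ x * ‖c x‖ ^ 2 ≤ ∫ r in x..y, radialEnergy V k c r := by
  refine intervalIntegral.sub_le_integral_of_hasDeriv_right_of_le hxy hcont (fun r hr =>
    (hasDerivAt_mul_norm_sq_of_riccati (k := k) (hx.trans_lt hr.1).ne' (hρ r hr)
      (hc r hr)).hasDerivWithinAt) hint fun r hr => sub_le_self _ ?_
  have := sub_nonneg.2 hk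
  have := hx.trans_lt hr.1
  positivity

lemma integral_radialEnergy_le (hx : 0 ≤ x) (hxy : x ≤ y)
    (hρ : ∀ r ∈ Set.Ioo x y, HasDerivAt ρ ((μ ^ 2 - ρ r ^ 2) / r - r * V r) r)
    (hc : ∀ r ∈ Set.Ioo x y, DifferentiableAt ℝ c r)
    (hle : ∀ r ∈ Set.Ioo x y,
      ‖r • deriv c r - ρ r • c r‖ ^ 2 + k ^ 2 * ‖c r‖ ^ 2 ≤ μ ^ 2 * ‖c r‖ ^ 2)
    (hcont : ContinuousOn (fun r => ρ r * ‖c r‖ ^ 2) (Set.Icc x y))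
    (hint : IntegrableOn (radialEnergy V k c) (Set.Icc x y)) :
    ∫ r in x..y, radialEnergy V k c r ≤ ρ y * ‖c y‖ ^ 2 - ρ x * ‖c x‖ ^ 2 := by
  refine intervalIntegral.integral_le_sub_of_hasDeriv_right_of_le hxy hcont (fun r hr =>
    (hasDerivAt_mul_norm_sq_of_riccati (k := k) (hx.trans_lt hr.1).ne' (hρ r hr)
      (hc r hr)).hasDerivWithinAt) hint fun r hr => ?_
  rw [le_sub_self_iff]
  exact div_nonpos_of_nonpos_of_nonneg (by linarith [hle r hr]) (hx.trans hr.1.le)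

end Picone

lemma continuousAt_norm_sq_div [NormedSpace ℝ E] {c : ℝ → E} {g : ℝ → ℝ} {a : ℝ}
    (hc : DifferentiableAt ℝ c a) (hg : DifferentiableAt ℝ g a) (hca : c a = 0) (hga : g a = 0)
    (hg' : deriv g a ≠ 0) : ContinuousAt (fun r => ‖c r‖ ^ 2 / g r) a := by
  have hfactor (r : ℝ) : ‖c r‖ ^ 2 / g r = (r - a) * ‖dslope c a r‖ ^ 2 / dslope g a r := by
    have h1 : (r - a) • dslope c a r = c r := by rw [sub_smul_dslope, hca, sub_zero]
    have h2 : (r - a) • dslope g a r = g r := by rw [sub_smul_dslope, hga, sub_zero]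
    rw [← h1, ← h2, norm_smul, mul_pow, norm_eq_abs, sq_abs, smul_eq_mul, sq, mul_assoc]
    rcases eq_or_ne r a with rfl | hr
    · simp
    · exact mul_div_mul_left _ _ (sub_ne_zero.2 hr)
  simp only [hfactor]
  have := continuousAt_dslope_same.2 hc
  have := continuousAt_dslope_same.2 hg
  exact ContinuousAt.div (by fun_prop) (by fun_prop) (by rwa [dslope_same])

end Riccati

/-- The potential `‖A‖²` of the Jacobi operator of the Enneper surface of order `n`, as a function
of the distance to the origin of the conformal plane. -/
def potential (n : ℕ) (r : ℝ) : ℝ := 8 * (n : ℝ) ^ 2 * r ^ (2 * n - 2) / (1 + r ^ (2 * n)) ^ 2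

/-- The logarithmic derivative `r f' / f` of the rotationally invariant Jacobi field
`f = (r ^ (2n) - 1) / (r ^ (2n) + 1)`. -/
def lowRatio (n : ℕ) (r : ℝ) : ℝ := 4 * n * r ^ (2 * n) / ((r ^ (2 * n)) ^ 2 - 1)

/-- The logarithmic derivative `r f' / f` of the radial factor `f = r ^ n / (1 + r ^ (2n))` of the
Jacobi fields of angular frequency `n`. -/
def nullRatio (n : ℕ) (r : ℝ) : ℝ := n * (1 - r ^ (2 * n)) / (1 + r ^ (2 * n))

/-- The logarithmic derivative `r f' / f` of the radial factor
`f = r ^ (n + 1) (2n + 1 + r ^ (2n)) / (1 + r ^ (2n))` of the Jacobi fields of angular frequency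
`n + 1`. -/
def highRatio (n : ℕ) (r : ℝ) : ℝ :=
  n + 1 - 4 * (n : ℝ) ^ 2 * r ^ (2 * n) / ((1 + r ^ (2 * n)) * (2 * n + 1 + r ^ (2 * n)))

section Ratios

variable (n : ℕ) {r : ℝ}

lemma pow_two_mul_nonneg (r : ℝ) : 0 ≤ r ^ (2 * n) := (even_two_mul n).pow_nonneg r

@[fun_prop]
lemma continuous_potential : Continuous (potential n) := by
  unfold potential
  refine Continuous.div (by fun_prop) (by fun_prop) fun r => ?_
  have := pow_two_mul_nonneg n r
  positivity

@[fun_prop]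
lemma continuous_nullRatio : Continuous (nullRatio n) := by
  unfold nullRatio
  refine Continuous.div (by fun_prop) (by fun_prop) fun r => ?_
  have := pow_two_mul_nonneg n r
  positivity

@[fun_prop]
lemma continuous_highRatio : Continuous (highRatio n) := by
  unfold highRatio
  refine continuous_const.sub (Continuous.div (by fun_prop) (by fun_prop) fun r => ?_)
  have := pow_two_mul_nonneg n r
  positivity

lemma mul_potential (hr : r ≠ 0) :
    r * potential n r = 8 * (n : ℝ) ^ 2 * r ^ (2 * n) / (1 + r ^ (2 * n)) ^ 2 / r := by
  rcases eq_or_ne n 0 with rfl | hn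
  · simp [potential]
  have hpow : r ^ (2 * n) = r ^ (2 * n - 2) * r ^ 2 := by rw [← pow_add]; congr 1; omega
  rw [potential, div_div, mul_div_assoc', div_eq_div_iff]
  · rw [hpow]; ring
  all_goals have := pow_two_mul_nonneg n r; positivity

lemma hasDerivAt_pow_div (m : ℕ) (hr : r ≠ 0) : HasDerivAt (fun s => s ^ m) (m * r ^ m / r) r := by
  refine (hasDerivAt_pow m r).congr_deriv ?_
  rcases m with _ | m
  · simp
  · rw [Nat.add_sub_cancel, pow_succ, mul_div_assoc, mul_div_cancel_right₀ _ hr]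

lemma nullRatio_zero_nonneg : 0 ≤ nullRatio n 0 := by
  rcases eq_or_ne n 0 with rfl | hn
  · simp [nullRatio]
  · simp [nullRatio, hn]

variable {n}

lemma sq_pow_two_mul_ne_one (hn : n ≠ 0) (hr : 0 ≤ r) (hr1 : r ≠ 1) : (r ^ (2 * n)) ^ 2 ≠ 1 := by
  rw [← pow_mul]
  exact mt (pow_eq_one_iff_of_nonneg hr (by positivity)).1 hr1

lemma hasDerivAt_lowRatio (hr : r ≠ 0) (hr1 : (r ^ (2 * n)) ^ 2 ≠ 1) :
    HasDerivAt (lowRatio n) ((0 ^ 2 - lowRatio n r ^ 2) / r - r * potential n r) r := by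
  have hx := hasDerivAt_pow_div (2 * n) hr
  have hden : (r ^ (2 * n)) ^ 2 - 1 ≠ 0 := sub_ne_zero.2 hr1
  have hadd : 1 + r ^ (2 * n) ≠ 0 := by linarith [pow_two_mul_nonneg n r]
  refine ((hx.const_mul (4 * (n : ℝ))).div ((hx.fun_pow 2).sub_const 1) hden).congr_deriv ?_
  rw [mul_potential n hr, lowRatio]
  generalize r ^ (2 * n) = x at hden hadd ⊢
  push_cast
  field_simp
  ring

lemma hasDerivAt_nullRatio (hr : r ≠ 0) :
    HasDerivAt (nullRatio n) (((n : ℝ) ^ 2 - nullRatio n r ^ 2) / r - r * potential n r) r := by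
  have hx := hasDerivAt_pow_div (2 * n) hr
  have hden : 1 + r ^ (2 * n) ≠ 0 := by linarith [pow_two_mul_nonneg n r]
  refine (((hx.const_sub 1).const_mul (n : ℝ)).div (hx.const_add 1) hden).congr_deriv ?_
  rw [mul_potential n hr, nullRatio]
  generalize r ^ (2 * n) = x at hden ⊢
  push_cast
  field_simp
  ring

lemma hasDerivAt_highRatio (hr : r ≠ 0) :
    HasDerivAt (highRatio n)
      (((n + 1 : ℝ) ^ 2 - highRatio n r ^ 2) / r - r * potential n r) r := by
  have hx := hasDerivAt_pow_div (2 * n) hr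
  have h1 : 1 + r ^ (2 * n) ≠ 0 := by linarith [pow_two_mul_nonneg n r]
  have h2 : 2 * n + 1 + r ^ (2 * n) ≠ 0 := by linarith [pow_two_mul_nonneg n r]
  refine (((hx.const_mul (4 * (n : ℝ) ^ 2)).div ((hx.const_add 1).fun_mul
    (hx.const_add (2 * n + 1 : ℝ))) (mul_ne_zero h1 h2)).const_sub (n + 1 : ℝ)).congr_deriv ?_
  rw [mul_potential n hr, highRatio]
  push_cast
  generalize r ^ (2 * n) = x at h1 h2 ⊢
  generalize hd : 2 * (n : ℝ) + 1 + x = d at h2 ⊢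
  field_simp
  rw [← hd]
  ring

lemma lowRatio_nonneg (hr : 1 ≤ r) : 0 ≤ lowRatio n r := by
  have := one_le_pow₀ (n := 2) (one_le_pow₀ (n := 2 * n) hr)
  exact div_nonneg (by positivity) (by linarith)

lemma nullRatio_neg (hn : n ≠ 0) (hr : 1 < r) : nullRatio n r < 0 := by
  have hx : 1 < r ^ (2 * n) := one_lt_pow₀ hr (by positivity)
  exact div_neg_of_neg_of_pos (mul_neg_of_pos_of_neg (by positivity) (by linarith)) (by linarith)

lemma highRatio_nonneg (hr : 2 * n ≤ r) : 0 ≤ highRatio n r := by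
  have hx : 4 * (n : ℝ) ^ 2 ≤ r ^ (2 * n) := by
    rcases Nat.eq_zero_or_pos n with rfl | hn
    · simp
    have hn1 : (1 : ℝ) ≤ n := by exact_mod_cast hn
    calc 4 * (n : ℝ) ^ 2 = (2 * n) ^ 2 := by ring
      _ ≤ r ^ 2 := by gcongr
      _ ≤ r ^ (2 * n) := pow_le_pow_right₀ (by linarith) (by omega)
  have hx0 := pow_two_mul_nonneg n r
  have hle : 4 * (n : ℝ) ^ 2 * r ^ (2 * n) / ((1 + r ^ (2 * n)) * (2 * n + 1 + r ^ (2 * n))) ≤ 1 :=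
    div_le_one_of_le₀ (mul_le_mul (by linarith) (by linarith) hx0 (by positivity)) (by positivity)
  rw [highRatio]
  linarith [n.cast_nonneg (α := ℝ)]

end Ratios

section Stability

variable {n : ℕ} {ψ : ℂ → ℝ} {R : ℝ} {k : ℤ}

lemma differentiable_mode (hψ : ContDiff ℝ 1 ψ) (k : ℤ) : Differentiable ℝ (mode ψ k) :=
  fun r => (hasDerivAt_mode hψ k r).differentiableAt

lemma mode_apply_zero (hψ : ContDiff ℝ 1 ψ) (hk : k ≠ 0) : mode ψ k 0 = 0 := by
  have h := mul_circleCoeff_angularPartial hψ k 0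
  rw [Complex.ofReal_zero, zero_mul, eq_comm, mul_eq_zero] at h
  exact h.resolve_left (mul_ne_zero Complex.I_ne_zero (Int.cast_ne_zero.2 hk))

lemma integrableOn_radialEnergy_mode (n : ℕ) (hψ : ContDiff ℝ 1 ψ) (k : ℤ) (x y : ℝ) :
    IntegrableOn (radialEnergy (potential n) k (mode ψ k)) (Set.Icc x y) :=
  (continuous_radialEnergy_mode (continuous_potential n) hψ k).integrableOn_Icc

lemma integral_radialEnergy_mode_nonneg_of_lt_abs (hψ : ContDiff ℝ 1 ψ) (hk : n < |k|)
    (hR : 2 * n ≤ R) : 0 ≤ ∫ r in 0..R, radialEnergy (potential n) k (mode ψ k) r := by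
  have hk2 : (n + 1 : ℝ) ^ 2 ≤ (k : ℝ) ^ 2 := by
    rw [← sq_abs (k : ℝ)]
    gcongr
    exact_mod_cast hk
  have h0 : mode ψ k 0 = 0 := mode_apply_zero hψ (abs_pos.1 (n.cast_nonneg.trans_lt hk))
  have hc := differentiable_mode hψ k
  have hle := sub_le_integral_radialEnergy le_rfl ((by positivity : (0 : ℝ) ≤ 2 * n).trans hR) hk2
    (fun r hr => hasDerivAt_highRatio hr.1.ne') (fun r _ => hc r)
    (by have := hc.continuous; fun_prop) (integrableOn_radialEnergy_mode n hψ k 0 R)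
  rw [h0, norm_zero, zero_pow two_ne_zero, mul_zero, sub_zero] at hle
  exact (mul_nonneg (highRatio_nonneg hR) (sq_nonneg _)).trans hle

lemma continuousOn_lowRatio_mul_norm_sq {E : Type*} [NormedAddCommGroup E] [NormedSpace ℝ E]
    (hn : n ≠ 0) {c : ℝ → E} (hc : Differentiable ℝ c) (hc1 : c 1 = 0) :
    ContinuousOn (fun r => lowRatio n r * ‖c r‖ ^ 2) (Set.Ici 0) := by
  have hcc := hc.continuous
  intro r hr
  apply ContinuousAt.continuousWithinAt
  have hquot : ContinuousAt (fun s => ‖c s‖ ^ 2 / ((s ^ (2 * n)) ^ 2 - 1)) r := by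
    rcases eq_or_ne r 1 with rfl | hr1
    · refine continuousAt_norm_sq_div (hc 1) (by fun_prop) hc1 (by simp) ?_
      simpa [← pow_mul] using hn
    · exact ContinuousAt.div (by fun_prop) (by fun_prop)
        (sub_ne_zero.2 (sq_pow_two_mul_ne_one hn hr hr1))
  have hfactor : (fun s => lowRatio n s * ‖c s‖ ^ 2) =
      fun s => 4 * n * s ^ (2 * n) * (‖c s‖ ^ 2 / ((s ^ (2 * n)) ^ 2 - 1)) := by
    funext s
    rw [lowRatio]
    ring
  rw [hfactor]
  fun_prop

lemma integral_radialEnergy_mode_nonneg_of_apply_one (hn : n ≠ 0) (hψ : ContDiff ℝ 1 ψ)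
    (h1 : mode ψ k 1 = 0) (hR : 1 ≤ R) :
    0 ≤ ∫ r in 0..R, radialEnergy (potential n) k (mode ψ k) r := by
  have hle {x y : ℝ} (hx : 0 ≤ x) (hxy : x ≤ y) (hne : ∀ r ∈ Set.Ioo x y, r ≠ 1) :
      lowRatio n y * ‖mode ψ k y‖ ^ 2 - lowRatio n x * ‖mode ψ k x‖ ^ 2 ≤
        ∫ r in x..y, radialEnergy (potential n) k (mode ψ k) r := by
    refine sub_le_integral_radialEnergy (μ := 0) hx hxy (by simpa using sq_nonneg (k : ℝ))
      (fun r hr => ?_) (fun r _ => differentiable_mode hψ k r)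
      ((continuousOn_lowRatio_mul_norm_sq hn (differentiable_mode hψ k) h1).mono
        fun r hr => hx.trans hr.1) (integrableOn_radialEnergy_mode n hψ k x y)
    have hr0 := hx.trans_lt hr.1
    exact hasDerivAt_lowRatio hr0.ne' (sq_pow_two_mul_ne_one hn hr0.le (hne r hr))
  have hinner := hle le_rfl zero_le_one fun r hr => hr.2.ne
  have houter := hle zero_le_one hR fun r hr => hr.1.ne'
  have hzero : lowRatio n 0 = 0 := by simp [lowRatio, hn]
  rw [h1, norm_zero, zero_pow two_ne_zero, mul_zero] at hinner houter
  rw [hzero, zero_mul, sub_zero] at hinner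
  rw [sub_zero] at houter
  have hi (x y : ℝ) := (continuous_radialEnergy_mode (continuous_potential n) hψ
    k).intervalIntegrable (μ := volume) x y
  rw [← intervalIntegral.integral_add_adjacent_intervals (hi 0 1) (hi 1 R)]
  exact add_nonneg hinner ((mul_nonneg (lowRatio_nonneg hR) (sq_nonneg _)).trans houter)

lemma schrodingerForm_potential_nonneg (hn : n ≠ 0) (hψ : ContDiff ℝ 1 ψ)
    (h : ∀ k : ℤ, |k| ≤ n → mode ψ k 1 = 0) (hR : 2 * n ≤ R) :
    0 ≤ schrodingerForm (potential n) R ψ := by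
  have hn1 : (1 : ℝ) ≤ n := by exact_mod_cast Nat.one_le_iff_ne_zero.2 hn
  have hR1 : 1 ≤ R := by linarith
  refine nonneg_of_mul_nonneg_right ((hasSum_integral_radialEnergy_mode (continuous_potential n) hψ
    (zero_le_one.trans hR1)).nonneg fun k => ?_) (by positivity)
  rcases le_or_gt |k| n with hk | hk
  · exact integral_radialEnergy_mode_nonneg_of_apply_one hn hψ (h k hk) hR1
  · exact integral_radialEnergy_mode_nonneg_of_lt_abs hψ hk hR

end Stability

section Extension

lemma exists_contDiff_eqOn_closedBall {E F : Type*} [NormedAddCommGroup E] [NormedSpace ℝ E]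
    [HasContDiffBump E] [NormedAddCommGroup F] [NormedSpace ℝ F] {m : ℕ∞} {φ : E → F} {x : E}
    {r R : ℝ} (hr : 0 < r) (hrR : r < R) (hφ : ContDiffOn ℝ m φ (Metric.ball x R)) :
    ∃ φ' : E → F, ContDiff ℝ m φ' ∧ Set.EqOn φ' φ (Metric.closedBall x r) := by
  let χ : ContDiffBump x := ⟨r, (r + R) / 2, hr, by linarith⟩
  refine ⟨fun w => χ w • φ w, contDiff_iff_contDiffAt.2 fun w => ?_, fun w hw => ?_⟩
  · by_cases hw : w ∈ Metric.ball x R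
    · exact χ.contDiff.contDiffAt.smul (hφ.contDiffAt (Metric.isOpen_ball.mem_nhds hw))
    · have hsupp : w ∉ tsupport χ := by
        rw [χ.tsupport_eq]
        simp only [Metric.mem_ball, not_lt] at hw
        simp only [Metric.mem_closedBall, not_le, χ]
        linarith
      have hzero : (fun w => χ w • φ w) =ᶠ[nhds w] fun _ => 0 := by
        filter_upwards [notMem_tsupport_iff_eventuallyEq.1 hsupp] with y hy
        rw [hy, Pi.zero_apply, zero_smul]
      exact contDiffAt_const.congr_of_eventuallyEq hzero
  · simp only [χ.one_of_mem_closedBall hw, one_smul]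

-- A non-integrable `f` has integral `0` on the large ball.
lemma setIntegral_ball_nonneg_of_forall_lt {X : Type*} [PseudoMetricSpace X] [MeasurableSpace X]
    [OpensMeasurableSpace X] {μ : Measure X} {f : X → ℝ} {x : X} {s R : ℝ} (hsR : s < R)
    (h : ∀ r ∈ Set.Ioo s R, 0 ≤ ∫ y in Metric.ball x r, f y ∂μ) :
    0 ≤ ∫ y in Metric.ball x R, f y ∂μ := by
  by_cases hf : IntegrableOn f (Metric.ball x R) μ
  · obtain ⟨u, hu, hmem, hlim⟩ := exists_seq_strictMono_tendsto' hsR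
    have hU : ⋃ j, Metric.ball x (u j) = Metric.ball x R := by
      ext y
      simp only [Set.mem_iUnion, Metric.mem_ball]
      exact ⟨fun ⟨j, hj⟩ => hj.trans (hmem j).2, fun hy =>
        (hlim.eventually (lt_mem_nhds hy)).exists⟩
    rw [← hU] at hf ⊢
    exact ge_of_tendsto' (tendsto_setIntegral_of_monotone
      (fun j => Metric.isOpen_ball.measurableSet)
      (fun i j hij => Metric.ball_subset_ball (hu.monotone hij)) hf) fun j => h (u j) (hmem j)
  · exact (integral_undef hf).ge

lemma schrodingerForm_congr (V : ℝ → ℝ) {R : ℝ} {ψ ψ' : ℂ → ℝ}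
    (h : Set.EqOn ψ ψ' (Metric.ball 0 R)) : schrodingerForm V R ψ = schrodingerForm V R ψ' :=
  setIntegral_congr_fun Metric.isOpen_ball.measurableSet fun z hz => by
    simp only [(h.eventuallyEq_of_mem (Metric.isOpen_ball.mem_nhds hz)).fderiv_eq, h hz]

lemma schrodingerForm_potential_nonneg_of_contDiffOn {n : ℕ} (hn : n ≠ 0) {R : ℝ} {ψ : ℂ → ℝ}
    (hψ : ContDiffOn ℝ 1 ψ (Metric.ball 0 R)) (h : ∀ k : ℤ, |k| ≤ n → mode ψ k 1 = 0)
    (hR : 2 * n < R) : 0 ≤ schrodingerForm (potential n) R ψ := by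
  have hn1 : (1 : ℝ) ≤ n := by exact_mod_cast Nat.one_le_iff_ne_zero.2 hn
  refine setIntegral_ball_nonneg_of_forall_lt hR fun r hr => ?_
  have hr1 : 1 < r := by linarith [hr.1]
  obtain ⟨ψ', hψ', heq⟩ := exists_contDiff_eqOn_closedBall (one_pos.trans hr1) hr.2 hψ
  change 0 ≤ schrodingerForm (potential n) r ψ
  rw [← schrodingerForm_congr _ (heq.mono Metric.ball_subset_closedBall)]
  refine schrodingerForm_potential_nonneg hn hψ' (fun k hk => ?_) hr.1.le
  rw [← h k hk, mode, mode]
  congr 1 with θ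
  exact heq (by simpa using hr1.le)

end Extension

/-- The identification of `ℂ` with the Euclidean plane. -/
def planeIso : ℂ ≃ₗᵢ[ℝ] E2 := Complex.orthonormalBasisOneI.repr

lemma norm_gradient_apply_linearIsometryEquiv {E F : Type*} [NormedAddCommGroup E]
    [NormedSpace ℝ E] [NormedAddCommGroup F] [InnerProductSpace ℝ F] [CompleteSpace F]
    (e : E ≃ₗᵢ[ℝ] F) (φ : F → ℝ) (x : E) : ‖gradient φ (e x)‖ = ‖fderiv ℝ (φ ∘ e) x‖ := by
  have hchain : fderiv ℝ (φ ∘ e) x =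
      (fderiv ℝ φ (e x)).comp (e.toContinuousLinearEquiv : E →L[ℝ] F) :=
    e.toContinuousLinearEquiv.comp_right_fderiv
  rw [gradient, LinearIsometryEquiv.norm_map, hchain]
  exact ((fderiv ℝ φ (e x)).opNorm_comp_linearIsometryEquiv e).symm

lemma QE_eq_schrodingerForm (n : ℕ) (R : ℝ) (φ : E2 → ℝ) :
    QE n R φ = schrodingerForm (potential n) R (φ ∘ planeIso) := by
  have hball : planeIso ⁻¹' Metric.ball 0 R = Metric.ball 0 R := by
    rw [planeIso.preimage_ball, map_zero]
  rw [QE, ← planeIso.measurePreserving.setIntegral_preimage_emb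
    planeIso.toHomeomorph.measurableEmbedding, hball]
  simp only [norm_gradient_apply_linearIsometryEquiv, LinearIsometryEquiv.norm_map,
    schrodingerForm, potential, Function.comp_apply]

lemma finrank_real_prod_fin_complex (n : ℕ) :
    Module.finrank ℝ (ℝ × (Fin n → ℂ)) = 2 * n + 1 := by
  rw [Module.finrank_prod, Module.finrank_self, Module.finrank_pi_fintype]
  simp only [Complex.finrank_real_complex, Finset.sum_const, Finset.card_univ, Fintype.card_fin,
    smul_eq_mul]
  ring

section UpperBound

variable {n : ℕ}

lemma circleCoeff_eq_zero_of_abs_le {p : ℝ → ℝ} (h0 : (circleCoeff p 0).re = 0)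
    (hpos : ∀ j : Fin n, circleCoeff p (j + 1) = 0) {k : ℤ} (hk : |k| ≤ n) :
    circleCoeff p k = 0 := by
  have hnat {l : ℤ} (hl : 0 < l) (hln : l ≤ n) : circleCoeff p l = 0 := by
    have := hpos ⟨(l - 1).toNat, by omega⟩
    rwa [show (((l - 1).toNat : ℕ) : ℤ) + 1 = l by omega] at this
  obtain ⟨hkn, hkn'⟩ := abs_le.1 hk
  rcases lt_trichotomy k 0 with hk0 | rfl | hk0
  · rw [← neg_neg k, circleCoeff_neg, hnat (by omega) (by omega), map_zero]
  · have hreal := circleCoeff_neg p 0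
    rw [neg_zero, eq_comm, Complex.conj_eq_iff_im] at hreal
    exact Complex.ext h0 hreal
  · exact hnat hk0 hkn'

lemma finrank_le_of_circleCoeff_injective {M : Type*} [AddCommGroup M] [Module ℝ M]
    (L : M →ₗ[ℝ] ℝ → ℝ) (hL : ∀ x, Continuous (L x))
    (h : ∀ x, (∀ k : ℤ, |k| ≤ n → circleCoeff (L x) k = 0) → x = 0) :
    Module.finrank ℝ M ≤ 2 * n + 1 := by
  let coeff (k : ℤ) : M →ₗ[ℝ] ℂ :=
    { toFun := fun x => circleCoeff (L x) k
      map_add' := fun x y => by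
        rw [map_add]
        exact circleCoeff_add (hL x) (hL y) k
      map_smul' := fun a x => by
        rw [map_smul]
        exact circleCoeff_const_mul (L x) a k }
  let T : M →ₗ[ℝ] ℝ × (Fin n → ℂ) :=
    (Complex.reLm.comp (coeff 0)).prod (LinearMap.pi fun j => coeff (j + 1))
  have hT : Function.Injective T := by
    refine (injective_iff_map_eq_zero T).2 fun x hx => h x fun k hk => ?_
    obtain ⟨h0, hpos⟩ := Prod.ext_iff.1 hx
    exact circleCoeff_eq_zero_of_abs_le h0 (congrFun hpos) hk
  have hfin := LinearMap.finrank_le_finrank_of_injective hT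
  rwa [finrank_real_prod_fin_complex] at hfin

lemma finrank_le_of_QE_neg (hn : n ≠ 0) {R : ℝ} (hR : 2 * n < R) (V : Submodule ℝ (E2 → ℝ))
    (hV : ∀ φ ∈ V, memFE R φ) (hQ : ∀ φ ∈ V, φ ≠ 0 → QE n R φ < 0) :
    Module.finrank ℝ V ≤ 2 * n + 1 := by
  have hn1 : (1 : ℝ) ≤ n := by exact_mod_cast Nat.one_le_iff_ne_zero.2 hn
  refine finrank_le_of_circleCoeff_injective
    ((LinearMap.funLeft ℝ ℝ fun θ => planeIso (circleMap 0 1 θ)).comp V.subtype)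
    (fun φ => (hV φ φ.2).1.continuousOn.comp_continuous (by fun_prop) fun θ => ?_) fun φ hφ => ?_
  · rw [mem_ball_zero_iff, LinearIsometryEquiv.norm_map, norm_circleMap_zero, abs_one]
    linarith
  · by_contra hne
    refine (hQ φ φ.2 (Submodule.coe_eq_zero.not.2 hne)).not_ge ?_
    rw [QE_eq_schrodingerForm]
    refine schrodingerForm_potential_nonneg_of_contDiffOn hn ?_ hφ hR
    have h1 : ContDiffOn ℝ 1 (φ : E2 → ℝ) (Metric.ball 0 R) := (hV φ φ.2).1.of_le (by simp)
    exact h1.comp planeIso.contDiff.contDiffOn fun z hz => by simpa using hz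

end UpperBound

/-- The exponent `m ∈ {n - 1, n}` of the parity of `k ≤ n`; it makes
`r ^ m e^{ikθ} / (1 + r ^ (2n))` a smooth function on the plane. -/
def testExponent (n k : ℕ) : ℕ := k + 2 * ((n - k) / 2)

/-- The radial factor `r ^ m / (1 + r ^ (2n))` of the test functions. -/
def testProfile (n m : ℕ) (r : ℝ) : ℝ := r ^ m / (1 + r ^ (2 * n))

/-- The rotationally invariant factor of a test function of angular frequency `k`; it is written
in terms of `‖w‖ ^ 2`, which is smooth at the origin. -/
def testWeight (n k : ℕ) (w : ℂ) : ℝ := (‖w‖ ^ 2) ^ ((n - k) / 2) / (1 + (‖w‖ ^ 2) ^ n)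

/-- The test functions of angular frequencies at most `n`, as a linear function of their
amplitudes. -/
def testFunction (n : ℕ) : (Fin (n + 1) → ℂ) →ₗ[ℝ] ℂ → ℝ where
  toFun z w := ∑ j : Fin (n + 1), testWeight n j w * (z j * w ^ (j : ℕ)).re
  map_add' z z' := by
    ext w
    simp only [Pi.add_apply, add_mul, Complex.add_re, mul_add, Finset.sum_add_distrib]
  map_smul' a z := by
    ext w
    simp only [Pi.smul_apply, smul_mul_assoc, Complex.smul_re, smul_eq_mul, Finset.mul_sum,
      RingHom.id_apply, mul_left_comm]

/-- The `k`-th Fourier coefficient of `θ ↦ ∑ j, Re (z j * e^{ijθ})`. -/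
def testCoeff {n : ℕ} (z : Fin (n + 1) → ℂ) (k : ℤ) : ℂ :=
  ∑ j : Fin (n + 1),
    ((if k = (j : ℕ) then z j else 0) + if k = -(j : ℕ) then starRingEnd ℂ (z j) else 0) / 2

section LowerBound

variable {n : ℕ}

lemma sq_testExponent_sub_add_sq_le {k : ℕ} (hk : k ≤ n) :
    ((testExponent n k : ℝ) - n) ^ 2 + (k : ℝ) ^ 2 ≤ (n : ℝ) ^ 2 := by
  obtain ⟨d, rfl⟩ := Nat.exists_eq_add_of_le hk
  rw [testExponent, Nat.add_sub_cancel_left]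
  rcases Nat.even_or_odd' d with ⟨e, rfl | rfl⟩
  · rw [Nat.mul_div_cancel_left e two_pos]
    push_cast
    rw [sub_self]
    nlinarith [e.cast_nonneg (α := ℝ), k.cast_nonneg (α := ℝ)]
  · rw [show (2 * e + 1) / 2 = e by omega]
    push_cast
    nlinarith [e.cast_nonneg (α := ℝ), k.cast_nonneg (α := ℝ)]

lemma testProfile_pos (m : ℕ) {r : ℝ} (hr : 0 < r) : 0 < testProfile n m r :=
  div_pos (by positivity) (by positivity)

lemma hasDerivAt_testProfile (m : ℕ) {r : ℝ} (hr : r ≠ 0) :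
    HasDerivAt (testProfile n m) ((m - n + nullRatio n r) * testProfile n m r / r) r := by
  have hden : 1 + r ^ (2 * n) ≠ 0 := by linarith [pow_two_mul_nonneg n r]
  refine ((hasDerivAt_pow_div m hr).div ((hasDerivAt_pow_div (2 * n) hr).const_add 1)
    hden).congr_deriv ?_
  rw [nullRatio, testProfile]
  push_cast
  field_simp
  ring

lemma contDiff_testWeight (k : ℕ) {m : ℕ∞} : ContDiff ℝ m (testWeight n k) := by
  have h : ContDiff ℝ m fun w : ℂ => ‖w‖ ^ 2 := contDiff_norm_sq ℝ
  exact (h.pow _).div (contDiff_const.add (h.pow n)) fun w => by positivity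

lemma testFunction_apply (z : Fin (n + 1) → ℂ) (w : ℂ) :
    testFunction n z w = ∑ j : Fin (n + 1), testWeight n j w * (z j * w ^ (j : ℕ)).re :=
  rfl

lemma contDiff_testFunction (z : Fin (n + 1) → ℂ) {m : ℕ∞} : ContDiff ℝ m (testFunction n z) := by
  rw [funext (testFunction_apply z)]
  exact ContDiff.sum fun j _ => (contDiff_testWeight j).mul
    (Complex.reCLM.contDiff.comp (contDiff_const.mul (contDiff_id.pow _)))

lemma testWeight_circleMap (k : ℕ) (r θ : ℝ) :
    testWeight n k (circleMap 0 r θ) = testWeight n k r := by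
  simp only [testWeight, norm_circleMap_zero, Complex.norm_real, norm_eq_abs]

lemma testWeight_mul_pow (k : ℕ) (r : ℝ) :
    testWeight n k r * r ^ k = testProfile n (testExponent n k) r := by
  rw [testWeight, testProfile, testExponent, Complex.norm_real, norm_eq_abs, sq_abs, ← pow_mul,
    ← pow_mul, pow_add]
  ring

lemma mode_testFunction (z : Fin (n + 1) → ℂ) (k : ℤ) (r : ℝ) :
    mode (testFunction n z) k r = testProfile n (testExponent n k.natAbs) r * testCoeff z k := by
  simp only [mode, testFunction_apply, testWeight_circleMap]
  rw [circleCoeff_sum _ fun j _ => by fun_prop, testCoeff, Finset.mul_sum]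
  refine Finset.sum_congr rfl fun j _ => ?_
  rw [circleCoeff_const_mul, circleCoeff_re_mul_circleMap_pow, ← mul_assoc]
  by_cases hj : k.natAbs = j
  · rw [hj, ← testWeight_mul_pow, Complex.ofReal_mul, Complex.ofReal_pow]
  · rw [if_neg (by omega), if_neg (by omega), add_zero, zero_div, mul_zero, mul_zero]

lemma testCoeff_of_lt_natAbs (z : Fin (n + 1) → ℂ) {k : ℤ} (hk : n < k.natAbs) :
    testCoeff z k = 0 := by
  refine Finset.sum_eq_zero fun j _ => ?_
  rw [if_neg (by omega), if_neg (by omega), add_zero, zero_div]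

lemma exists_testCoeff_ne_zero {z : Fin (n + 1) → ℂ} (hz : z ≠ 0) (h0 : (z 0).im = 0) :
    ∃ k, testCoeff z k ≠ 0 := by
  obtain ⟨j, hj⟩ := Function.ne_iff.1 hz
  refine ⟨(j : ℕ), ?_⟩
  have hsingle : testCoeff z (j : ℕ) =
      (z j + if ((j : ℕ) : ℤ) = -(j : ℕ) then starRingEnd ℂ (z j) else 0) / 2 := by
    rw [testCoeff, Finset.sum_eq_single j]
    · rw [if_pos rfl]
    · intro i _ hij
      have : (i : ℕ) ≠ j := Fin.val_ne_iff.2 hij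
      rw [if_neg (by omega), if_neg (by omega), add_zero, zero_div]
    · simp
  rw [hsingle]
  rcases Fin.eq_zero_or_eq_succ j with rfl | ⟨i, rfl⟩
  · simpa [Complex.conj_eq_iff_im.2 h0] using hj
  · rw [if_neg (by simp; omega), add_zero]
    exact div_ne_zero hj two_ne_zero

lemma integral_radialEnergy_le_of_eq_testProfile {ψ : ℂ → ℝ} {k : ℤ} {m : ℕ} {ζ : ℂ} {R : ℝ}
    (hψ : ContDiff ℝ 1 ψ) (hmode : ∀ r, mode ψ k r = testProfile n m r * ζ)
    (hm : ((m : ℝ) - n) ^ 2 + (k : ℝ) ^ 2 ≤ (n : ℝ) ^ 2) (hR : 0 ≤ R) :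
    ∫ r in 0..R, radialEnergy (potential n) k (mode ψ k) r ≤
      nullRatio n R * ‖mode ψ k R‖ ^ 2 := by
  have hc := differentiable_mode hψ k
  have hderiv {r : ℝ} (hr : r ≠ 0) :
      r • deriv (mode ψ k) r = ((m - n + nullRatio n r : ℝ) : ℂ) * mode ψ k r := by
    rw [hmode r, funext hmode, ((hasDerivAt_testProfile m hr).ofReal_comp.mul_const ζ).deriv,
      Complex.real_smul]
    have : (r : ℂ) ≠ 0 := Complex.ofReal_ne_zero.2 hr
    push_cast
    field_simp
  have hle := integral_radialEnergy_le (k := k) le_rfl hR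
    (fun r hr => hasDerivAt_nullRatio (n := n) hr.1.ne') (fun r _ => hc r) (fun r hr => ?_)
    (by have := hc.continuous; fun_prop) (integrableOn_radialEnergy_mode n hψ k 0 R)
  · exact hle.trans (sub_le_self _ (mul_nonneg (nullRatio_zero_nonneg n) (sq_nonneg _)))
  · have hdiff : r • deriv (mode ψ k) r - nullRatio n r • mode ψ k r =
        ((m - n : ℝ) : ℂ) * mode ψ k r := by
      rw [hderiv hr.1.ne', Complex.real_smul]
      push_cast
      ring
    rw [hdiff, norm_mul, mul_pow, Complex.norm_real, norm_eq_abs, sq_abs, ← add_mul]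
    gcongr

lemma schrodingerForm_testFunction_neg (hn : n ≠ 0) {z : Fin (n + 1) → ℂ} (hz : z ≠ 0)
    (h0 : (z 0).im = 0) {R : ℝ} (hR : 1 < R) :
    schrodingerForm (potential n) R (testFunction n z) < 0 := by
  have hR0 : 0 < R := one_pos.trans hR
  have hψ : ContDiff ℝ 1 (testFunction n z) := contDiff_testFunction z
  have hle (k : ℤ) : ∫ r in 0..R, radialEnergy (potential n) k (mode (testFunction n z) k) r ≤
      nullRatio n R * ‖mode (testFunction n z) k R‖ ^ 2 := by
    rcases le_or_gt k.natAbs n with hk | hk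
    · refine integral_radialEnergy_le_of_eq_testProfile hψ (mode_testFunction z k) ?_ hR0.le
      simpa [Nat.cast_natAbs] using sq_testExponent_sub_add_sq_le hk
    · have hzero : mode (testFunction n z) k = 0 := by
        ext r
        rw [mode_testFunction, testCoeff_of_lt_natAbs z hk, mul_zero, Pi.zero_apply]
      simp [hzero, radialEnergy]
  have hneg := nullRatio_neg hn hR
  obtain ⟨k, hk⟩ := exists_testCoeff_ne_zero hz h0
  have hk0 : mode (testFunction n z) k R ≠ 0 := by
    rw [mode_testFunction]
    exact mul_ne_zero (Complex.ofReal_ne_zero.2 (testProfile_pos _ hR0).ne') hk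
  have hlt := hasSum_lt (fun k => (hle k).trans (mul_nonpos_of_nonpos_of_nonneg hneg.le
    (sq_nonneg _))) ((hle k).trans_lt (mul_neg_of_neg_of_pos hneg (by positivity)))
    (hasSum_integral_radialEnergy_mode (continuous_potential n) hψ hR0.le) hasSum_zero
  exact neg_of_mul_neg_right hlt (by positivity)

end LowerBound

/-- The test functions on the Euclidean plane whose amplitude at frequency `0` is real, as a linear
function of the amplitudes. -/
def planeTestFunction (n : ℕ) : ℝ × (Fin n → ℂ) →ₗ[ℝ] E2 → ℝ :=
  LinearMap.funLeft ℝ ℝ planeIso.symm ∘ₗ testFunction n ∘ₗ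
    (Fin.consLinearEquiv ℝ fun _ : Fin (n + 1) => ℂ).toLinearMap ∘ₗ
      Complex.ofRealCLM.toLinearMap.prodMap LinearMap.id

section PlaneTestFunction

variable {n : ℕ}

lemma contDiff_planeTestFunction (p : ℝ × (Fin n → ℂ)) {m : ℕ∞} :
    ContDiff ℝ m (planeTestFunction n p) :=
  (contDiff_testFunction _).comp planeIso.symm.contDiff

lemma QE_planeTestFunction_neg (hn : n ≠ 0) {p : ℝ × (Fin n → ℂ)} (hp : p ≠ 0) {R : ℝ}
    (hR : 1 < R) : QE n R (planeTestFunction n p) < 0 := by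
  have hcomp : planeTestFunction n p ∘ planeIso =
      testFunction n (Fin.cons (p.1 : ℂ) p.2 : Fin (n + 1) → ℂ) := by
    ext w
    simp only [planeTestFunction, Function.comp_apply, LinearMap.coe_comp, LinearMap.funLeft_apply,
      LinearIsometryEquiv.symm_apply_apply]
    rfl
  rw [QE_eq_schrodingerForm, hcomp]
  refine schrodingerForm_testFunction_neg hn (fun hcons => hp ?_) (by simp) hR
  obtain ⟨h1, h2⟩ := Fin.cons_injective2 (α := fun _ => ℂ)
    (hcons.trans (Fin.cons_self_tail 0).symm)
  exact Prod.ext (Complex.ofReal_eq_zero.1 h1) h2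

lemma planeTestFunction_injective (hn : n ≠ 0) : Function.Injective (planeTestFunction n) := by
  refine (injective_iff_map_eq_zero _).2 fun p hp => ?_
  by_contra hp0
  have hneg := QE_planeTestFunction_neg hn hp0 one_lt_two
  rw [hp] at hneg
  simp [QE, gradient] at hneg

lemma finrank_range_planeTestFunction (hn : n ≠ 0) :
    Module.finrank ℝ (LinearMap.range (planeTestFunction n)) = 2 * n + 1 := by
  rw [LinearMap.finrank_range_of_inj (planeTestFunction_injective hn),
    finrank_real_prod_fin_complex]

end PlaneTestFunction

lemma memFE_of_contDiff {φ : E2 → ℝ} (hφ : ContDiff ℝ (⊤ : ℕ∞) φ) (R : ℝ) : memFE R φ := by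
  refine ⟨hφ.contDiffOn, fun i _ => ?_⟩
  have hcont : Continuous (iteratedFDeriv ℝ i φ) :=
    hφ.continuous_iteratedFDeriv (by exact_mod_cast le_top)
  obtain ⟨C, hC⟩ :=
    (isCompact_closedBall (0 : E2) R).exists_bound_of_continuousOn hcont.continuousOn
  refine ⟨C, fun w hw => ?_⟩
  rw [iteratedFDerivWithin_of_isOpen i Metric.isOpen_ball hw]
  exact hC w (Metric.ball_subset_closedBall hw)

theorem enneper5_indb_eq_eleven_general {n : ℕ} (hn : n ≠ 0) :
    ∃ R₀ : ℝ, 0 < R₀ ∧ ∀ R : ℝ, R₀ ≤ R → indbE n R = ((2 * n + 1 : ℕ) : ℕ∞) := by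
  refine ⟨2 * n + 1, by positivity, fun R hR => le_antisymm (sSup_le ?_) (le_sSup ?_)⟩
  · rintro d ⟨V, -, hV, hQ, rfl⟩
    exact_mod_cast finrank_le_of_QE_neg hn (by linarith) V hV hQ
  · have hn0 : (0 : ℝ) < n := by positivity
    refine ⟨LinearMap.range (planeTestFunction n), inferInstance, ?_, ?_, ?_⟩
    · rintro _ ⟨p, rfl⟩
      exact memFE_of_contDiff (contDiff_planeTestFunction p) R
    · rintro _ ⟨p, rfl⟩ hp
      exact QE_planeTestFunction_neg hn (fun h => hp (by rw [h, map_zero])) (by linarith)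
    · rw [finrank_range_planeTestFunction hn]

/-- the modified (bounded-perturbation) index of the complete dihedral
Enneper surface of order 5 equals 11: `ind_b(Σ₁⁵(R)) = 11` for all sufficiently large
radii `R`, i.e. `ind_b(Σ₁⁵) = lim_{R→∞} ind_b(Σ₁⁵(R)) = 11`. -/
theorem enneper5_indb_eq_eleven :
    ∃ R₀ : ℝ, 0 < R₀ ∧ ∀ R : ℝ, R₀ ≤ R → indbE 5 R = 11 :=
  enneper5_indb_eq_eleven_general (by norm_num)
end
end

section
/- If in addition σ is minimal, i.e., g₂₂h₁₁ − 2g₁₂h₁₂ + g₁₁h₂₂ = 0 on Ω, then the function A(t) = ∫_Ω √(det g_t) du dv is twice differentiable at t = 0 with A'(0) = 0 and A''(0) = ∫_Ω (Σ_{i,j=1,2} g^{ij} ∂_iφ ∂_jφ + 2κφ²)·√(det g) du dv. -/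
noncomputable section
open MeasureTheory Real

/-- Dot product on `ℝ³ = ℝ × ℝ × ℝ`. -/
def dot3 (a b : ℝ × ℝ × ℝ) : ℝ := a.1 * b.1 + a.2.1 * b.2.1 + a.2.2 * b.2.2

/-- Cross product on `ℝ³ = ℝ × ℝ × ℝ`. -/
def cross3 (a b : ℝ × ℝ × ℝ) : ℝ × ℝ × ℝ :=
  (a.2.1 * b.2.2 - a.2.2 * b.2.1, a.2.2 * b.1 - a.1 * b.2.2, a.1 * b.2.1 - a.2.1 * b.1)

/-- Euclidean norm on `ℝ³ = ℝ × ℝ × ℝ`. -/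
def norm3 (a : ℝ × ℝ × ℝ) : ℝ := Real.sqrt (dot3 a a)

/-- Partial derivative in the first (`u`) variable. -/
def pdU {E : Type*} [NormedAddCommGroup E] [NormedSpace ℝ E] (f : ℝ × ℝ → E) (p : ℝ × ℝ) : E :=
  deriv (fun x => f (x, p.2)) p.1

/-- Partial derivative in the second (`v`) variable. -/
def pdV {E : Type*} [NormedAddCommGroup E] [NormedSpace ℝ E] (f : ℝ × ℝ → E) (p : ℝ × ℝ) : E :=
  deriv (fun y => f (p.1, y)) p.2

/-- The unit normal `N = (σ_u × σ_v)/‖σ_u × σ_v‖` of a parametrized surface `σ`. -/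
def unitNormal (σ : ℝ × ℝ → ℝ × ℝ × ℝ) (p : ℝ × ℝ) : ℝ × ℝ × ℝ :=
  (norm3 (cross3 (pdU σ p) (pdV σ p)))⁻¹ • cross3 (pdU σ p) (pdV σ p)

/-- The normal variation `σ_t = σ + tφN`. -/
def normalVariation (σ : ℝ × ℝ → ℝ × ℝ × ℝ) (φ : ℝ × ℝ → ℝ) (t : ℝ) (p : ℝ × ℝ) :
    ℝ × ℝ × ℝ :=
  σ p + (t * φ p) • unitNormal σ p

/-- The determinant `det g = g₁₁g₂₂ − g₁₂²` of the first fundamental form of a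
parametrized surface `f`. -/
def gdet (f : ℝ × ℝ → ℝ × ℝ × ℝ) (p : ℝ × ℝ) : ℝ :=
  dot3 (pdU f p) (pdU f p) * dot3 (pdV f p) (pdV f p) - (dot3 (pdU f p) (pdV f p)) ^ 2

/-! Expanding the first fundamental form of `σ + tφN` with the Weingarten equations gives
`I - 2tφ II + t² (dφ ⊗ dφ + φ² III)`. On a minimal surface `III = -κ I` by Cayley–Hamilton, so
`det g_t` is a quartic polynomial in `t` without linear term, whose `t²`-coefficient is
`(|∇φ|² + 2κφ²) det g`. Its coefficients are bounded on `Ω` and `det g` is bounded away from zero,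
so `∫ √(det g_t)` may be differentiated twice under the integral sign. -/

open scoped ENNReal Topology

section ParametricIntegral

variable {α : Type*} [MeasurableSpace α] {μ : Measure α}

theorem exists_ae_norm_le_of_memLp_top {E : Type*} [NormedAddCommGroup E] {f : α → E}
    (hf : MemLp f ∞ μ) : ∃ C : ℝ, ∀ᵐ x ∂μ, ‖f x‖ ≤ C := by
  have hfin : eLpNormEssSup f μ ≠ ∞ := by simpa only [eLpNorm_exponent_top] using hf.2.ne
  refine ⟨(eLpNormEssSup f μ).toReal, ?_⟩
  filter_upwards [ae_le_eLpNormEssSup (f := f) (μ := μ)] with x hx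
  simpa only [toReal_enorm] using ENNReal.toReal_mono hfin hx

theorem hasDerivAt_integral_and_deriv_of_dominated_loc {E : Type*} [NormedAddCommGroup E]
    [NormedSpace ℝ E] {F F' F'' : ℝ → α → E} {s : Set ℝ} {t₀ : ℝ} {bound bound' : α → ℝ}
    (hs : s ∈ 𝓝 t₀) (hF_int : ∀ t ∈ s, Integrable (F t) μ)
    (hF'_meas : ∀ t ∈ s, AEStronglyMeasurable (F' t) μ)
    (hF''_meas : AEStronglyMeasurable (F'' t₀) μ)
    (h_bound : ∀ᵐ x ∂μ, ∀ t ∈ s, ‖F' t x‖ ≤ bound x) (bound_integrable : Integrable bound μ)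
    (h_diff : ∀ᵐ x ∂μ, ∀ t ∈ s, HasDerivAt (F · x) (F' t x) t)
    (h_bound' : ∀ᵐ x ∂μ, ∀ t ∈ s, ‖F'' t x‖ ≤ bound' x) (bound'_integrable : Integrable bound' μ)
    (h_diff' : ∀ᵐ x ∂μ, ∀ t ∈ s, HasDerivAt (F' · x) (F'' t x) t) :
    HasDerivAt (fun t => ∫ x, F t x ∂μ) (∫ x, F' t₀ x ∂μ) t₀ ∧
    HasDerivAt (deriv fun t => ∫ x, F t x ∂μ) (∫ x, F'' t₀ x ∂μ) t₀ := by
  have hderiv : ∀ᶠ t in 𝓝 t₀, Integrable (F' t) μ ∧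
      HasDerivAt (fun t => ∫ x, F t x ∂μ) (∫ x, F' t x ∂μ) t := by
    filter_upwards [eventually_mem_nhds_iff.2 hs] with t ht
    exact hasDerivAt_integral_of_dominated_loc_of_deriv_le ht
      (by filter_upwards [ht] with r hr using (hF_int r hr).1) (hF_int t (mem_of_mem_nhds ht))
      (hF'_meas t (mem_of_mem_nhds ht)) h_bound bound_integrable h_diff
  have hderiv₂ : HasDerivAt (fun t => ∫ x, F' t x ∂μ) (∫ x, F'' t₀ x ∂μ) t₀ :=
    (hasDerivAt_integral_of_dominated_loc_of_deriv_le hs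
      (by filter_upwards [hs] with r hr using hF'_meas r hr) hderiv.self_of_nhds.1
      hF''_meas h_bound' bound'_integrable h_diff').2
  exact ⟨hderiv.self_of_nhds.2,
    hderiv₂.congr_of_eventuallyEq (hderiv.mono fun t ht => ht.2.deriv)⟩

theorem hasDerivAt_div_two_mul_sqrt {f f' : ℝ → ℝ} {f'' t : ℝ} (hf : HasDerivAt f (f' t) t)
    (hf' : HasDerivAt f' f'' t) (hpos : 0 < f t) :
    HasDerivAt (fun t => f' t / (2 * √(f t)))
      (f'' / (2 * √(f t)) - f' t ^ 2 / (4 * √(f t) ^ 3)) t := by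
  have hsqrt : √(f t) ≠ 0 := (Real.sqrt_pos.2 hpos).ne'
  refine (hf'.fun_div ((hf.sqrt hpos.ne').const_mul 2)
    (mul_ne_zero two_ne_zero hsqrt)).congr_deriv ?_
  field_simp
  ring

theorem hasDerivAt_integral_sqrt [IsFiniteMeasure μ] {P P' P'' : ℝ → α → ℝ} {s : Set ℝ}
    {t₀ m M : ℝ} (hs : s ∈ 𝓝 t₀) (hm : 0 < m) (hP : ∀ t ∈ s, AEMeasurable (P t) μ)
    (hP' : ∀ t ∈ s, AEMeasurable (P' t) μ) (hP'' : AEMeasurable (P'' t₀) μ)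
    (hbd : ∀ᵐ x ∂μ, ∀ t ∈ s, m ≤ P t x ∧ P t x ≤ M)
    (hbd' : ∀ᵐ x ∂μ, ∀ t ∈ s, |P' t x| ≤ M) (hbd'' : ∀ᵐ x ∂μ, ∀ t ∈ s, |P'' t x| ≤ M)
    (hderiv : ∀ᵐ x ∂μ, ∀ t ∈ s, HasDerivAt (P · x) (P' t x) t)
    (hderiv' : ∀ᵐ x ∂μ, ∀ t ∈ s, HasDerivAt (P' · x) (P'' t x) t) :
    HasDerivAt (fun t => ∫ x, √(P t x) ∂μ) (∫ x, P' t₀ x / (2 * √(P t₀ x)) ∂μ) t₀ ∧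
    HasDerivAt (deriv fun t => ∫ x, √(P t x) ∂μ)
      (∫ x, (P'' t₀ x / (2 * √(P t₀ x)) - P' t₀ x ^ 2 / (4 * √(P t₀ x) ^ 3)) ∂μ) t₀ := by
  have hsm : 0 < √m := Real.sqrt_pos.2 hm
  have ht₀ : t₀ ∈ s := mem_of_mem_nhds hs
  refine hasDerivAt_integral_and_deriv_of_dominated_loc hs
    (F := fun t x => √(P t x)) (F' := fun t x => P' t x / (2 * √(P t x)))
    (F'' := fun t x => P'' t x / (2 * √(P t x)) - P' t x ^ 2 / (4 * √(P t x) ^ 3))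
    (fun t ht => .of_bound (hP t ht).sqrt.aestronglyMeasurable (√M) ?_)
    (fun t ht => ((hP' t ht).div ((hP t ht).sqrt.const_mul 2)).aestronglyMeasurable)
    ((hP''.div ((hP t₀ ht₀).sqrt.const_mul 2)).sub (((hP' t₀ ht₀).pow_const 2).div
      (((hP t₀ ht₀).sqrt.pow_const 3).const_mul 4))).aestronglyMeasurable
    ?_ (integrable_const (M / (2 * √m))) ?_
    ?_ (integrable_const (M / (2 * √m) + M ^ 2 / (4 * √m ^ 3))) ?_
  · filter_upwards [hbd] with x hx
    rw [Real.norm_of_nonneg (Real.sqrt_nonneg _)]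
    exact Real.sqrt_le_sqrt (hx t ht).2
  · filter_upwards [hbd, hbd'] with x hx hx' t ht
    have hsqrt : √m ≤ √(P t x) := Real.sqrt_le_sqrt (hx t ht).1
    rw [Real.norm_eq_abs, abs_div, abs_of_pos (a := 2 * √(P t x)) (by linarith)]
    have := hx' t ht
    gcongr
    exact (abs_nonneg _).trans this
  · filter_upwards [hbd, hderiv] with x hx hdx t ht
    exact (hdx t ht).sqrt (hm.trans_le (hx t ht).1).ne'
  · filter_upwards [hbd, hbd', hbd''] with x hx hx' hx'' t ht
    have hsqrt : √m ≤ √(P t x) := Real.sqrt_le_sqrt (hx t ht).1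
    have hM : 0 ≤ M := (abs_nonneg _).trans (hx' t ht)
    refine (norm_sub_le _ _).trans ?_
    rw [Real.norm_eq_abs, Real.norm_eq_abs, abs_div, abs_div, abs_pow,
      abs_of_pos (a := 2 * √(P t x)) (by linarith),
      abs_of_pos (a := 4 * √(P t x) ^ 3) (by have := hsm.trans_le hsqrt; positivity)]
    gcongr
    exacts [hx'' t ht, hx' t ht]
  · filter_upwards [hbd, hderiv, hderiv'] with x hx hdx hdx' t ht
    exact hasDerivAt_div_two_mul_sqrt (f := (P · x)) (f' := (P' · x)) (hdx t ht) (hdx' t ht)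
      (hm.trans_le (hx t ht).1)

end ParametricIntegral

section SumPow

variable {n : ℕ}

theorem hasDerivAt_sum_mul_pow (c : Fin n → ℝ) (t : ℝ) :
    HasDerivAt (fun t => ∑ i, c i * t ^ (i : ℕ)) (∑ i, c i * (i * t ^ (i - 1 : ℕ))) t :=
  HasDerivAt.fun_sum fun i _ => (hasDerivAt_pow (i : ℕ) t).const_mul (c i)

theorem hasDerivAt_sum_mul_mul_pow (c : Fin n → ℝ) (t : ℝ) :
    HasDerivAt (fun t => ∑ i, c i * (i * t ^ (i - 1 : ℕ)))
      (∑ i, c i * (i * ((i - 1 : ℕ) * t ^ (i - 1 - 1 : ℕ)))) t :=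
  HasDerivAt.fun_sum fun i _ =>
    ((hasDerivAt_pow (i - 1 : ℕ) t).const_mul (i : ℝ)).const_mul (c i)

theorem sum_mul_zero_pow (c : Fin (n + 1) → ℝ) : ∑ i, c i * 0 ^ (i : ℕ) = c 0 := by
  simp [Fin.sum_univ_succ]

theorem sum_mul_mul_zero_pow (c : Fin (n + 2) → ℝ) :
    ∑ i, c i * (i * 0 ^ (i - 1 : ℕ)) = c 1 := by
  simp [Fin.sum_univ_succ]

theorem sum_mul_mul_mul_zero_pow (c : Fin (n + 3) → ℝ) :
    ∑ i, c i * (i * ((i - 1 : ℕ) * 0 ^ (i - 1 - 1 : ℕ))) = 2 * c 2 := by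
  simp [Fin.sum_univ_succ, mul_comm, one_add_one_eq_two]

theorem abs_sum_mul_le {ι : Type*} [Fintype ι] {c d C : ι → ℝ} {D : ℝ} (hc : ∀ i, |c i| ≤ C i)
    (hd : ∀ i, |d i| ≤ D) : |∑ i, c i * d i| ≤ (∑ i, C i) * D := by
  rw [Finset.sum_mul]
  refine (Finset.abs_sum_le_sum_abs _ _).trans (Finset.sum_le_sum fun i _ => ?_)
  rw [abs_mul]
  exact mul_le_mul (hc i) (hd i) (abs_nonneg _) ((abs_nonneg _).trans (hc i))

theorem abs_pow_sub_zero_pow_le {t : ℝ} (ht : |t| ≤ 1) (k : ℕ) : |t ^ k - 0 ^ k| ≤ |t| := by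
  rcases k with - | k
  · simp
  · simpa [abs_pow] using pow_le_of_le_one (abs_nonneg t) ht k.succ_ne_zero

theorem abs_sum_mul_pow_sub_le {c C : Fin (n + 1) → ℝ} {t : ℝ} (hc : ∀ i, |c i| ≤ C i)
    (ht : |t| ≤ 1) : |∑ i, c i * t ^ (i : ℕ) - c 0| ≤ (∑ i, C i) * |t| := by
  rw [← sum_mul_zero_pow c, ← Finset.sum_sub_distrib]
  simp only [← mul_sub]
  exact abs_sum_mul_le hc fun i => abs_pow_sub_zero_pow_le ht i

theorem abs_natCast_mul_pow_le {t : ℝ} (ht : |t| ≤ 1) {j n : ℕ} (hj : j ≤ n) (k : ℕ) :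
    |j * t ^ k| ≤ (n : ℝ) := by
  rw [abs_mul, abs_pow, Nat.abs_cast]
  exact (mul_le_of_le_one_right j.cast_nonneg (pow_le_one₀ (abs_nonneg t) ht)).trans
    (Nat.cast_le.2 hj)

end SumPow

section SqrtSumPow

variable {α : Type*} [MeasurableSpace α] {μ : Measure α} [IsFiniteMeasure μ] {n : ℕ}

theorem hasDerivAt_integral_sqrt_sum_mul_pow {c : Fin (n + 3) → α → ℝ} {m : ℝ} (hm : 0 < m)
    (hc : ∀ i, MemLp (c i) ∞ μ) (hc₀ : ∀ᵐ x ∂μ, m ≤ c 0 x) :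
    HasDerivAt (fun t => ∫ x, √(∑ i, c i x * t ^ (i : ℕ)) ∂μ)
      (∫ x, c 1 x / (2 * √(c 0 x)) ∂μ) 0 ∧
    HasDerivAt (deriv fun t => ∫ x, √(∑ i, c i x * t ^ (i : ℕ)) ∂μ)
      (∫ x, (c 2 x / √(c 0 x) - c 1 x ^ 2 / (4 * √(c 0 x) ^ 3)) ∂μ) 0 := by
  choose C hC using fun i => exists_ae_norm_le_of_memLp_top (hc i)
  have hcm (i) : AEMeasurable (c i) μ := (hc i).1.aemeasurable
  have hCx : ∀ᵐ x ∂μ, ∀ i, |c i x| ≤ C i := eventually_countable_forall.2 hC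
  set S : ℝ := ∑ i, C i
  set N : ℝ := ((n + 3 : ℕ) : ℝ)
  have hN1 : 1 ≤ N := Nat.one_le_cast.2 (by omega)
  have hs : {t : ℝ | |t| < 1 ∧ S * |t| < m / 2} ∈ 𝓝 0 :=
    (IsOpen.inter (isOpen_lt continuous_abs continuous_const)
      (isOpen_lt (continuous_abs.const_mul S) continuous_const)).mem_nhds
      ⟨by simp, by simpa using hm⟩
  have hderiv := hasDerivAt_integral_sqrt (μ := μ) (m := m / 2) (M := S * N ^ 2)
    (P := fun t x => ∑ i, c i x * t ^ (i : ℕ))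
    (P' := fun t x => ∑ i, c i x * (i * t ^ (i - 1 : ℕ)))
    (P'' := fun t x => ∑ i, c i x * (i * ((i - 1 : ℕ) * t ^ (i - 1 - 1 : ℕ)))) hs (half_pos hm)
    (fun t _ => by fun_prop) (fun t _ => by fun_prop) (by fun_prop)
    ?_ ?_ ?_
    (.of_forall fun x t _ => hasDerivAt_sum_mul_pow (c · x) t)
    (.of_forall fun x t _ => hasDerivAt_sum_mul_mul_pow (c · x) t)
  · simpa only [sum_mul_zero_pow (fun i => c i _), sum_mul_mul_zero_pow (fun i => c i _),
      sum_mul_mul_mul_zero_pow (fun i => c i _), mul_div_mul_left _ _ (two_ne_zero' ℝ)] using hderiv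
  · filter_upwards [hCx, hc₀] with x hx hx₀ t ht
    refine ⟨?_, (le_abs_self _).trans (abs_sum_mul_le hx fun i => ?_)⟩
    · have hsub := (abs_le.1 (abs_sum_mul_pow_sub_le hx ht.1.le)).1
      linarith [ht.2]
    · rw [abs_pow]
      exact (pow_le_one₀ (abs_nonneg t) ht.1.le).trans (one_le_pow₀ hN1)
  · filter_upwards [hCx] with x hx t ht
    exact abs_sum_mul_le hx fun i => (abs_natCast_mul_pow_le ht.1.le i.is_le' _).trans
      (le_self_pow₀ hN1 two_ne_zero)
  · filter_upwards [hCx] with x hx t ht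
    refine abs_sum_mul_le hx fun i => ?_
    rw [abs_mul, Nat.abs_cast, sq]
    exact mul_le_mul (Nat.cast_le.2 i.is_le')
      (abs_natCast_mul_pow_le ht.1.le ((Nat.sub_le _ _).trans i.is_le') _) (abs_nonneg _)
      (zero_le_one.trans hN1)

end SqrtSumPow

section Derivatives

variable {E F : Type*} [NormedAddCommGroup E] [NormedSpace ℝ E] [NormedAddCommGroup F]
  [NormedSpace ℝ F] {f : E → F} {p : E} {s : Set E}

theorem eventually_differentiableAt (hf : ContDiffAt ℝ 1 f p) :
    ∀ᶠ q in 𝓝 p, DifferentiableAt ℝ f q :=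
  (hf.eventually (by simp)).mono fun _ hq => hq.differentiableAt one_ne_zero

theorem differentiableAt_fderiv (hf : ContDiffAt ℝ 2 f p) : DifferentiableAt ℝ (fderiv ℝ f) p :=
  (hf.fderiv_right (m := 1) one_add_one_eq_two.le).differentiableAt one_ne_zero

theorem fderiv_fderiv_apply (hf : DifferentiableAt ℝ (fderiv ℝ f) p) (v w : E) :
    fderiv ℝ (fun q => fderiv ℝ f q w) p v = fderiv ℝ (fderiv ℝ f) p v w := by
  rw [fderiv_clm_apply hf (differentiableAt_const w)]
  simp

theorem norm_fderiv_eq_norm_iteratedFDerivWithin (hs : IsOpen s) (hp : p ∈ s) :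
    ‖fderiv ℝ f p‖ = ‖iteratedFDerivWithin ℝ 1 f s p‖ := by
  rw [iteratedFDerivWithin_of_isOpen 1 hs hp, norm_iteratedFDeriv_one]

theorem norm_fderiv_fderiv_eq_norm_iteratedFDerivWithin (hs : IsOpen s) (hp : p ∈ s) :
    ‖fderiv ℝ (fderiv ℝ f) p‖ = ‖iteratedFDerivWithin ℝ 2 f s p‖ := by
  rw [iteratedFDerivWithin_of_isOpen 2 hs hp, ← norm_iteratedFDeriv_one,
    norm_iteratedFDeriv_fderiv]

theorem clm_apply_eq_smul_add_smul (L : ℝ × ℝ →L[ℝ] E) (v : ℝ × ℝ) :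
    L v = v.1 • L (1, 0) + v.2 • L (0, 1) := by
  rw [← map_smul, ← map_smul, ← map_add]
  simp

end Derivatives

section PartialDerivatives

variable {E : Type*} [NormedAddCommGroup E] [NormedSpace ℝ E] {f : ℝ × ℝ → E} {p : ℝ × ℝ}

theorem pdU_eq_fderiv (hf : DifferentiableAt ℝ f p) : pdU f p = fderiv ℝ f p (1, 0) :=
  (HasFDerivAt.comp_hasDerivAt (f := fun x : ℝ => (x, p.2)) p.1 hf.hasFDerivAt
    ((hasDerivAt_id p.1).prodMk (hasDerivAt_const p.1 p.2))).deriv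

theorem pdV_eq_fderiv (hf : DifferentiableAt ℝ f p) : pdV f p = fderiv ℝ f p (0, 1) :=
  (HasFDerivAt.comp_hasDerivAt (f := fun y : ℝ => (p.1, y)) p.2 hf.hasFDerivAt
    ((hasDerivAt_const p.2 p.1).prodMk (hasDerivAt_id p.2))).deriv

theorem pdU_eventuallyEq_fderiv (hf : ContDiffAt ℝ 1 f p) :
    pdU f =ᶠ[𝓝 p] fun q => fderiv ℝ f q (1, 0) :=
  (eventually_differentiableAt hf).mono fun _ => pdU_eq_fderiv

theorem pdV_eventuallyEq_fderiv (hf : ContDiffAt ℝ 1 f p) :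
    pdV f =ᶠ[𝓝 p] fun q => fderiv ℝ f q (0, 1) :=
  (eventually_differentiableAt hf).mono fun _ => pdV_eq_fderiv

theorem contDiffAt_pdU {n : WithTop ℕ∞} (hf : ContDiffAt ℝ (n + 1) f p) :
    ContDiffAt ℝ n (pdU f) p :=
  ((hf.fderiv_right le_rfl).clm_apply contDiffAt_const).congr_of_eventuallyEq
    (pdU_eventuallyEq_fderiv (hf.of_le le_add_self))

theorem contDiffAt_pdV {n : WithTop ℕ∞} (hf : ContDiffAt ℝ (n + 1) f p) :
    ContDiffAt ℝ n (pdV f) p :=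
  ((hf.fderiv_right le_rfl).clm_apply contDiffAt_const).congr_of_eventuallyEq
    (pdV_eventuallyEq_fderiv (hf.of_le le_add_self))

theorem pdU_pdU_eq_fderiv (hf : ContDiffAt ℝ 2 f p) :
    pdU (pdU f) p = fderiv ℝ (fderiv ℝ f) p (1, 0) (1, 0) := by
  rw [pdU_eq_fderiv ((contDiffAt_pdU (n := 1) hf).differentiableAt one_ne_zero),
    (pdU_eventuallyEq_fderiv (hf.of_le one_le_two)).fderiv_eq,
    fderiv_fderiv_apply (differentiableAt_fderiv hf)]

theorem pdV_pdU_eq_fderiv (hf : ContDiffAt ℝ 2 f p) :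
    pdV (pdU f) p = fderiv ℝ (fderiv ℝ f) p (0, 1) (1, 0) := by
  rw [pdV_eq_fderiv ((contDiffAt_pdU (n := 1) hf).differentiableAt one_ne_zero),
    (pdU_eventuallyEq_fderiv (hf.of_le one_le_two)).fderiv_eq,
    fderiv_fderiv_apply (differentiableAt_fderiv hf)]

theorem pdV_pdV_eq_fderiv (hf : ContDiffAt ℝ 2 f p) :
    pdV (pdV f) p = fderiv ℝ (fderiv ℝ f) p (0, 1) (0, 1) := by
  rw [pdV_eq_fderiv ((contDiffAt_pdV (n := 1) hf).differentiableAt one_ne_zero),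
    (pdV_eventuallyEq_fderiv (hf.of_le one_le_two)).fderiv_eq,
    fderiv_fderiv_apply (differentiableAt_fderiv hf)]

end PartialDerivatives

section EuclideanSpace

theorem dot3_comm (a b : ℝ × ℝ × ℝ) : dot3 a b = dot3 b a := by
  simp only [dot3, mul_comm]

theorem dot3_add_left (a b c : ℝ × ℝ × ℝ) : dot3 (a + b) c = dot3 a c + dot3 b c := by
  simp only [dot3, Prod.fst_add, Prod.snd_add]
  ring

theorem dot3_add_right (a b c : ℝ × ℝ × ℝ) : dot3 a (b + c) = dot3 a b + dot3 a c := by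
  simp only [dot3_comm a, dot3_add_left]

theorem dot3_smul_left (r : ℝ) (a b : ℝ × ℝ × ℝ) : dot3 (r • a) b = r * dot3 a b := by
  simp only [dot3, Prod.smul_fst, Prod.smul_snd, smul_eq_mul]
  ring

theorem dot3_smul_right (r : ℝ) (a b : ℝ × ℝ × ℝ) : dot3 a (r • b) = r * dot3 a b := by
  simp only [dot3_comm a, dot3_smul_left]

theorem dot3_self_nonneg (a : ℝ × ℝ × ℝ) : 0 ≤ dot3 a a :=
  add_nonneg (add_nonneg (mul_self_nonneg _) (mul_self_nonneg _)) (mul_self_nonneg _)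

theorem norm3_sq (a : ℝ × ℝ × ℝ) : norm3 a ^ 2 = dot3 a a := Real.sq_sqrt (dot3_self_nonneg a)

theorem norm_le_norm3 (a : ℝ × ℝ × ℝ) : ‖a‖ ≤ norm3 a := by
  refine norm_prod_le_iff.2 ⟨?_, norm_prod_le_iff.2 ⟨?_, ?_⟩⟩ <;>
  · refine Real.abs_le_sqrt ?_
    simp only [dot3]
    nlinarith only [sq_nonneg a.1, sq_nonneg a.2.1, sq_nonneg a.2.2]

theorem dot3_cross3_left (a b : ℝ × ℝ × ℝ) : dot3 (cross3 a b) a = 0 := by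
  simp only [dot3, cross3]
  ring

theorem dot3_cross3_right (a b : ℝ × ℝ × ℝ) : dot3 (cross3 a b) b = 0 := by
  simp only [dot3, cross3]
  ring

theorem dot3_cross3_self (a b : ℝ × ℝ × ℝ) :
    dot3 (cross3 a b) (cross3 a b) = dot3 a a * dot3 b b - dot3 a b ^ 2 := by
  simp only [dot3, cross3]
  ring

/-- Expansion of the dot product in the frame `a, b, a × b`, cleared of denominators. -/
theorem gram_mul_dot3 (a b x y : ℝ × ℝ × ℝ) :
    (dot3 a a * dot3 b b - dot3 a b ^ 2) * dot3 x y =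
      dot3 b b * (dot3 x a * dot3 y a) - dot3 a b * (dot3 x a * dot3 y b + dot3 x b * dot3 y a)
        + dot3 a a * (dot3 x b * dot3 y b) + dot3 x (cross3 a b) * dot3 y (cross3 a b) := by
  simp only [dot3, cross3]
  ring

variable {E : Type*} [NormedAddCommGroup E] [NormedSpace ℝ E] {f g : E → ℝ × ℝ × ℝ} {p : E}

theorem contDiffAt_dot3 {n : WithTop ℕ∞} (hf : ContDiffAt ℝ n f p) (hg : ContDiffAt ℝ n g p) :
    ContDiffAt ℝ n (fun q => dot3 (f q) (g q)) p := by
  unfold dot3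
  fun_prop

theorem contDiffAt_cross3 {n : WithTop ℕ∞} (hf : ContDiffAt ℝ n f p)
    (hg : ContDiffAt ℝ n g p) : ContDiffAt ℝ n (fun q => cross3 (f q) (g q)) p := by
  unfold cross3
  fun_prop

theorem fderiv_dot3 (hf : DifferentiableAt ℝ f p) (hg : DifferentiableAt ℝ g p) (v : E) :
    fderiv ℝ (fun q => dot3 (f q) (g q)) p v =
      dot3 (fderiv ℝ f p v) (g p) + dot3 (f p) (fderiv ℝ g p v) := by
  have hf' := hf.hasFDerivAt
  have hg' := hg.hasFDerivAt
  have h := ((hf'.fst.mul hg'.fst).add (hf'.snd.fst.mul hg'.snd.fst)).add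
    (hf'.snd.snd.mul hg'.snd.snd)
  refine (congrArg (· v) h.fderiv).trans ?_
  simp only [add_apply, smul_apply, ContinuousLinearMap.comp_apply, ContinuousLinearMap.coe_fst',
    ContinuousLinearMap.coe_snd', smul_eq_mul, dot3]
  ring

end EuclideanSpace

section FundamentalForms

/-- The first fundamental form `I(v, w) = ⟨dσ v, dσ w⟩` of the surface `σ` at the parameter `p`. -/
def firstForm (σ : ℝ × ℝ → ℝ × ℝ × ℝ) (p v w : ℝ × ℝ) : ℝ :=
  dot3 (fderiv ℝ σ p v) (fderiv ℝ σ p w)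

/-- The second fundamental form `II(v, w) = ⟨d²σ(v, w), N⟩` of the surface `σ` at the
parameter `p`. -/
def secondForm (σ : ℝ × ℝ → ℝ × ℝ × ℝ) (p v w : ℝ × ℝ) : ℝ :=
  dot3 (fderiv ℝ (fderiv ℝ σ) p v w) (unitNormal σ p)

/-- The third fundamental form `III(v, w) = ⟨dN v, dN w⟩` of the surface `σ` at the
parameter `p`. -/
def thirdForm (σ : ℝ × ℝ → ℝ × ℝ × ℝ) (p v w : ℝ × ℝ) : ℝ :=
  dot3 (fderiv ℝ (unitNormal σ) p v) (fderiv ℝ (unitNormal σ) p w)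

/-- The symmetric form `dφ ⊗ dφ` at `p`. -/
def differentialSq (φ : ℝ × ℝ → ℝ) (p v w : ℝ × ℝ) : ℝ :=
  fderiv ℝ φ p v * fderiv ℝ φ p w

/-- The determinant of a symmetric bilinear form on `ℝ²` in the standard basis. -/
def formDet (A : ℝ × ℝ → ℝ × ℝ → ℝ) : ℝ :=
  A (1, 0) (1, 0) * A (0, 1) (0, 1) - A (1, 0) (0, 1) ^ 2

/-- The polarization of `formDet`: the coefficient of `t` in `formDet (A + t B)`. For the first
two fundamental forms this is `2 H det g`, with `H` the mean curvature. -/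
def mixedDet (A B : ℝ × ℝ → ℝ × ℝ → ℝ) : ℝ :=
  A (0, 1) (0, 1) * B (1, 0) (1, 0) - 2 * A (1, 0) (0, 1) * B (1, 0) (0, 1)
    + A (1, 0) (1, 0) * B (0, 1) (0, 1)

/-- The Gaussian curvature `κ = det h / det g` of the surface `σ`. -/
def gaussCurvature (σ : ℝ × ℝ → ℝ × ℝ × ℝ) (p : ℝ × ℝ) : ℝ :=
  formDet (secondForm σ p) / gdet σ p

variable {σ : ℝ × ℝ → ℝ × ℝ × ℝ} {φ : ℝ × ℝ → ℝ} {p : ℝ × ℝ}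

theorem gdet_eq_norm3_sq (σ : ℝ × ℝ → ℝ × ℝ × ℝ) (p : ℝ × ℝ) :
    gdet σ p = norm3 (cross3 (pdU σ p) (pdV σ p)) ^ 2 := by
  rw [norm3_sq, dot3_cross3_self, gdet]

theorem norm3_cross3_ne_zero (h : gdet σ p ≠ 0) : norm3 (cross3 (pdU σ p) (pdV σ p)) ≠ 0 :=
  fun h₀ => h (by rw [gdet_eq_norm3_sq, h₀, sq, zero_mul])

theorem gdet_eq_formDet (hσ : DifferentiableAt ℝ σ p) : gdet σ p = formDet (firstForm σ p) := by
  simp only [gdet, formDet, firstForm, pdU_eq_fderiv hσ, pdV_eq_fderiv hσ]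

theorem contDiffAt_gdet {n : WithTop ℕ∞} (hσ : ContDiffAt ℝ (n + 1) σ p) :
    ContDiffAt ℝ n (gdet σ) p := by
  have hU := contDiffAt_pdU hσ
  have hV := contDiffAt_pdV hσ
  exact ((contDiffAt_dot3 hU hU).mul (contDiffAt_dot3 hV hV)).sub ((contDiffAt_dot3 hU hV).pow 2)

theorem contDiffAt_unitNormal {n : WithTop ℕ∞} (hσ : ContDiffAt ℝ (n + 1) σ p)
    (h : gdet σ p ≠ 0) : ContDiffAt ℝ n (unitNormal σ) p := by
  have hcross := contDiffAt_cross3 (contDiffAt_pdU hσ) (contDiffAt_pdV hσ)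
  have hdot : dot3 (cross3 (pdU σ p) (pdV σ p)) (cross3 (pdU σ p) (pdV σ p)) ≠ 0 := by
    rwa [dot3_cross3_self]
  exact (((contDiffAt_dot3 hcross hcross).sqrt hdot).inv (norm3_cross3_ne_zero h)).smul hcross

theorem differentiableAt_unitNormal (hσ : ContDiffAt ℝ 2 σ p) (h : gdet σ p ≠ 0) :
    DifferentiableAt ℝ (unitNormal σ) p :=
  (contDiffAt_unitNormal (n := 1) hσ h).differentiableAt one_ne_zero

theorem dot3_unitNormal_self (h : gdet σ p ≠ 0) :
    dot3 (unitNormal σ p) (unitNormal σ p) = 1 := by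
  have hne := norm3_cross3_ne_zero h
  rw [unitNormal, dot3_smul_left, dot3_smul_right, ← norm3_sq]
  field_simp

theorem norm_unitNormal_le_one (h : gdet σ p ≠ 0) : ‖unitNormal σ p‖ ≤ 1 := by
  simpa only [norm3, dot3_unitNormal_self h, Real.sqrt_one] using norm_le_norm3 (unitNormal σ p)

theorem dot3_unitNormal_fderiv (hσ : DifferentiableAt ℝ σ p) (w : ℝ × ℝ) :
    dot3 (unitNormal σ p) (fderiv ℝ σ p w) = 0 := by
  rw [clm_apply_eq_smul_add_smul, ← pdU_eq_fderiv hσ, ← pdV_eq_fderiv hσ, dot3_add_right,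
    dot3_smul_right, dot3_smul_right, unitNormal, dot3_smul_left, dot3_smul_left,
    dot3_cross3_left, dot3_cross3_right]
  ring

theorem dot3_fderiv_unitNormal_unitNormal (hσ : ContDiffAt ℝ 2 σ p) (h : gdet σ p ≠ 0)
    (v : ℝ × ℝ) : dot3 (fderiv ℝ (unitNormal σ) p v) (unitNormal σ p) = 0 := by
  have hN := differentiableAt_unitNormal hσ h
  have hconst : (fun q => dot3 (unitNormal σ q) (unitNormal σ q)) =ᶠ[𝓝 p] fun _ => 1 :=
    ((contDiffAt_gdet (n := 1) hσ).continuousAt.eventually_ne h).mono fun _ =>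
      dot3_unitNormal_self
  have hderiv := fderiv_dot3 hN hN v
  rw [hconst.fderiv_eq, fderiv_const_apply, zero_apply, dot3_comm (unitNormal σ p)] at hderiv
  linarith

theorem weingarten_equation (hσ : ContDiffAt ℝ 2 σ p) (h : gdet σ p ≠ 0) (v w : ℝ × ℝ) :
    dot3 (fderiv ℝ (unitNormal σ) p v) (fderiv ℝ σ p w) = -secondForm σ p v w := by
  have hN := differentiableAt_unitNormal hσ h
  have hconst : (fun q => dot3 (unitNormal σ q) (fderiv ℝ σ q w)) =ᶠ[𝓝 p] fun _ => 0 :=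
    (eventually_differentiableAt (hσ.of_le one_le_two)).mono fun _ hq =>
      dot3_unitNormal_fderiv hq w
  have hderiv := fderiv_dot3 hN ((differentiableAt_fderiv hσ).clm_apply
    (differentiableAt_const w)) v
  rw [hconst.fderiv_eq, fderiv_const_apply, zero_apply,
    fderiv_fderiv_apply (differentiableAt_fderiv hσ), dot3_comm (unitNormal σ p)] at hderiv
  rw [secondForm]
  linarith

theorem secondForm_comm (hσ : ContDiffAt ℝ 2 σ p) (v w : ℝ × ℝ) :
    secondForm σ p v w = secondForm σ p w v := by
  rw [secondForm, secondForm, (hσ.isSymmSndFDerivAt (by simp)).eq v w]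

theorem firstForm_apply (σ : ℝ × ℝ → ℝ × ℝ × ℝ) (p v w : ℝ × ℝ) :
    firstForm σ p v w = v.1 * w.1 * firstForm σ p (1, 0) (1, 0)
      + (v.1 * w.2 + v.2 * w.1) * firstForm σ p (1, 0) (0, 1)
      + v.2 * w.2 * firstForm σ p (0, 1) (0, 1) := by
  simp only [firstForm]
  rw [clm_apply_eq_smul_add_smul _ v, clm_apply_eq_smul_add_smul _ w]
  simp only [dot3_add_left, dot3_add_right, dot3_smul_left, dot3_smul_right,
    dot3_comm (fderiv ℝ σ p (0, 1)) (fderiv ℝ σ p (1, 0))]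
  ring

theorem secondForm_apply (hσ : ContDiffAt ℝ 2 σ p) (v w : ℝ × ℝ) :
    secondForm σ p v w = v.1 * w.1 * secondForm σ p (1, 0) (1, 0)
      + (v.1 * w.2 + v.2 * w.1) * secondForm σ p (1, 0) (0, 1)
      + v.2 * w.2 * secondForm σ p (0, 1) (0, 1) := by
  have hsymm := secondForm_comm hσ (0, 1) (1, 0)
  simp only [secondForm] at hsymm ⊢
  rw [clm_apply_eq_smul_add_smul _ v, add_apply, smul_apply, smul_apply,
    clm_apply_eq_smul_add_smul (fderiv ℝ (fderiv ℝ σ) p (1, 0)) w,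
    clm_apply_eq_smul_add_smul (fderiv ℝ (fderiv ℝ σ) p (0, 1)) w]
  simp only [dot3_add_left, dot3_smul_left, hsymm]
  ring

/-- Cayley–Hamilton for the shape operator: `III - 2H II + κ I = 0`, multiplied by `det g`. -/
theorem gdet_mul_thirdForm (hσ : ContDiffAt ℝ 2 σ p) (h : gdet σ p ≠ 0) (v w : ℝ × ℝ) :
    gdet σ p * thirdForm σ p v w =
      mixedDet (firstForm σ p) (secondForm σ p) * secondForm σ p v w
        - formDet (secondForm σ p) * firstForm σ p v w := by
  have hdiff := hσ.differentiableAt two_ne_zero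
  have hcross (v) : dot3 (fderiv ℝ (unitNormal σ) p v) (cross3 (pdU σ p) (pdV σ p)) = 0 := by
    rw [← smul_inv_smul₀ (norm3_cross3_ne_zero h) (cross3 (pdU σ p) (pdV σ p)), ← unitNormal,
      dot3_smul_right, dot3_fderiv_unitNormal_unitNormal hσ h, mul_zero]
  have hframe := gram_mul_dot3 (pdU σ p) (pdV σ p) (fderiv ℝ (unitNormal σ) p v)
    (fderiv ℝ (unitNormal σ) p w)
  rw [hcross v, hcross w, ← gdet, ← thirdForm, pdU_eq_fderiv hdiff, pdV_eq_fderiv hdiff] at hframe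
  simp only [weingarten_equation hσ h, ← firstForm.eq_1] at hframe
  rw [hframe, firstForm_apply σ p v w, secondForm_apply hσ v w, secondForm_apply hσ v (1, 0),
    secondForm_apply hσ v (0, 1), secondForm_apply hσ w (1, 0), secondForm_apply hσ w (0, 1)]
  simp only [mixedDet, formDet]
  ring

theorem thirdForm_of_mixedDet_eq_zero (hσ : ContDiffAt ℝ 2 σ p) (h : gdet σ p ≠ 0)
    (hmin : mixedDet (firstForm σ p) (secondForm σ p) = 0) (v w : ℝ × ℝ) :
    thirdForm σ p v w = -gaussCurvature σ p * firstForm σ p v w := by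
  have hIII := gdet_mul_thirdForm hσ h v w
  rw [hmin, zero_mul, zero_sub] at hIII
  rw [gaussCurvature, eq_div_of_mul_eq h (mul_comm _ _ |>.trans hIII)]
  ring

theorem differentiableAt_normalVariation (hσ : DifferentiableAt ℝ σ p)
    (hN : DifferentiableAt ℝ (unitNormal σ) p) (hφ : DifferentiableAt ℝ φ p) (t : ℝ) :
    DifferentiableAt ℝ (normalVariation σ φ t) p :=
  hσ.add ((hφ.const_mul t).smul hN)

theorem fderiv_normalVariation (hσ : DifferentiableAt ℝ σ p)
    (hN : DifferentiableAt ℝ (unitNormal σ) p) (hφ : DifferentiableAt ℝ φ p) (t : ℝ) (v : ℝ × ℝ) :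
    fderiv ℝ (normalVariation σ φ t) p v = fderiv ℝ σ p v
      + t • (fderiv ℝ φ p v • unitNormal σ p + φ p • fderiv ℝ (unitNormal σ) p v) := by
  have hderiv := hσ.hasFDerivAt.add ((hφ.hasFDerivAt.const_mul t).smul hN.hasFDerivAt)
  refine (congrArg (· v) hderiv.fderiv).trans ?_
  simp [smul_add, smul_smul, add_comm]

theorem firstForm_normalVariation (hσ : ContDiffAt ℝ 2 σ p) (h : gdet σ p ≠ 0)
    (hφ : DifferentiableAt ℝ φ p) (t : ℝ) (v w : ℝ × ℝ) :
    firstForm (normalVariation σ φ t) p v w = firstForm σ p v w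
      - 2 * t * φ p * secondForm σ p v w
      + t ^ 2 * (differentialSq φ p v w + φ p ^ 2 * thirdForm σ p v w) := by
  have hdiff := hσ.differentiableAt two_ne_zero
  have hnormal (v) : dot3 (fderiv ℝ σ p v) (unitNormal σ p) = 0 := by
    rw [dot3_comm, dot3_unitNormal_fderiv hdiff]
  have hNN := dot3_fderiv_unitNormal_unitNormal hσ h
  have hweingarten := weingarten_equation hσ h
  simp only [firstForm, fderiv_normalVariation hdiff (differentiableAt_unitNormal hσ h) hφ,
    dot3_add_left, dot3_add_right, dot3_smul_left, dot3_smul_right,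
    hnormal, hweingarten, hNN, dot3_unitNormal_self h,
    dot3_unitNormal_fderiv hdiff, dot3_comm (unitNormal σ p) (fderiv ℝ (unitNormal σ) p w),
    dot3_comm (fderiv ℝ σ p v) (fderiv ℝ (unitNormal σ) p w), secondForm_comm hσ w v,
    ← thirdForm.eq_1, differentialSq]
  ring

/-- The coefficients of `det g_t` as a polynomial in `t`, for the normal variation `σ + tφN` of a
minimal surface `σ`. -/
def areaCoeff (σ : ℝ × ℝ → ℝ × ℝ × ℝ) (φ : ℝ × ℝ → ℝ) : Fin 5 → ℝ × ℝ → ℝ :=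
  ![fun p => gdet σ p,
    fun _ => 0,
    fun p => mixedDet (firstForm σ p) (differentialSq φ p)
      + 2 * φ p ^ 2 * formDet (secondForm σ p),
    fun p => -2 * φ p * mixedDet (secondForm σ p) (differentialSq φ p),
    fun p => φ p ^ 2 * gaussCurvature σ p
      * (φ p ^ 2 * formDet (secondForm σ p) - mixedDet (firstForm σ p) (differentialSq φ p))]

theorem gdet_normalVariation_of_mixedDet_eq_zero (hσ : ContDiffAt ℝ 2 σ p) (h : gdet σ p ≠ 0)
    (hφ : DifferentiableAt ℝ φ p) (hmin : mixedDet (firstForm σ p) (secondForm σ p) = 0)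
    (t : ℝ) : gdet (normalVariation σ φ t) p = ∑ i, areaCoeff σ φ i p * t ^ (i : ℕ) := by
  have hdiff := hσ.differentiableAt two_ne_zero
  have hN := differentiableAt_unitNormal hσ h
  have hK : gaussCurvature σ p * formDet (firstForm σ p) = formDet (secondForm σ p) := by
    rw [← gdet_eq_formDet hdiff, gaussCurvature, div_mul_cancel₀ _ h]
  have hsum : ∑ i, areaCoeff σ φ i p * t ^ (i : ℕ) = formDet (firstForm σ p)
      + (mixedDet (firstForm σ p) (differentialSq φ p)
        + 2 * φ p ^ 2 * formDet (secondForm σ p)) * t ^ 2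
      + -2 * φ p * mixedDet (secondForm σ p) (differentialSq φ p) * t ^ 3
      + φ p ^ 2 * gaussCurvature σ p * (φ p ^ 2 * formDet (secondForm σ p)
        - mixedDet (firstForm σ p) (differentialSq φ p)) * t ^ 4 := by
    simp [Fin.sum_univ_five, areaCoeff, gdet_eq_formDet hdiff]
  rw [hsum, gdet_eq_formDet (differentiableAt_normalVariation hdiff hN hφ t)]
  simp only [formDet, mixedDet, firstForm_normalVariation hσ h hφ,
    thirdForm_of_mixedDet_eq_zero hσ h hmin, differentialSq] at hK hmin ⊢
  linear_combination (-2 * t ^ 2 * φ p ^ 2 + t ^ 4 * φ p ^ 4 * gaussCurvature σ p) * hK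
    - 2 * t * φ p * (1 - t ^ 2 * φ p ^ 2 * gaussCurvature σ p) * hmin

end FundamentalForms

section BoundedFunctions

variable {α : Type*} [MeasurableSpace α] {μ : Measure α}

theorem memLp_top_restrict_of_continuousOn {X E : Type*} [TopologicalSpace X] [MeasurableSpace X]
    [OpensMeasurableSpace X] [NormedAddCommGroup E] [SecondCountableTopologyEither X E]
    {ν : Measure X} {s : Set X} {f : X → E} {C : ℝ} (hs : MeasurableSet s)
    (hf : ContinuousOn f s) (hC : ∀ x ∈ s, ‖f x‖ ≤ C) : MemLp f ∞ (ν.restrict s) :=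
  memLp_top_of_bound (hf.aestronglyMeasurable hs) C (ae_restrict_of_forall_mem hs hC)

theorem memLp_top_mul {f g : α → ℝ} (hf : MemLp f ∞ μ) (hg : MemLp g ∞ μ) :
    MemLp (fun x => f x * g x) ∞ μ :=
  hg.mul' hf

theorem memLp_top_dot3 {f g : α → ℝ × ℝ × ℝ} (hf : MemLp f ∞ μ) (hg : MemLp g ∞ μ) :
    MemLp (fun x => dot3 (f x) (g x)) ∞ μ :=
  ((memLp_top_mul hf.fst hg.fst).add (memLp_top_mul hf.snd.fst hg.snd.fst)).add
    (memLp_top_mul hf.snd.snd hg.snd.snd)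

theorem memLp_clm_apply_const {E F : Type*} [NormedAddCommGroup E] [NormedSpace ℝ E]
    [NormedAddCommGroup F] [NormedSpace ℝ F] {L : α → E →L[ℝ] F} {q : ℝ≥0∞}
    (hL : MemLp L q μ) (v : E) : MemLp (fun x => L x v) q μ :=
  (ContinuousLinearMap.apply ℝ F v).comp_memLp' hL

theorem memLp_top_fderiv_apply {E F : Type*} [NormedAddCommGroup E] [NormedSpace ℝ E]
    [SecondCountableTopology E] [MeasurableSpace E] [OpensMeasurableSpace E]
    [NormedAddCommGroup F] [NormedSpace ℝ F] {ν : Measure E} {s : Set E} {f : E → F}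
    (hs : IsOpen s) (hf : ContDiffOn ℝ 1 f s)
    (hb : ∃ C : ℝ, ∀ x ∈ s, ‖iteratedFDerivWithin ℝ 1 f s x‖ ≤ C) (v : E) :
    MemLp (fun x => fderiv ℝ f x v) ∞ (ν.restrict s) := by
  obtain ⟨C, hC⟩ := hb
  exact memLp_clm_apply_const (memLp_top_restrict_of_continuousOn hs.measurableSet
    (hf.continuousOn_fderiv_of_isOpen hs le_rfl) fun x hx =>
      (norm_fderiv_eq_norm_iteratedFDerivWithin hs hx).trans_le (hC x hx)) v

theorem memLp_top_formDet {A : α → ℝ × ℝ → ℝ × ℝ → ℝ}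
    (hA : ∀ v w, MemLp (fun x => A x v w) ∞ μ) : MemLp (fun x => formDet (A x)) ∞ μ := by
  simp only [formDet, sq]
  exact (memLp_top_mul (hA _ _) (hA _ _)).sub (memLp_top_mul (hA _ _) (hA _ _))

theorem memLp_top_mixedDet {A B : α → ℝ × ℝ → ℝ × ℝ → ℝ}
    (hA : ∀ v w, MemLp (fun x => A x v w) ∞ μ) (hB : ∀ v w, MemLp (fun x => B x v w) ∞ μ) :
    MemLp (fun x => mixedDet (A x) (B x)) ∞ μ :=
  ((memLp_top_mul (hA _ _) (hB _ _)).sub (memLp_top_mul ((hA _ _).const_mul 2) (hB _ _))).add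
    (memLp_top_mul (hA _ _) (hB _ _))

end BoundedFunctions

section BoundedGeometry

variable {Ω : Set (ℝ × ℝ)} {σ : ℝ × ℝ → ℝ × ℝ × ℝ}

theorem memLp_top_unitNormal (hΩ : IsOpen Ω) (hσ : ContDiffOn ℝ 1 σ Ω)
    (hreg : ∀ p ∈ Ω, gdet σ p ≠ 0) : MemLp (unitNormal σ) ∞ (volume.restrict Ω) :=
  memLp_top_restrict_of_continuousOn hΩ.measurableSet
    (fun p hp => (contDiffAt_unitNormal (n := 0)
      ((hσ.contDiffAt (hΩ.mem_nhds hp)).of_le (zero_add 1).le)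
      (hreg p hp)).continuousAt.continuousWithinAt)
    fun _ hp => norm_unitNormal_le_one (hreg _ hp)

theorem memLp_top_firstForm (hΩ : IsOpen Ω) (hσ : ContDiffOn ℝ 1 σ Ω)
    (hb : ∃ C : ℝ, ∀ p ∈ Ω, ‖iteratedFDerivWithin ℝ 1 σ Ω p‖ ≤ C) (v w : ℝ × ℝ) :
    MemLp (fun p => firstForm σ p v w) ∞ (volume.restrict Ω) :=
  memLp_top_dot3 (memLp_top_fderiv_apply hΩ hσ hb v) (memLp_top_fderiv_apply hΩ hσ hb w)

theorem memLp_top_secondForm (hΩ : IsOpen Ω) (hσ : ContDiffOn ℝ 2 σ Ω)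
    (hb : ∃ C : ℝ, ∀ p ∈ Ω, ‖iteratedFDerivWithin ℝ 2 σ Ω p‖ ≤ C)
    (hreg : ∀ p ∈ Ω, gdet σ p ≠ 0) (v w : ℝ × ℝ) :
    MemLp (fun p => secondForm σ p v w) ∞ (volume.restrict Ω) := by
  obtain ⟨C, hC⟩ := hb
  have hderiv : ContinuousOn (fderiv ℝ (fderiv ℝ σ)) Ω :=
    (hσ.fderiv_of_isOpen hΩ (m := 1) one_add_one_eq_two.le).continuousOn_fderiv_of_isOpen hΩ
      le_rfl
  exact memLp_top_dot3 (memLp_clm_apply_const (memLp_clm_apply_const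
    (memLp_top_restrict_of_continuousOn hΩ.measurableSet hderiv fun p hp =>
      (norm_fderiv_fderiv_eq_norm_iteratedFDerivWithin hΩ hp).trans_le (hC p hp)) v) w)
    (memLp_top_unitNormal hΩ (hσ.of_le one_le_two) hreg)

theorem memLp_top_gdet (hΩ : IsOpen Ω) (hσ : ContDiffOn ℝ 1 σ Ω)
    (hb : ∃ C : ℝ, ∀ p ∈ Ω, ‖iteratedFDerivWithin ℝ 1 σ Ω p‖ ≤ C) :
    MemLp (gdet σ) ∞ (volume.restrict Ω) :=
  (memLp_top_formDet (memLp_top_firstForm hΩ hσ hb)).ae_eq <|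
    ae_restrict_of_forall_mem hΩ.measurableSet fun _ hp => (gdet_eq_formDet
      ((hσ.contDiffAt (hΩ.mem_nhds hp)).differentiableAt one_ne_zero)).symm

theorem memLp_top_gaussCurvature {m : ℝ} (hΩ : IsOpen Ω) (hσ : ContDiffOn ℝ 2 σ Ω)
    (hb : ∃ C : ℝ, ∀ p ∈ Ω, ‖iteratedFDerivWithin ℝ 2 σ Ω p‖ ≤ C) (hm : 0 < m)
    (hreg : ∀ p ∈ Ω, m ≤ gdet σ p) :
    MemLp (gaussCurvature σ) ∞ (volume.restrict Ω) := by
  have hne : ∀ p ∈ Ω, gdet σ p ≠ 0 := fun p hp => (hm.trans_le (hreg p hp)).ne'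
  have hcont : ContinuousOn (gdet σ) Ω := fun _ hp =>
    (contDiffAt_gdet (n := 1) (hσ.contDiffAt (hΩ.mem_nhds hp))).continuousAt.continuousWithinAt
  have hinv : MemLp (fun p => (gdet σ p)⁻¹) ∞ (volume.restrict Ω) :=
    memLp_top_restrict_of_continuousOn (C := m⁻¹) hΩ.measurableSet (hcont.inv₀ hne) fun p hp => by
      rw [norm_inv, Real.norm_of_nonneg (hm.le.trans (hreg p hp))]
      exact inv_anti₀ hm (hreg p hp)
  exact memLp_top_mul (memLp_top_formDet (memLp_top_secondForm hΩ hσ hb hne)) hinv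

theorem memLp_top_areaCoeff {φ : ℝ × ℝ → ℝ} {m : ℝ} (hΩ : IsOpen Ω) (hσ : ContDiffOn ℝ 2 σ Ω)
    (hσb₁ : ∃ C : ℝ, ∀ p ∈ Ω, ‖iteratedFDerivWithin ℝ 1 σ Ω p‖ ≤ C)
    (hσb₂ : ∃ C : ℝ, ∀ p ∈ Ω, ‖iteratedFDerivWithin ℝ 2 σ Ω p‖ ≤ C) (hm : 0 < m)
    (hreg : ∀ p ∈ Ω, m ≤ gdet σ p) (hφ : ContDiffOn ℝ 1 φ Ω)
    (hφb₀ : ∃ C : ℝ, ∀ p ∈ Ω, ‖φ p‖ ≤ C)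
    (hφb₁ : ∃ C : ℝ, ∀ p ∈ Ω, ‖iteratedFDerivWithin ℝ 1 φ Ω p‖ ≤ C) (i : Fin 5) :
    MemLp (areaCoeff σ φ i) ∞ (volume.restrict Ω) := by
  obtain ⟨M, hM⟩ := hφb₀
  have hσ₁ : ContDiffOn ℝ 1 σ Ω := hσ.of_le one_le_two
  have hI := memLp_top_firstForm hΩ hσ₁ hσb₁
  have hII := memLp_top_secondForm hΩ hσ hσb₂ fun p hp => (hm.trans_le (hreg p hp)).ne'
  have hK := memLp_top_gaussCurvature hΩ hσ hσb₂ hm hreg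
  have hφ₀ : MemLp φ ∞ (volume.restrict Ω) :=
    memLp_top_restrict_of_continuousOn hΩ.measurableSet hφ.continuousOn hM
  have hφ₂ : MemLp (fun p => φ p ^ 2) ∞ (volume.restrict Ω) := by
    simpa only [sq] using memLp_top_mul hφ₀ hφ₀
  have hdφ := memLp_top_fderiv_apply (ν := volume) hΩ hφ hφb₁
  have hsq (v w) : MemLp (fun p => differentialSq φ p v w) ∞ (volume.restrict Ω) :=
    memLp_top_mul (hdφ v) (hdφ w)
  have hII_det := memLp_top_formDet hII
  have hI_mixed := memLp_top_mixedDet hI hsq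
  fin_cases i
  · exact memLp_top_gdet hΩ hσ₁ hσb₁
  · exact MemLp.zero
  · exact hI_mixed.add (memLp_top_mul (hφ₂.const_mul 2) hII_det)
  · exact memLp_top_mul (hφ₀.const_mul (-2)) (memLp_top_mixedDet hII hsq)
  · exact memLp_top_mul (memLp_top_mul hφ₂ hK) ((memLp_top_mul hφ₂ hII_det).sub hI_mixed)

end BoundedGeometry

section SecondVariation

variable {σ : ℝ × ℝ → ℝ × ℝ × ℝ} {φ : ℝ × ℝ → ℝ} {p : ℝ × ℝ}

theorem mixedDet_firstForm_secondForm (hσ : ContDiffAt ℝ 2 σ p) :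
    mixedDet (firstForm σ p) (secondForm σ p) =
      dot3 (pdV σ p) (pdV σ p) * dot3 (pdU (pdU σ) p) (unitNormal σ p)
        - 2 * dot3 (pdU σ p) (pdV σ p) * dot3 (pdV (pdU σ) p) (unitNormal σ p)
        + dot3 (pdU σ p) (pdU σ p) * dot3 (pdV (pdV σ) p) (unitNormal σ p) := by
  have hdiff := hσ.differentiableAt two_ne_zero
  rw [mixedDet, secondForm_comm hσ (1, 0) (0, 1), pdU_eq_fderiv hdiff, pdV_eq_fderiv hdiff,
    pdU_pdU_eq_fderiv hσ, pdV_pdU_eq_fderiv hσ, pdV_pdV_eq_fderiv hσ]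
  rfl

theorem areaCoeff_two_div_sqrt (hσ : ContDiffAt ℝ 2 σ p) (h : 0 < gdet σ p)
    (hφ : DifferentiableAt ℝ φ p) :
    areaCoeff σ φ 2 p / √(gdet σ p) =
      ((dot3 (pdV σ p) (pdV σ p) / gdet σ p) * pdU φ p ^ 2
          + 2 * (-dot3 (pdU σ p) (pdV σ p) / gdet σ p) * pdU φ p * pdV φ p
          + (dot3 (pdU σ p) (pdU σ p) / gdet σ p) * pdV φ p ^ 2
          + 2 * ((dot3 (pdU (pdU σ) p) (unitNormal σ p) * dot3 (pdV (pdV σ) p) (unitNormal σ p)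
              - dot3 (pdV (pdU σ) p) (unitNormal σ p) ^ 2) / gdet σ p) * φ p ^ 2)
        * √(gdet σ p) := by
  have hdiff := hσ.differentiableAt two_ne_zero
  have hcoeff : areaCoeff σ φ 2 p = mixedDet (firstForm σ p) (differentialSq φ p)
      + 2 * φ p ^ 2 * formDet (secondForm σ p) := rfl
  rw [div_eq_iff (Real.sqrt_pos.2 h).ne', mul_assoc, Real.mul_self_sqrt h.le, hcoeff, mixedDet,
    formDet, ← secondForm_comm hσ (0, 1) (1, 0), pdU_pdU_eq_fderiv hσ, pdV_pdU_eq_fderiv hσ,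
    pdV_pdV_eq_fderiv hσ, pdU_eq_fderiv hdiff, pdV_eq_fderiv hdiff, pdU_eq_fderiv hφ,
    pdV_eq_fderiv hφ]
  simp only [firstForm, secondForm, differentialSq]
  field_simp
  ring

end SecondVariation

theorem normalVariation_second_variation_general
    (Ω : Set (ℝ × ℝ)) (hΩo : IsOpen Ω) (hΩv : volume Ω ≠ ∞)
    (σ : ℝ × ℝ → ℝ × ℝ × ℝ) (hσ : ContDiffOn ℝ 2 σ Ω)
    (hσb₁ : ∃ C : ℝ, ∀ p ∈ Ω, ‖iteratedFDerivWithin ℝ 1 σ Ω p‖ ≤ C)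
    (hσb₂ : ∃ C : ℝ, ∀ p ∈ Ω, ‖iteratedFDerivWithin ℝ 2 σ Ω p‖ ≤ C)
    (hcross : ∃ c : ℝ, 0 < c ∧ ∀ p ∈ Ω, c ≤ norm3 (cross3 (pdU σ p) (pdV σ p)))
    (φ : ℝ × ℝ → ℝ) (hφ : ContDiffOn ℝ 1 φ Ω)
    (hφb₀ : ∃ C : ℝ, ∀ p ∈ Ω, ‖φ p‖ ≤ C)
    (hφb₁ : ∃ C : ℝ, ∀ p ∈ Ω, ‖iteratedFDerivWithin ℝ 1 φ Ω p‖ ≤ C)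
    (hmin : ∀ p ∈ Ω,
      dot3 (pdV σ p) (pdV σ p) * dot3 (pdU (pdU σ) p) (unitNormal σ p)
        - 2 * dot3 (pdU σ p) (pdV σ p) * dot3 (pdV (pdU σ) p) (unitNormal σ p)
        + dot3 (pdU σ p) (pdU σ p) * dot3 (pdV (pdV σ) p) (unitNormal σ p) = 0) :
    HasDerivAt (fun t => ∫ p in Ω, Real.sqrt (gdet (normalVariation σ φ t) p)) 0 0 ∧
    HasDerivAt (deriv (fun t => ∫ p in Ω, Real.sqrt (gdet (normalVariation σ φ t) p)))
      (∫ p in Ω,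
        ((dot3 (pdV σ p) (pdV σ p) / gdet σ p) * pdU φ p ^ 2
          + 2 * (-dot3 (pdU σ p) (pdV σ p) / gdet σ p) * pdU φ p * pdV φ p
          + (dot3 (pdU σ p) (pdU σ p) / gdet σ p) * pdV φ p ^ 2
          + 2 * ((dot3 (pdU (pdU σ) p) (unitNormal σ p) * dot3 (pdV (pdV σ) p) (unitNormal σ p)
              - dot3 (pdV (pdU σ) p) (unitNormal σ p) ^ 2) / gdet σ p) * φ p ^ 2)
          * Real.sqrt (gdet σ p))
      0 := by
  obtain ⟨c, hc, hcN⟩ := hcross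
  have : IsFiniteMeasure (volume.restrict Ω) := isFiniteMeasure_restrict.2 hΩv
  have hreg : ∀ p ∈ Ω, c ^ 2 ≤ gdet σ p := fun p hp =>
    (pow_le_pow_left₀ hc.le (hcN p hp) 2).trans_eq (gdet_eq_norm3_sq σ p).symm
  have hpos : ∀ p ∈ Ω, 0 < gdet σ p := fun p hp => (pow_pos hc 2).trans_le (hreg p hp)
  have hσ₂ : ∀ p ∈ Ω, ContDiffAt ℝ 2 σ p := fun p hp => hσ.contDiffAt (hΩo.mem_nhds hp)
  have hφ₁ : ∀ p ∈ Ω, DifferentiableAt ℝ φ p := fun p hp =>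
    (hφ.contDiffAt (hΩo.mem_nhds hp)).differentiableAt one_ne_zero
  have harea (t : ℝ) : ∫ p in Ω, √(gdet (normalVariation σ φ t) p) =
      ∫ p in Ω, √(∑ i, areaCoeff σ φ i p * t ^ (i : ℕ)) :=
    setIntegral_congr_fun hΩo.measurableSet fun p hp => congrArg _ <|
      gdet_normalVariation_of_mixedDet_eq_zero (hσ₂ p hp) (hpos p hp).ne' (hφ₁ p hp)
        ((mixedDet_firstForm_secondForm (hσ₂ p hp)).trans (hmin p hp)) t
  obtain ⟨hfirst, hsecond⟩ := hasDerivAt_integral_sqrt_sum_mul_pow (pow_pos hc 2)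
    (memLp_top_areaCoeff hΩo hσ hσb₁ hσb₂ (pow_pos hc 2) hreg hφ hφb₀ hφb₁)
    (ae_restrict_of_forall_mem hΩo.measurableSet hreg)
  simp only [← harea] at hfirst hsecond
  refine ⟨hfirst.congr_deriv ?_, hsecond.congr_deriv ?_⟩
  · simp [areaCoeff]
  · refine setIntegral_congr_fun hΩo.measurableSet fun p hp => ?_
    simpa [areaCoeff] using areaCoeff_two_div_sqrt (hσ₂ p hp) (hpos p hp) (hφ₁ p hp)

/-- if moreover `σ` is minimal (`g₂₂h₁₁ − 2g₁₂h₁₂ + g₁₁h₂₂ = 0` on `Ω`),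
then the area function `A(t) = ∫_Ω √(det g_t)` is twice differentiable at `t = 0`,
with `A'(0) = 0` and `A''(0)` given by the second-variation integral. -/
theorem normalVariation_second_variation
    (Ω : Set (ℝ × ℝ)) (hΩo : IsOpen Ω) (hΩb : Bornology.IsBounded Ω)
    (σ : ℝ × ℝ → ℝ × ℝ × ℝ) (hσ : ContDiffOn ℝ (⊤ : ℕ∞) σ Ω)
    (hσb : ∀ i : ℕ, i ≤ 2 → ∃ C : ℝ, ∀ p ∈ Ω, ‖iteratedFDerivWithin ℝ i σ Ω p‖ ≤ C)
    (hcross : ∃ c : ℝ, 0 < c ∧ ∀ p ∈ Ω, c ≤ norm3 (cross3 (pdU σ p) (pdV σ p)))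
    (φ : ℝ × ℝ → ℝ) (hφ : ContDiffOn ℝ (⊤ : ℕ∞) φ Ω)
    (hφb : ∀ i : ℕ, i ≤ 2 → ∃ C : ℝ, ∀ p ∈ Ω, ‖iteratedFDerivWithin ℝ i φ Ω p‖ ≤ C)
    (hmin : ∀ p ∈ Ω,
      dot3 (pdV σ p) (pdV σ p) * dot3 (pdU (pdU σ) p) (unitNormal σ p)
        - 2 * dot3 (pdU σ p) (pdV σ p) * dot3 (pdV (pdU σ) p) (unitNormal σ p)
        + dot3 (pdU σ p) (pdU σ p) * dot3 (pdV (pdV σ) p) (unitNormal σ p) = 0) :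
    HasDerivAt (fun t => ∫ p in Ω, Real.sqrt (gdet (normalVariation σ φ t) p)) 0 0 ∧
    HasDerivAt (deriv (fun t => ∫ p in Ω, Real.sqrt (gdet (normalVariation σ φ t) p)))
      (∫ p in Ω,
        ((dot3 (pdV σ p) (pdV σ p) / gdet σ p) * pdU φ p ^ 2
          + 2 * (-dot3 (pdU σ p) (pdV σ p) / gdet σ p) * pdU φ p * pdV φ p
          + (dot3 (pdU σ p) (pdU σ p) / gdet σ p) * pdV φ p ^ 2
          + 2 * ((dot3 (pdU (pdU σ) p) (unitNormal σ p) * dot3 (pdV (pdV σ) p) (unitNormal σ p)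
              - dot3 (pdV (pdU σ) p) (unitNormal σ p) ^ 2) / gdet σ p) * φ p ^ 2)
          * Real.sqrt (gdet σ p))
      0 :=
  normalVariation_second_variation_general Ω hΩo hΩb.measure_lt_top.ne σ
    (hσ.of_le (WithTop.coe_le_coe.2 le_top)) (hσb 1 one_le_two) (hσb 2 le_rfl) hcross φ
    (hφ.of_le (WithTop.coe_le_coe.2 le_top))
    (by simpa only [norm_iteratedFDerivWithin_zero] using hφb 0 zero_le_two) (hφb 1 one_le_two) hmin
end
end
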